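/- arXiv:1204.1938 — 4 statements merged into one kernel-verified Lean document; each statement's English description precedes it below -/
import Mathlib

section
/- For every N ≥ 2 there is a constant C_N depending only on N such that: if F(X) = Σ_{i,j=1}^N f_{ij} X_i X_j is a nonsingular integral quadratic form in N variables (det(f_{ij}) ≠ 0) and Λ ⊆ ℤ^N is a full-rank sublattice containing a nonzero point x with F(x) = 0, then there exist linearly independent x, y ∈ Λ with F(x) = F(y) = 0 and |x| · |y| ≤ C_N · |F|^{N−1} · det(Λ)^2. -/
/-- The sup-norm of an integer vector: `max_i |x_i|`. -/
def supNorm {N : ℕ} (x : Fin N → ℤ) : ℕ := Finset.univ.sup fun i => (x i).natAbs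

/-- Membership in the full-rank sublattice of `ℤ^N` whose ℤ-basis consists of the rows of the
nonsingular integer matrix `B`. -/
def memLattice {N : ℕ} (B : Matrix (Fin N) (Fin N) ℤ) (x : Fin N → ℤ) : Prop :=
  ∃ c : Fin N → ℤ, ∀ j, x j = ∑ i, c i * B i j

theorem abs_le_supNorm {N : ℕ} (x : Fin N → ℤ) (i : Fin N) : |x i| ≤ (supNorm x : ℤ) := by
  have := Finset.le_sup (f := fun i => (x i).natAbs) (Finset.mem_univ i)
  unfold supNorm
  rw [Int.abs_eq_natAbs]
  exact_mod_cast this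

theorem supNorm_le_of {N : ℕ} (x : Fin N → ℤ) (c : ℤ) (hc : 0 ≤ c) (h : ∀ i, |x i| ≤ c) :
    (supNorm x : ℤ) ≤ c := by
  lift c to ℕ using hc
  unfold supNorm
  have : Finset.univ.sup (fun i => (x i).natAbs) ≤ c := by
    apply Finset.sup_le
    intro i _
    have := h i
    rw [Int.abs_eq_natAbs] at this
    exact_mod_cast this
  exact_mod_cast this

theorem exists_supNorm {n : ℕ} (x : Fin (n+1) → ℤ) : ∃ k, |x k| = (supNorm x : ℤ) := by
  obtain ⟨k, -, hk⟩ := Finset.exists_mem_eq_sup (Finset.univ : Finset (Fin (n+1)))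
    Finset.univ_nonempty (fun i => (x i).natAbs)
  refine ⟨k, ?_⟩
  unfold supNorm
  rw [hk, Int.abs_eq_natAbs]

theorem supNorm_eq_zero {N : ℕ} (x : Fin N → ℤ) (h : supNorm x = 0) : x = 0 := by
  funext i
  have := abs_le_supNorm x i
  rw [h] at this
  simpa using this

def blk {n : ℕ} (m : Fin n → ℤ) (V : Matrix (Fin n) (Fin n) ℤ) :
    Matrix (Fin (n+1)) (Fin (n+1)) ℤ :=
  Matrix.of (Fin.cons (Fin.cons 1 0) (fun i => Fin.cons (m i) (V i)))

theorem blk_det {n : ℕ} (m : Fin n → ℤ) (V : Matrix (Fin n) (Fin n) ℤ) :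
    (blk m V).det = V.det := by
  rw [Matrix.det_succ_row_zero, Fin.sum_univ_succ]
  have : (blk m V).submatrix Fin.succ (Fin.succAbove 0) = V := by
    ext i j; simp [blk]
  rw [this]
  simp [blk]

theorem blk_mul_zero {n : ℕ} (m : Fin n → ℤ) (V : Matrix (Fin n) (Fin n) ℤ)
    (A : Matrix (Fin (n+1)) (Fin (n+1)) ℤ) (j) : (blk m V * A) 0 j = A 0 j := by
  simp [Matrix.mul_apply, Fin.sum_univ_succ, blk]

theorem blk_mul_succ {n : ℕ} (m : Fin n → ℤ) (V : Matrix (Fin n) (Fin n) ℤ)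
    (A : Matrix (Fin (n+1)) (Fin (n+1)) ℤ) (i j) :
    (blk m V * A) i.succ j = m i * A 0 j + ∑ l, V i l * A l.succ j := by
  simp [Matrix.mul_apply, Fin.sum_univ_succ, blk]

theorem proj_det {n : ℕ} (A : Matrix (Fin (n+1)) (Fin (n+1)) ℤ) (k : Fin (n+1)) :
    |A 0 k| * |(Matrix.of fun (i j : Fin n) => A 0 k * A i.succ (k.succAbove j)
        - A i.succ k * A 0 (k.succAbove j)).det| = |A 0 k| ^ n * |A.det| := by
  set Q := blk (fun i => - A i.succ k) ((A 0 k) • (1 : Matrix (Fin n) (Fin n) ℤ)) * A with hQ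
  have hs : ∀ i j, Q (Fin.succ i) j = A 0 k * A i.succ j - A i.succ k * A 0 j := by
    intro i j
    rw [hQ, blk_mul_succ]
    simp [Matrix.one_apply]
    ring
  have h1 : Q.det = (A 0 k)^n * A.det := by
    rw [hQ, Matrix.det_mul, blk_det, Matrix.det_smul]; simp
  have h2 : Q.det = (-1)^(k:ℕ) * A 0 k * (Matrix.of fun (i j : Fin n) => A 0 k * A i.succ (k.succAbove j)
        - A i.succ k * A 0 (k.succAbove j)).det := by
    rw [Matrix.det_succ_column Q k, Fin.sum_univ_succ]
    have : Q.submatrix (Fin.succAbove 0) (k.succAbove) = (Matrix.of fun (i j : Fin n) => A 0 k * A i.succ (k.succAbove j)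
        - A i.succ k * A 0 (k.succAbove j)) := by
      ext i j; simp [hs]
    rw [this, Finset.sum_eq_zero]
    · rw [hQ, blk_mul_zero]; simp
    · intro i _
      rw [hs]; ring
  rw [h1] at h2
  have := congrArg abs h2
  rw [abs_mul, abs_mul, abs_mul, abs_pow, abs_pow] at this
  simpa using this.symm

def RedConst (n : ℕ) (C : ℤ) : Prop := 0 < C ∧ ∀ B : Matrix (Fin n) (Fin n) ℤ, B.det ≠ 0 →
  ∃ U : Matrix (Fin n) (Fin n) ℤ, |U.det| = 1 ∧
    ∏ i, (supNorm ((U * B) i) : ℤ) ≤ C * |B.det|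

theorem exists_round (p s : ℤ) (hp : p ≠ 0) : ∃ m : ℤ, 2 * |m * p + s| ≤ |p| := by
  refine ⟨-(s.bdiv p.natAbs * p.sign), ?_⟩
  have h1 := Int.bmod_add_bdiv s p.natAbs
  have h2 : -(s.bdiv p.natAbs * p.sign) * p + s = s.bmod p.natAbs := by
    have : p.sign * p = p.natAbs := by rw [Int.sign_mul_self_eq_natAbs]
    linear_combination -h1 - (s.bdiv p.natAbs) * this
  rw [h2, Int.abs_eq_natAbs p]
  have hpos : 0 < p.natAbs := Int.natAbs_pos.mpr hp
  have h3 := Int.le_bmod (x := s) hpos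
  have h4 := Int.bmod_le (x := s) hpos
  rcases abs_cases (s.bmod p.natAbs) with h | h <;> omega

theorem proj_step {n : ℕ} {C : ℤ} (hC : RedConst n C) (A : Matrix (Fin (n+1)) (Fin (n+1)) ℤ)
    (hA : A.det ≠ 0) (k : Fin (n+1)) (hk0 : A 0 k ≠ 0) :
    ∃ (U : Matrix (Fin (n+1)) (Fin (n+1)) ℤ) (W : Fin n → Fin (n+1) → ℤ), |U.det| = 1 ∧
      (∀ j, (U * A) 0 j = A 0 j) ∧
      (∀ i : Fin n, 2 * |(U * A) i.succ k| ≤ |A 0 k|) ∧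
      (∀ i j, W i j = A 0 k * (U * A) i.succ j - (U * A) i.succ k * A 0 j) ∧
      |A 0 k| * ∏ i, (supNorm (W i) : ℤ) ≤ C * (|A 0 k| ^ n * |A.det|) ∧
      (∀ i, W i ≠ 0) := by
  obtain ⟨hC0, hC⟩ := hC
  have hpd := proj_det A k
  set B' := (Matrix.of fun (i j : Fin n) => A 0 k * A i.succ (k.succAbove j)
        - A i.succ k * A 0 (k.succAbove j)) with hB'
  have hB'0 : B'.det ≠ 0 := by
    intro h
    rw [h] at hpd
    have : |A 0 k| ^ n * |A.det| ≠ 0 := by positivity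
    simp at hpd
    rcases hpd with h | h
    · exact hk0 h.1
    · exact hA h
  obtain ⟨V, hV, hVB⟩ := hC B' hB'0
  choose m hm using fun i : Fin n => exists_round (A 0 k) (∑ l, V i l * A l.succ k) hk0
  have hW : ∀ i j, A 0 k * (blk m V * A) i.succ (k.succAbove j)
      - (blk m V * A) i.succ k * A 0 (k.succAbove j) = (V * B') i j := by
    intro i j
    rw [blk_mul_succ, blk_mul_succ, Matrix.mul_apply]
    simp only [hB', Matrix.of_apply, mul_sub, Finset.sum_sub_distrib, mul_add, add_mul,
      Finset.mul_sum, Finset.sum_mul]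
    have e1 : ∀ l, V i l * (A 0 k * A l.succ (k.succAbove j)) = A 0 k * (V i l * A l.succ (k.succAbove j)) := fun l => by ring
    have e2 : ∀ l, V i l * (A l.succ k * A 0 (k.succAbove j)) = V i l * A l.succ k * A 0 (k.succAbove j) := fun l => by ring
    simp only [e1, e2]
    ring
  refine ⟨blk m V, fun i j => A 0 k * (blk m V * A) i.succ j - (blk m V * A) i.succ k * A 0 j,
    by rw [blk_det]; exact hV, fun j => blk_mul_zero _ _ _ _, ?_, fun _ _ => rfl, ?_, ?_⟩
  · intro i
    rw [blk_mul_succ]; exact hm i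
  · rw [← hpd]
    have : |A 0 k| * ∏ i, (supNorm ((V * B') i) : ℤ) ≤ |A 0 k| * (C * |B'.det|) := by gcongr
    refine le_trans ?_ (this.trans (le_of_eq (by ring)))
    gcongr with i
    have := supNorm_le_of (fun j => A 0 k * (blk m V * A) i.succ j - (blk m V * A) i.succ k * A 0 j)
      (supNorm ((V * B') i) : ℤ) (by positivity) ?_
    · exact_mod_cast this
    · intro j
      rcases Fin.eq_self_or_eq_succAbove k j with rfl | ⟨j, rfl⟩
      · have : A 0 j * (blk m V * A) i.succ j - (blk m V * A) i.succ j * A 0 j = 0 := by ring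
        rw [this]; simp
      · rw [hW]; exact abs_le_supNorm ((V * B') i) j
  · intro i h
    have hdet : (V * B').det ≠ 0 := by
      rw [Matrix.det_mul]
      refine mul_ne_zero ?_ hB'0
      intro h; rw [h] at hV; simp at hV
    apply hdet
    apply Matrix.det_eq_zero_of_row_eq_zero i
    intro j
    rw [← hW]
    exact congrFun h (k.succAbove j)

theorem red_exists (n : ℕ) : ∃ C, RedConst n C := by
  induction n with
  | zero =>
    refine ⟨1, one_pos, fun B _ => ⟨1, by simp, by simp⟩⟩
  | succ n ih =>
    obtain ⟨C, hC⟩ := ih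
    refine ⟨2 ^ n * C, by have := hC.1; positivity, fun B hB => ?_⟩
    have hex : ∃ t : ℕ, ∃ U : Matrix (Fin (n+1)) (Fin (n+1)) ℤ, |U.det| = 1 ∧ supNorm ((U * B) 0) = t :=
      ⟨_, 1, by simp, rfl⟩
    classical
    obtain ⟨U0, hU0, ht⟩ := Nat.find_spec hex
    have hmin : ∀ U : Matrix (Fin (n+1)) (Fin (n+1)) ℤ, |U.det| = 1 → ∀ i,
        supNorm ((U0 * B) 0) ≤ supNorm ((U * B) i) := by
      intro U hU i
      rw [ht]
      apply Nat.find_min' hex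
      refine ⟨U.submatrix (Equiv.swap 0 i) id, ?_, ?_⟩
      · rw [Matrix.det_permute, abs_mul, hU, mul_one]
        rcases Int.units_eq_one_or (Equiv.Perm.sign (Equiv.swap 0 i)) with h | h <;> rw [h] <;> simp
      · congr 1
    set A := U0 * B with hAdef
    have hAd : |A.det| = |B.det| := by rw [hAdef, Matrix.det_mul, abs_mul, hU0, one_mul]
    have hA : A.det ≠ 0 := by rw [← abs_ne_zero, hAd]; simpa using hB
    obtain ⟨k, hk⟩ := exists_supNorm (A 0)
    have hk0 : A 0 k ≠ 0 := by
      intro h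
      rw [h] at hk
      apply hA
      have := supNorm_eq_zero (A 0) (by simpa using hk.symm)
      exact Matrix.det_eq_zero_of_row_eq_zero 0 (fun j => congrFun this j)
    obtain ⟨U, W, hU, hD0, hDk, hW, hprod, -⟩ := proj_step hC A hA k hk0
    have hUU : |(U * U0).det| = 1 := by rw [Matrix.det_mul, abs_mul, hU, hU0, one_mul]
    refine ⟨U * U0, hUU, ?_⟩
    have hppos : 0 < |A 0 k| := abs_pos.mpr hk0
    have key : ∀ i : Fin n, |A 0 k| * (supNorm ((U * A) i.succ) : ℤ) ≤ 2 * supNorm (W i) := by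
      intro i
      have h1 : |A 0 k| ≤ supNorm ((U * A) i.succ) := by
        rw [hk]
        have := hmin (U * U0) hUU i.succ
        rw [Matrix.mul_assoc, ← hAdef] at this
        exact_mod_cast this
      obtain ⟨j, hj⟩ := exists_supNorm ((U * A) i.succ)
      have h2 : |A 0 k * (U * A) i.succ j| ≤ |W i j| + |(U * A) i.succ k * A 0 j| := by
        have : A 0 k * (U * A) i.succ j = W i j + (U * A) i.succ k * A 0 j := by rw [hW]; ring
        rw [this]; exact abs_add_le _ _
      rw [abs_mul, abs_mul, hj] at h2
      have h3 := abs_le_supNorm (W i) j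
      have h4 := abs_le_supNorm (A 0) j
      rw [← hk] at h4
      have h5 := hDk i
      have h6 : 2 * (|(U * A) i.succ k| * |A 0 j|) ≤ |A 0 k| * |A 0 k| := by
        calc _ = (2 * |(U * A) i.succ k|) * |A 0 j| := by ring
          _ ≤ _ := by gcongr
      nlinarith
    rw [Matrix.mul_assoc, ← hAdef, Fin.prod_univ_succ]
    have h0 : (U * A) 0 = A 0 := funext hD0
    rw [h0, ← hk, ← hAd]
    have hP : |A 0 k| ^ n * ∏ i : Fin n, (supNorm ((U * A) i.succ) : ℤ) ≤ 2 ^ n * ∏ i, (supNorm (W i) : ℤ) := by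
      have := Finset.prod_le_prod (s := Finset.univ) (fun i _ => by positivity) (fun i (_ : i ∈ Finset.univ) => key i)
      simpa [Finset.prod_mul_distrib] using this
    have hpn : 0 < |A 0 k| ^ n := by positivity
    refine le_of_mul_le_mul_left ?_ hpn
    calc _ = |A 0 k| * (|A 0 k| ^ n * ∏ i : Fin n, (supNorm ((U * A) i.succ) : ℤ)) := by ring
      _ ≤ |A 0 k| * (2 ^ n * ∏ i, (supNorm (W i) : ℤ)) := by gcongr
      _ = 2 ^ n * (|A 0 k| * ∏ i, (supNorm (W i) : ℤ)) := by ring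
      _ ≤ 2 ^ n * (C * (|A 0 k| ^ n * |A.det|)) := by gcongr
      _ = _ := by ring

/-- A primitive vector extends to a unimodular matrix. -/
theorem prim_ext {n : ℕ} (c : Fin (n+1) → ℤ) (hc : c ≠ 0)
    (hprim : ∀ (g : ℤ) (c' : Fin (n+1) → ℤ), c = g • c' → |g| = 1) :
    ∃ U : Matrix (Fin (n+1)) (Fin (n+1)) ℤ, |U.det| = 1 ∧ ∀ j, U 0 j = c j := by
  obtain ⟨m, ⟨bM, bN, f, a, snf⟩⟩ := Submodule.smithNormalForm (Pi.basisFun ℤ (Fin (n+1))) (Submodule.span ℤ {c})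
  have hcN : c ∈ Submodule.span ℤ {c} := Submodule.mem_span_singleton_self c
  have hm : m = 1 := by
    have h1 := Module.finrank_eq_card_basis bN
    rw [← (LinearEquiv.toSpanNonzeroSingleton ℤ _ c hc).finrank_eq] at h1
    simpa using h1.symm
  subst hm
  have hrep : c = (bN.repr ⟨c, hcN⟩ 0 * a 0) • bM (f 0) := by
    have := bN.sum_repr ⟨c, hcN⟩
    have := congrArg Subtype.val this
    simp [snf] at this
    rw [← smul_smul]
    exact this.symm
  set g := bN.repr ⟨c, hcN⟩ 0 * a 0 with hg
  have hg1 := hprim g _ hrep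
  let V : Matrix (Fin (n+1)) (Fin (n+1)) ℤ := Matrix.of fun i => bM (Equiv.swap 0 (f 0) i)
  have hV : |V.det| = 1 := by
    have h := (Pi.basisFun ℤ (Fin (n+1))).isUnit_det (bM.reindex (Equiv.swap 0 (f 0)))
    rw [Module.Basis.det_apply, ← Matrix.det_transpose, Int.isUnit_iff_abs_eq] at h
    rw [← h]
    congr 2
    ext i j
    simp [V, Module.Basis.toMatrix_apply]
  refine ⟨Matrix.of fun i j => (if i = 0 then g else 1) * V i j, ?_, ?_⟩
  · rw [Matrix.det_mul_column, abs_mul, hV]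
    simp [hg1]
  · intro j
    simp [V]
    exact (congrFun hrep j).symm

def bil {N : ℕ} (f : Fin N → Fin N → ℤ) (u v : Fin N → ℤ) : ℤ := ∑ i, ∑ j, f i j * u i * v j

theorem bil_comb {N : ℕ} (f : Fin N → Fin N → ℤ) (hf : ∀ i j, f i j = f j i) (u v : Fin N → ℤ) (a b : ℤ) :
    bil f (a • u + b • v) (a • u + b • v) = a^2 * bil f u u + 2 * a * b * bil f u v + b^2 * bil f v v := by
  have hs : bil f u v = ∑ i, ∑ j, f i j * v i * u j := by
    unfold bil
    rw [Finset.sum_comm]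
    refine Finset.sum_congr rfl fun i _ => Finset.sum_congr rfl fun j _ => ?_
    rw [hf]; ring
  have h2 : 2 * a * b * bil f u v = a * b * bil f u v + a * b * ∑ i, ∑ j, f i j * v i * u j := by
    rw [← hs]; ring
  rw [h2]
  simp only [bil, Finset.mul_sum, ← Finset.sum_add_distrib]
  refine Finset.sum_congr rfl fun i _ => Finset.sum_congr rfl fun j _ => ?_
  simp only [Pi.add_apply, Pi.smul_apply, smul_eq_mul]
  ring

theorem bil_right {N : ℕ} (f : Fin N → Fin N → ℤ) (x u v : Fin N → ℤ) (a b : ℤ) :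
    bil f x (a • u + b • v) = a * bil f x u + b * bil f x v := by
  simp only [bil, Finset.mul_sum, ← Finset.sum_add_distrib]
  refine Finset.sum_congr rfl fun i _ => Finset.sum_congr rfl fun j _ => ?_
  simp only [Pi.add_apply, Pi.smul_apply, smul_eq_mul]
  ring

theorem bil_bound {N : ℕ} (f : Fin N → Fin N → ℤ) (M : ℤ) (hM : ∀ i j, |f i j| ≤ M) (u v : Fin N → ℤ) :
    |bil f u v| ≤ (N:ℤ)^2 * (M * supNorm u * supNorm v) := by
  unfold bil
  refine (Finset.abs_sum_le_sum_abs _ _).trans ?_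
  have : ∀ i ∈ (Finset.univ : Finset (Fin N)), |∑ j, f i j * u i * v j| ≤ N * (M * supNorm u * supNorm v) := by
    intro i _
    refine (Finset.abs_sum_le_sum_abs _ _).trans ?_
    refine (Finset.sum_le_card_nsmul _ _ (M * supNorm u * supNorm v) ?_).trans (by simp)
    intro j _
    rw [abs_mul, abs_mul]
    have h1 := hM i j
    have h0 : 0 ≤ M := (abs_nonneg _).trans h1
    have h2 := abs_le_supNorm u i
    have h3 := abs_le_supNorm v j
    gcongr
  refine (Finset.sum_le_card_nsmul _ _ _ this).trans (le_of_eq ?_)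
  simp
  ring

theorem mem_comb {N : ℕ} (B : Matrix (Fin N) (Fin N) ℤ) (x y : Fin N → ℤ) (a b : ℤ)
    (hx : memLattice B x) (hy : memLattice B y) : memLattice B (a • x + b • y) := by
  obtain ⟨c, hc⟩ := hx
  obtain ⟨d, hd⟩ := hy
  refine ⟨a • c + b • d, fun j => ?_⟩
  simp only [Pi.add_apply, Pi.smul_apply, smul_eq_mul, hc, hd, Finset.mul_sum, ← Finset.sum_add_distrib]
  refine Finset.sum_congr rfl fun i _ => ?_
  ring

theorem mem_row {N : ℕ} (U B : Matrix (Fin N) (Fin N) ℤ) (i : Fin N) : memLattice B ((U * B) i) :=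
  ⟨U i, fun j => by rw [Matrix.mul_apply]⟩

/-- Size of the reflected zero `y = F(d) x - 2 F(x,d) d`, where `p d = s x + w`. -/
theorem refl_bound {N : ℕ} (f : Fin N → Fin N → ℤ) (hf : ∀ i j, f i j = f j i) (M : ℤ)
    (hM0 : 0 ≤ M) (hM : ∀ i j, |f i j| ≤ M) (x d w : Fin N → ℤ) (p s : ℤ) (hx : bil f x x = 0)
    (hw : ∀ j, w j = p * d j - s * x j) :
    p ^ 2 * (supNorm (bil f d d • x + (-2 * bil f x d) • d) : ℤ) ≤
      3 * (N:ℤ)^2 * M * (supNorm w : ℤ)^2 * supNorm x := by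
  have hw' : w = (-s) • x + p • d := by
    funext j; simp [hw]; ring
  have e1 : bil f w w = 2 * (-s) * p * bil f x d + p^2 * bil f d d := by
    rw [hw', bil_comb f hf, hx]; ring
  have e2 : bil f x w = p * bil f x d := by
    rw [hw', bil_right, hx]; ring
  rcases Nat.eq_zero_or_pos N with rfl | hN
  · simp [supNorm]
  obtain ⟨n, rfl⟩ : ∃ n, N = n + 1 := ⟨N - 1, by omega⟩
  obtain ⟨j, hj⟩ := exists_supNorm (bil f d d • x + (-2 * bil f x d) • d)
  rw [← hj, ← abs_of_nonneg (sq_nonneg p), ← abs_mul]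
  have e3 : p ^ 2 * (bil f d d • x + (-2 * bil f x d) • d) j = bil f w w * x j + -(2 * bil f x w * w j) := by
    rw [e1, e2, hw j]
    simp only [Pi.add_apply, Pi.smul_apply, smul_eq_mul]
    ring
  rw [e3]
  refine (abs_add_le _ _).trans ?_
  rw [abs_neg, abs_mul, abs_mul, abs_mul, abs_two]
  have b1 := bil_bound f M hM w w
  have b2 := bil_bound f M hM x w
  have b3 := abs_le_supNorm x j
  have b4 := abs_le_supNorm w j
  calc _ ≤ (((n+1:ℕ):ℤ)^2 * (M * supNorm w * supNorm w)) * supNorm x + 2 * (((n+1:ℕ):ℤ)^2 * (M * supNorm x * supNorm w)) * supNorm w := by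
        gcongr
    _ = _ := by ring

theorem davenport_aux (n : ℕ) (hn : 1 ≤ n) (C : ℤ) (hC : RedConst n C)
    (f : Fin (n+1) → Fin (n+1) → ℤ) (hf : ∀ i j, f i j = f j i) (hdet : (Matrix.of f).det ≠ 0)
    (M : ℤ) (hM : ∀ i j, |f i j| ≤ M)
    (B : Matrix (Fin (n+1)) (Fin (n+1)) ℤ) (hB : B.det ≠ 0)
    (hex : ∃ x, memLattice B x ∧ x ≠ 0 ∧ bil f x x = 0) :
    ∃ x y, memLattice B x ∧ memLattice B y ∧ LinearIndependent ℤ ![x, y] ∧ bil f x x = 0 ∧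
      bil f y y = 0 ∧ (supNorm x : ℤ) * supNorm y ≤
        C^2 * (3 * ((n+1:ℕ):ℤ)^2)^n * M ^ n * B.det ^ 2 := by
  classical
  have hM1 : 1 ≤ M := by
    by_contra hlt
    apply hdet
    apply Matrix.det_eq_zero_of_row_eq_zero 0
    intro j
    have h1 := hM 0 j
    have h2 : |f 0 j| ≤ 0 := by omega
    simpa using h2
  have hex' : ∃ t : ℕ, ∃ x, (memLattice B x ∧ x ≠ 0 ∧ bil f x x = 0) ∧ supNorm x = t := by
    obtain ⟨x, hx⟩ := hex
    exact ⟨_, x, hx, rfl⟩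
  obtain ⟨x, ⟨hxB, hx0, hxx⟩, hxt⟩ := Nat.find_spec hex'
  have hmin : ∀ y, memLattice B y → y ≠ 0 → bil f y y = 0 → (supNorm x : ℤ) ≤ supNorm y := by
    intro y h1 h2 h3
    have := Nat.find_min' hex' ⟨y, ⟨h1, h2, h3⟩, rfl⟩
    rw [← hxt] at this
    exact_mod_cast this
  obtain ⟨c, hc⟩ := hxB
  have hxpos : (0:ℤ) < supNorm x := by
    have : supNorm x ≠ 0 := fun h => hx0 (supNorm_eq_zero x h)
    positivity
  have hc0 : c ≠ 0 := by
    rintro rfl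
    apply hx0
    funext j; simp [hc]
  have hprim : ∀ (g : ℤ) (c' : Fin (n+1) → ℤ), c = g • c' → |g| = 1 := by
    intro g c' hg
    set x' : Fin (n+1) → ℤ := fun j => ∑ i, c' i * B i j with hx'
    have hxx' : x = g • x' := by
      funext j
      rw [hc, hg]
      simp [hx', Finset.mul_sum, mul_assoc]
    have hg0 : g ≠ 0 := by rintro rfl; simp at hxx'; exact hx0 hxx'
    have hx'0 : x' ≠ 0 := by intro h; rw [h] at hxx'; simp at hxx'; exact hx0 hxx'
    have hz : bil f x' x' = 0 := by
      have h1 := bil_comb f hf x' 0 g 0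
      simp only [smul_zero, add_zero, ← hxx', hxx] at h1
      have : g^2 * bil f x' x' = 0 := by linarith
      simpa [hg0] using this
    have h1 := hmin x' ⟨c', fun j => rfl⟩ hx'0 hz
    obtain ⟨k, hk⟩ := exists_supNorm x'
    have h2 := abs_le_supNorm x k
    rw [hxx'] at h2
    simp only [Pi.smul_apply, smul_eq_mul, abs_mul] at h2
    rw [← hxx', hk] at h2
    have h3 : 1 ≤ |g| := Int.one_le_abs hg0
    by_contra hne
    have h4 : 2 ≤ |g| := by omega
    nlinarith
  obtain ⟨U0, hU0, hU0c⟩ := prim_ext c hc0 hprim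
  set A := U0 * B with hAdef
  have hA0 : A 0 = x := by
    funext j
    rw [hAdef, Matrix.mul_apply, hc]
    simp [hU0c]
  have hAd : |A.det| = |B.det| := by rw [hAdef, Matrix.det_mul, abs_mul, hU0, one_mul]
  have hA : A.det ≠ 0 := by rw [← abs_ne_zero, hAd]; simpa using hB
  obtain ⟨k, hk⟩ := exists_supNorm x
  have hk0 : A 0 k ≠ 0 := by
    rw [hA0, ← abs_pos, hk]; exact hxpos
  obtain ⟨U, W, hU, hD0, hDk, hW, hprod, hW0⟩ := proj_step hC A hA k hk0
  rw [hA0] at hk0 hDk hW hprod hD0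
  set D := U * A with hD
  have hDB : ∀ i, memLattice B (D i) := by
    intro i
    rw [hD, hAdef, ← Matrix.mul_assoc]
    exact mem_row _ _ _
  have hDdet : D.det ≠ 0 := by
    rw [hD, Matrix.det_mul]
    refine mul_ne_zero ?_ hA
    intro h; rw [h] at hU; simp at hU
  have hxB : memLattice B x := ⟨c, hc⟩
  have hind : ∀ (i : Fin n) (a b : ℤ), a • x + b • D i.succ = 0 → a = 0 ∧ b = 0 := by
    intro i a b hab
    have hj : ∀ j, (a * x k + b * D i.succ k) * x j + b * W i j = 0 := by
      intro j
      have := congrFun hab j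
      simp only [Pi.add_apply, Pi.smul_apply, smul_eq_mul, Pi.zero_apply] at this
      rw [hW]
      linear_combination (x k) * this
    have hWk : W i k = 0 := by rw [hW]; ring
    have h1 := hj k
    rw [hWk, mul_zero, add_zero] at h1
    have h2 : a * x k + b * D i.succ k = 0 := by simpa [hk0] using h1
    have hb : b = 0 := by
      by_contra hb
      apply hW0 i
      funext j
      have := hj j
      rw [h2] at this
      simpa [hb] using this
    subst hb
    simp [hk0] at h2
    exact ⟨h2, rfl⟩
  have hyB : ∀ i : Fin n, memLattice B (bil f (D i.succ) (D i.succ) • x + (-2 * bil f x (D i.succ)) • D i.succ) :=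
    fun i => mem_comb _ _ _ _ _ hxB (hDB _)
  have hyz : ∀ i : Fin n, bil f (bil f (D i.succ) (D i.succ) • x + (-2 * bil f x (D i.succ)) • D i.succ)
      (bil f (D i.succ) (D i.succ) • x + (-2 * bil f x (D i.succ)) • D i.succ) = 0 := by
    intro i
    rw [bil_comb f hf, hxx]; ring
  have hyb := fun i : Fin n => refl_bound f hf M (by omega) hM x (D i.succ) (W i) (x k) (D i.succ k) hxx (hW i)
  set K : ℤ := 3 * ((n+1:ℕ):ℤ)^2 with hK
  have hK4 : 4 ≤ K := by
    rw [hK]; push_cast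
    have : (1:ℤ) ≤ n := by exact_mod_cast hn
    nlinarith
  have hlow : ∀ i : Fin n, (x k)^2 ≤ K * M * (supNorm (W i) : ℤ)^2 := by
    intro i
    by_cases hy0 : bil f (D i.succ) (D i.succ) • x + (-2 * bil f x (D i.succ)) • D i.succ = 0
    · obtain ⟨h1, h2⟩ := hind i _ _ hy0
      have hd0 : D i.succ ≠ 0 := by
        intro h
        have := hind i 0 1 (by rw [h]; simp)
        simp at this
      have h3 := hmin _ (hDB i.succ) hd0 h1
      obtain ⟨j, hj⟩ := exists_supNorm (D i.succ)
      have h4 : |x k * D i.succ j| ≤ |W i j| + |D i.succ k * x j| := by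
        have : x k * D i.succ j = W i j + D i.succ k * x j := by rw [hW]; ring
        rw [this]; exact abs_add_le _ _
      rw [abs_mul, abs_mul, hj, hk] at h4
      have h5 := abs_le_supNorm (W i) j
      have h6 := abs_le_supNorm x j
      have h7 := hDk i
      rw [hk] at h7
      have h8 : 2 * (|D i.succ k| * |x j|) ≤ (supNorm x : ℤ) * supNorm x := by
        calc _ = (2 * |D i.succ k|) * |x j| := by ring
          _ ≤ _ := by gcongr
      have h9 : (supNorm x : ℤ) * supNorm x ≤ 2 * supNorm (W i) := by nlinarith
      have h10 : (supNorm x : ℤ) ≤ 2 * supNorm (W i) := by nlinarith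
      rw [← sq_abs, hk]
      calc (supNorm x : ℤ)^2 ≤ (2 * supNorm (W i))^2 := by gcongr
        _ = 4 * 1 * (supNorm (W i) : ℤ)^2 := by ring
        _ ≤ _ := by gcongr
    · have h1 := hmin _ (hyB i) hy0 (hyz i)
      have h2 := hyb i
      refine le_of_mul_le_mul_right ?_ hxpos
      refine le_trans ?_ h2
      gcongr
  have hexi : ∃ i : Fin n, bil f x (D i.succ) ≠ 0 := by
    by_contra hall
    push Not at hall
    have hz : D.mulVec (Matrix.vecMul x (Matrix.of f)) = 0 := by
      funext i
      have : D.mulVec (Matrix.vecMul x (Matrix.of f)) i = bil f x (D i) := by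
        simp only [Matrix.mulVec, Matrix.vecMul, dotProduct, bil, Finset.mul_sum, Matrix.of_apply]
        rw [Finset.sum_comm]
        refine Finset.sum_congr rfl fun i _ => Finset.sum_congr rfl fun j _ => ?_
        ring
      rw [this]
      refine Fin.cases ?_ ?_ i
      · rw [show D 0 = x from funext hD0, hxx]; rfl
      · intro i; rw [hall i]; rfl
    have h1 := Matrix.eq_zero_of_mulVec_eq_zero hDdet hz
    exact hx0 (Matrix.eq_zero_of_vecMul_eq_zero hdet h1)
  obtain ⟨i, hi⟩ := hexi
  refine ⟨x, _, hxB, hyB i, ?_, hxx, hyz i, ?_⟩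
  · rw [LinearIndependent.pair_iff]
    intro s t hst
    have h1 := hind i (s + t * bil f (D i.succ) (D i.succ)) (t * (-2 * bil f x (D i.succ))) (by
      rw [← hst]; module)
    have ht : t = 0 := by simpa [hi] using h1.2
    subst ht
    simpa using h1.1
  · have hp2 : 0 < (x k)^2 := by positivity
    have hkk : (x k)^2 = (supNorm x : ℤ)^2 := by rw [← sq_abs, hk]
    have s1 : (supNorm x : ℤ) * supNorm (bil f (D i.succ) (D i.succ) • x + (-2 * bil f x (D i.succ)) • D i.succ)
        ≤ K * M * (supNorm (W i) : ℤ)^2 := by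
      refine le_of_mul_le_mul_left ?_ hp2
      have := mul_le_mul_of_nonneg_left (hyb i) hxpos.le
      calc _ = _ := by ring
        _ ≤ _ := this
        _ = _ := by rw [hkk]; ring
    obtain ⟨m, rfl⟩ : ∃ m, n = m + 1 := ⟨n - 1, by omega⟩
    have s2 : ∏ j, (supNorm (W j) : ℤ) ≤ C * (|x k| ^ m * |B.det|) := by
      refine le_of_mul_le_mul_left ?_ (abs_pos.mpr hk0)
      refine hprod.trans (le_of_eq ?_)
      rw [hAd]; ring
    have s3 : ((x k)^2)^m ≤ ∏ j ∈ Finset.univ.erase i, (K * M * (supNorm (W j) : ℤ)^2) := by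
      have := Finset.prod_le_prod (s := Finset.univ.erase i) (f := fun _ => (x k)^2) (fun j _ => hp2.le) (fun j _ => hlow j)
      simpa using this
    have s4 : ((x k)^2)^m * (K * M * (supNorm (W i) : ℤ)^2) ≤ (K * M)^(m+1) * (∏ j, (supNorm (W j) : ℤ))^2 := by
      calc _ ≤ (∏ j ∈ Finset.univ.erase i, (K * M * (supNorm (W j) : ℤ)^2)) * (K * M * (supNorm (W i) : ℤ)^2) := by
            gcongr
        _ = ∏ j, (K * M * (supNorm (W j) : ℤ)^2) := Finset.prod_erase_mul _ _ (Finset.mem_univ i)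
        _ = _ := by rw [Finset.prod_mul_distrib, Finset.prod_pow]; simp
    have s5 : (∏ j, (supNorm (W j) : ℤ))^2 ≤ (C * (|x k| ^ m * |B.det|))^2 := by gcongr
    refine s1.trans ?_
    refine le_of_mul_le_mul_left (s4.trans ?_) (pow_pos hp2 m)
    calc _ ≤ (K * M)^(m+1) * (C * (|x k| ^ m * |B.det|))^2 := by gcongr
      _ = (K * M)^(m+1) * (C ^ 2 * ((|x k| ^2)^ m * |B.det|^2)) := by ring
      _ = _ := by rw [sq_abs, sq_abs]; ring


/-- **Davenport–Chalk.** For every `N ≥ 2` there is a constant `C_N` such that: if `F` is a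
nonsingular integral quadratic form in `N` variables and `Λ ⊆ ℤ^N` is a full-rank sublattice
containing a nonzero zero of `F`, then there exist linearly independent `x, y ∈ Λ` with
`F(x) = F(y) = 0` and `|x| · |y| ≤ C_N · |F|^(N-1) · det(Λ)²`. -/
theorem davenport_pair_of_zeros (N : ℕ) (hN : 2 ≤ N) :
    ∃ C : ℝ, 0 < C ∧
      ∀ (f : Fin N → Fin N → ℤ), (∀ i j, f i j = f j i) →
      (Matrix.of f).det ≠ 0 →
      ∀ B : Matrix (Fin N) (Fin N) ℤ, B.det ≠ 0 →
      (∃ x : Fin N → ℤ, memLattice B x ∧ x ≠ 0 ∧ ∑ i, ∑ j, f i j * x i * x j = 0) →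
      ∃ x y : Fin N → ℤ, memLattice B x ∧ memLattice B y ∧
        LinearIndependent ℤ ![x, y] ∧
        (∑ i, ∑ j, f i j * x i * x j = 0) ∧ (∑ i, ∑ j, f i j * y i * y j = 0) ∧
        (supNorm x : ℝ) * (supNorm y : ℝ) ≤
          C * ((Finset.univ.sup fun p : Fin N × Fin N => (f p.1 p.2).natAbs : ℕ) : ℝ) ^ (N - 1) *
            (B.det : ℝ) ^ 2 := by
  obtain ⟨n, rfl⟩ : ∃ n, N = n + 1 := ⟨N - 1, by omega⟩
  obtain ⟨C, hC⟩ := red_exists n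
  have hC0 := hC.1
  have hCR : (0:ℝ) < C := by exact_mod_cast hC0
  refine ⟨(C:ℝ)^2 * (3 * ((n+1:ℕ):ℝ)^2)^n, by positivity, ?_⟩
  intro f hf hdet B hB hex
  obtain ⟨x, y, hx, hy, hli, hxx, hyy, hle⟩ := davenport_aux n (by omega) C hC f hf hdet
    ((Finset.univ.sup fun p : Fin (n+1) × Fin (n+1) => (f p.1 p.2).natAbs : ℕ) : ℤ)
    (by
      intro i j
      rw [Int.abs_eq_natAbs]
      exact_mod_cast Finset.le_sup (f := fun p : Fin (n+1) × Fin (n+1) => (f p.1 p.2).natAbs)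
        (Finset.mem_univ (i, j))) B hB hex
  refine ⟨x, y, hx, hy, hli, hxx, hyy, ?_⟩
  rw [Nat.add_sub_cancel]
  exact_mod_cast hle
end

section
/- For every N ≥ 2 there is a constant C_N depending only on N such that: if F(X) = Σ_{i,j=1}^N f_{ij} X_i X_j is a nonsingular isotropic integral quadratic form in N variables, then there exist N linearly independent vectors x_1, …, x_N ∈ ℤ^N with F(x_1) = ⋯ = F(x_N) = 0 and |x_1| · |x_2| ⋯ |x_N| ≤ C_N · |F|^{N²/2 − 1}. -/
def BB {N : ℕ} {R : Type*} [CommRing R] (f : Fin N → Fin N → R) (x y : Fin N → R) : R :=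
  ∑ i, ∑ j, f i j * x i * y j

theorem BB_right {N : ℕ} {R : Type*} [CommRing R] (f : Fin N → Fin N → R) (x y z : Fin N → R)
    (a b : R) : BB f x (fun k => a * y k + b * z k) = a * BB f x y + b * BB f x z := by
  simp only [BB, Finset.mul_sum, ← Finset.sum_add_distrib]
  refine Finset.sum_congr rfl fun i _ => Finset.sum_congr rfl fun j _ => ?_
  ring

theorem BB_symm {N : ℕ} {R : Type*} [CommRing R] (f : Fin N → Fin N → R)
    (hf : ∀ i j, f i j = f j i) (x y : Fin N → R) : BB f x y = BB f y x := by
  unfold BB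
  rw [Finset.sum_comm]
  refine Finset.sum_congr rfl fun i _ => Finset.sum_congr rfl fun j _ => ?_
  rw [hf]; ring

theorem BB_comb {N : ℕ} {R : Type*} [CommRing R] (f : Fin N → Fin N → R)
    (hf : ∀ i j, f i j = f j i) (x y : Fin N → R) (a b : R) :
    BB f (fun k => a * x k + b * y k) (fun k => a * x k + b * y k) =
      a ^ 2 * BB f x x + 2 * a * b * BB f x y + b ^ 2 * BB f y y := by
  rw [BB_right, BB_symm f hf _ x, BB_symm f hf _ y, BB_right, BB_right, BB_symm f hf y x]
  ring

theorem BB_cast {N : ℕ} (f : Fin N → Fin N → ℤ) (x y : Fin N → ℤ) :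
    ((BB f x y : ℤ) : ℝ) = BB (fun i j => (f i j : ℝ)) (fun i => (x i : ℝ)) (fun i => (y i : ℝ)) := by
  simp [BB]

theorem BB_abs {N : ℕ} (f : Fin N → Fin N → ℝ) (x y : Fin N → ℝ) (H a b : ℝ)
    (hf : ∀ i j, |f i j| ≤ H) (hx : ∀ i, |x i| ≤ a) (hy : ∀ i, |y i| ≤ b) :
    |BB f x y| ≤ N ^ 2 * H * a * b := by
  unfold BB
  calc |∑ i, ∑ j, f i j * x i * y j| ≤ ∑ i : Fin N, ∑ j : Fin N, H * a * b := by
        refine (Finset.abs_sum_le_sum_abs _ _).trans (Finset.sum_le_sum fun i _ => ?_)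
        refine (Finset.abs_sum_le_sum_abs _ _).trans (Finset.sum_le_sum fun j _ => ?_)
        rw [abs_mul, abs_mul]
        have h1 := hf i j
        have h2 := hx i
        have h3 := hy j
        have := (abs_nonneg _).trans h1
        have := (abs_nonneg _).trans h2
        gcongr
    _ = N ^ 2 * H * a * b := by simp; ring

/-- the reflected zero -/
def zz {N : ℕ} {R : Type*} [CommRing R] (f : Fin N → Fin N → R) (x y : Fin N → R) : Fin N → R :=
  fun k => BB f y y * x k + (-2 * BB f x y) * y k

theorem zz_zero {N : ℕ} {R : Type*} [CommRing R] (f : Fin N → Fin N → R)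
    (hf : ∀ i j, f i j = f j i) (x y : Fin N → R) (hx : BB f x x = 0) :
    BB f (zz f x y) (zz f x y) = 0 := by
  unfold zz
  rw [BB_comb f hf, hx]; ring

theorem zz_bound {N : ℕ} (f : Fin N → Fin N → ℤ) (hf : ∀ i j, f i j = f j i)
    (x y : Fin N → ℤ) (hx : BB f x x = 0) (H r ρ α : ℝ) (hH : ∀ i j, |(f i j : ℝ)| ≤ H)
    (hr : ∀ k, |(x k : ℝ)| ≤ r) (hy : ∀ k, |(y k : ℝ) - α * x k| ≤ ρ) (k : Fin N) :
    |((zz f x y k : ℤ) : ℝ)| ≤ 3 * N ^ 2 * H * ρ ^ 2 * r := by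
  set F : Fin N → Fin N → ℝ := fun i j => (f i j : ℝ) with hF
  have hFs : ∀ i j, F i j = F j i := fun i j => by simp [hF, hf i j]
  set X : Fin N → ℝ := fun i => (x i : ℝ) with hX
  set w : Fin N → ℝ := fun i => (y i : ℝ) - α * x i with hw
  have hyw : (fun i => (y i : ℝ)) = fun i => α * X i + 1 * w i := by
    funext i; simp [hw, hX]
  have hXX : BB F X X = 0 := by rw [hF, hX, ← BB_cast, hx]; simp
  have e : ((zz f x y k : ℤ) : ℝ) = BB F w w * X k + (-2 * BB F X w) * w k := by
    unfold zz
    push_cast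
    rw [BB_cast, BB_cast, hyw, BB_comb F hFs, BB_right, hXX]
    simp only [hw, hX]; ring
  have h1 := BB_abs F w w H ρ ρ hH hy hy
  have h2 := BB_abs F X w H r ρ hH hr hy
  have h3 := hr k
  have h4 := hy k
  rw [e]
  calc |BB F w w * X k + (-2 * BB F X w) * w k|
      ≤ |BB F w w| * |X k| + 2 * |BB F X w| * |w k| := by
        refine (abs_add_le _ _).trans ?_
        simp [abs_mul]
    _ ≤ (N ^ 2 * H * ρ * ρ) * r + 2 * (N ^ 2 * H * r * ρ) * ρ := by
        have := (abs_nonneg _).trans h1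
        have := (abs_nonneg _).trans h2
        gcongr
    _ = _ := by ring

theorem no_small {N : ℕ} (hN : 2 ≤ N) (f : Fin N → Fin N → ℤ) (hf : ∀ i j, f i j = f j i)
    (x y : Fin N → ℤ) (hx : BB f x x = 0) (hx0 : x ≠ 0)
    (hmin : ∀ z : Fin N → ℤ, z ≠ 0 → BB f z z = 0 → ∑ i, x i ^ 2 ≤ ∑ i, z i ^ 2)
    (H ρ α : ℝ) (hH1 : 1 ≤ H) (hH : ∀ i j, |(f i j : ℝ)| ≤ H)
    (hy0 : y ≠ 0) (hα : |α| ≤ 1 / 2)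
    (hy : ∀ k, |(y k : ℝ) - α * x k| ≤ ρ) (hρ : 4 * N ^ 3 * H * ρ ^ 2 ≤ 1) : False := by
  have hN' : (2 : ℝ) ≤ N := by exact_mod_cast hN
  have hN0 : (0 : ℝ) < N := by linarith
  have hs1 : (1 : ℝ) ≤ ∑ i, (x i : ℝ) ^ 2 := by
    have : (1 : ℤ) ≤ ∑ i, x i ^ 2 := by
      obtain ⟨k, hk⟩ := Function.ne_iff.mp hx0
      have h1 : x k ^ 2 ≤ ∑ i, x i ^ 2 :=
        Finset.single_le_sum (f := fun i => x i ^ 2) (fun i _ => sq_nonneg _) (Finset.mem_univ k)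
      have : 0 < x k ^ 2 := by have : x k ≠ 0 := hk; positivity
      linarith
    exact_mod_cast this
  set s : ℝ := ∑ i, (x i : ℝ) ^ 2 with hs
  have hr : ∀ k, |(x k : ℝ)| ≤ √s := fun k => by
    apply Real.abs_le_sqrt
    exact Finset.single_le_sum (f := fun i => (x i : ℝ) ^ 2) (fun i _ => sq_nonneg _)
      (Finset.mem_univ k)
  have hmin' : ∀ z : Fin N → ℤ, z ≠ 0 → BB f z z = 0 → s ≤ ∑ i, (z i : ℝ) ^ 2 := by
    intro z h1 h2
    have := hmin z h1 h2
    rw [hs]; exact_mod_cast this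
  have hq : (N : ℝ) ^ 2 * H * ρ ^ 2 ≤ 1 / (4 * N) := by
    rw [le_div_iff₀ (by positivity)]; linarith
  have hq4 : 1 / (4 * (N : ℝ)) ≤ 1 / 8 := by
    apply one_div_le_one_div_of_le <;> linarith
  have hρN : N * ρ ^ 2 ≤ 1 / 8 := by
    have : N * ρ ^ 2 ≤ (N : ℝ) ^ 2 * H * ρ ^ 2 := by
      have : (N : ℝ) ≤ N ^ 2 * H := by nlinarith
      gcongr
    linarith
  by_cases hF : BB f y y = 0
  · have h1 := hmin' y hy0 hF
    have h2 : ∑ i, (y i : ℝ) ^ 2 ≤ ∑ i, (1 / 2 * (x i : ℝ) ^ 2 + 2 * ρ ^ 2) := by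
      refine Finset.sum_le_sum fun i _ => ?_
      have h3 := abs_le.mp (hy i)
      have h5 : ((y i : ℝ) - α * x i) ^ 2 ≤ ρ ^ 2 := sq_le_sq' h3.1 h3.2
      have h6 : (α * x i) ^ 2 ≤ 1 / 4 * (x i : ℝ) ^ 2 := by
        rw [mul_pow]
        have : α ^ 2 ≤ (1 / 2) ^ 2 := sq_le_sq' (abs_le.mp hα).1 (abs_le.mp hα).2
        nlinarith [sq_nonneg (x i : ℝ)]
      nlinarith [sq_nonneg ((y i : ℝ) - α * x i - α * x i)]
    rw [Finset.sum_add_distrib, ← Finset.mul_sum, ← hs] at h2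
    simp at h2
    linarith
  by_cases hB : BB f x y = 0
  · set F : Fin N → Fin N → ℝ := fun i j => (f i j : ℝ) with hFd
    have hFs : ∀ i j, F i j = F j i := fun i j => by simp [hFd, hf i j]
    have hb := BB_abs F (fun i => (y i : ℝ) - α * x i) (fun i => (y i : ℝ) - α * x i) H ρ ρ hH hy hy
    have e : BB F (fun i => (y i : ℝ) - α * x i) (fun i => (y i : ℝ) - α * x i) = (BB f y y : ℤ) := by
      have := BB_comb F hFs (fun i => (y i : ℝ)) (fun i => (x i : ℝ)) 1 (-α)
      simp only [one_mul, neg_mul, ← sub_eq_add_neg] at this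
      rw [this, hFd, ← BB_cast, ← BB_cast, ← BB_cast, hx, BB_symm f hf y x, hB]
      simp
    rw [e] at hb
    have : (1 : ℝ) ≤ |((BB f y y : ℤ) : ℝ)| := by
      exact_mod_cast Int.one_le_abs hF
    nlinarith
  · have hz0 : zz f x y ≠ 0 := by
      intro h
      have : BB f x (zz f x y) = 0 := by rw [h]; simp [BB]
      unfold zz at this
      rw [BB_right, hx] at this
      have : BB f x y ^ 2 = 0 := by linarith
      exact hB (by simpa using this)
    have h1 := hmin' _ hz0 (zz_zero f hf x y hx)
    have h2 : ∑ i, ((zz f x y i : ℤ) : ℝ) ^ 2 ≤ ∑ i : Fin N, (9 / (16 * N ^ 2) * s : ℝ) := by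
      refine Finset.sum_le_sum fun i _ => ?_
      have h3 := zz_bound f hf x y hx H (√s) ρ α hH hr hy i
      have h4 : 3 * N ^ 2 * H * ρ ^ 2 * √s ≤ 3 * (1 / (4 * N)) * √s := by
        gcongr ?_ * _
        linarith
      have h5 := abs_le.mp (h3.trans h4)
      have h6 := sq_le_sq' h5.1 h5.2
      rw [mul_pow, Real.sq_sqrt (by linarith)] at h6
      refine h6.trans (le_of_eq ?_)
      field_simp; norm_num
    simp at h2
    have h7 : (N : ℝ) * (9 / (16 * N ^ 2) * s) = 9 / 16 * (1 / N) * s := by field_simp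
    have h8 : 1 / (N : ℝ) ≤ 1 / 2 := by apply one_div_le_one_div_of_le <;> linarith
    rw [h7] at h2
    nlinarith

open MeasureTheory in
theorem mink {N : ℕ} (A : Matrix (Fin N) (Fin N) ℝ) (h0 : A.det ≠ 0) (h1 : |A.det| < 1) :
    ∃ y : Fin N → ℤ, y ≠ 0 ∧ ∀ i, |A.mulVec (fun k => (y k : ℝ)) i| ≤ 1 := by
  set b := Pi.basisFun ℝ (Fin N) with hb
  have hd : LinearMap.det (Matrix.toLin' A) ≠ 0 := by simpa using h0
  have hvol := Measure.addHaar_preimage_linearMap (volume : Measure (Fin N → ℝ)) hd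
    (Metric.closedBall 0 1)
  have hball : volume (Metric.closedBall (0 : Fin N → ℝ) 1) = 2 ^ N := by
    rw [Real.volume_pi_closedBall _ zero_le_one]
    simp
  have : Countable (Submodule.span ℤ (Set.range b)).toAddSubgroup :=
    inferInstanceAs (Countable (Submodule.span ℤ (Set.range b)))
  obtain ⟨⟨v, hv⟩, hv0, hvs⟩ := exists_ne_zero_mem_lattice_of_measure_mul_two_pow_lt_measure
    (s := (Matrix.toLin' A) ⁻¹' (Metric.closedBall 0 1))
    (ZSpan.isAddFundamentalDomain' b volume) (by
      intro x hx
      have hx' : ‖A.mulVec x‖ ≤ 1 := by simpa using hx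
      have : ‖A.mulVec (-x)‖ ≤ 1 := by rw [Matrix.mulVec_neg, norm_neg]; exact hx'
      simpa using this) ((convex_closedBall (0 : Fin N → ℝ) 1).linear_preimage _) (by
      rw [hvol, hball, ZSpan.fundamentalDomain_pi_basisFun]
      have : (1 : ENNReal) < ENNReal.ofReal |(LinearMap.det (Matrix.toLin' A))⁻¹| := by
        rw [ENNReal.one_lt_ofReal, LinearMap.det_toLin', abs_inv]
        exact (one_lt_inv₀ (abs_pos.mpr h0)).mpr h1
      have hone : volume (Set.univ.pi fun _ : Fin N => Set.Ico (0 : ℝ) 1) = 1 := by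
        rw [volume_pi_pi]; simp
      rw [hone, one_mul, Module.finrank_fin_fun]
      have h2 : (2 : ENNReal) ^ N ≠ 0 := by simp
      have h3 : (2 : ENNReal) ^ N ≠ ⊤ := by finiteness
      calc (2 : ENNReal) ^ N = 1 * 2 ^ N := (one_mul _).symm
        _ < _ := by exact (ENNReal.mul_lt_mul_iff_left h2 h3).mpr this)
  have hv' : ∀ i, ∃ z : ℤ, (z : ℝ) = v i := by
    have := (b.mem_span_iff_repr_mem ℤ v).mp hv
    intro i
    simpa [hb] using this i
  choose y hy using hv'
  refine ⟨y, ?_, ?_⟩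
  · rintro rfl
    apply hv0
    ext i
    simp [← hy i]
  · intro i
    have e : (fun k => (y k : ℝ)) = v := funext hy
    rw [e]
    have h2 : ‖A.mulVec v‖ ≤ 1 := by simpa using hvs
    exact (norm_le_pi_norm (A.mulVec v) i).trans h2

theorem ortho {N : ℕ} (i0 i1 : Fin N) (h01 : i0 ≠ i1) (x : Fin N → ℝ) (hx : x ≠ 0)
    (W : Submodule ℝ (Fin N → ℝ)) (hxW : x ∈ W) (hW : W ≠ ⊤) :
    ∃ Q : Matrix (Fin N) (Fin N) ℝ, Q * Q.transpose = 1 ∧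
      (∀ k, x k = √(∑ i, x i ^ 2) * Q i0 k) ∧ ∀ v ∈ W, Q.mulVec v i1 = 0 := by
  let L := WithLp.linearEquiv 2 ℝ (Fin N → ℝ)
  let W' : Submodule ℝ (EuclideanSpace ℝ (Fin N)) := W.comap L.toLinearMap
  have hW' : W' ≠ ⊤ := by
    intro h
    apply hW
    rw [eq_top_iff]
    intro v _
    have : L.symm v ∈ W' := by rw [h]; trivial
    simpa [W'] using this
  have hperp : W'ᗮ ≠ ⊥ := by
    intro h
    exact hW' (Submodule.orthogonal_eq_bot_iff.mp h)
  obtain ⟨a, haW, ha0⟩ := (Submodule.ne_bot_iff _).mp hperp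
  let X : EuclideanSpace ℝ (Fin N) := WithLp.toLp 2 x
  have hXW : X ∈ W' := by simpa [W', L, X] using hxW
  have hX0 : X ≠ 0 := by
    intro h; apply hx; funext k
    have := congrArg (fun v : EuclideanSpace ℝ (Fin N) => v k) h
    simpa [X] using this
  have hnX : ‖X‖ = √(∑ i, x i ^ 2) := by
    rw [EuclideanSpace.norm_eq]; simp [X]
  let v : Fin N → EuclideanSpace ℝ (Fin N) :=
    fun i => if i = i0 then (‖X‖⁻¹ : ℝ) • X else (‖a‖⁻¹ : ℝ) • a
  have hXa : inner ℝ X a = 0 := haW X hXW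
  have hv : Orthonormal ℝ (({i0, i1} : Set (Fin N)).domRestrict v) := by
    constructor
    · rintro ⟨i, hi⟩
      rcases hi with rfl | hi
      · simp [v, norm_smul, hX0]
      · have : i = i1 := hi
        subst this
        simp [v, norm_smul, ha0, h01.symm]
    · rintro ⟨i, hi⟩ ⟨j, hj⟩ hij
      have hij' : i ≠ j := fun h => hij (Subtype.ext h)
      have hi' : i = i0 ∨ i = i1 := hi
      have hj' : j = i0 ∨ j = i1 := hj
      rcases hi' with rfl | rfl <;> rcases hj' with rfl | rfl
      · exact absurd rfl hij'
      · simp [v, h01.symm, inner_smul_left, inner_smul_right, hXa]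
      · have hXa' : inner ℝ a X = 0 := by rw [real_inner_comm]; exact hXa
        simp [v, h01.symm, inner_smul_left, inner_smul_right, hXa']
      · exact absurd rfl hij'
  obtain ⟨b, hb⟩ := hv.exists_orthonormalBasis_extension_of_card_eq (by simp)
  refine ⟨Matrix.of fun i k => b i k, ?_, ?_, ?_⟩
  · ext i j
    have := orthonormal_iff_ite.mp b.orthonormal i j
    simp only [Matrix.mul_apply, Matrix.of_apply, Matrix.transpose_apply, Matrix.one_apply]
    rw [← this, PiLp.inner_apply]
    simp [mul_comm]
  · intro k
    have h := hb i0 (by simp)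
    simp only [Matrix.of_apply, h, ← hnX]
    have : ‖X‖ ≠ 0 := by simpa using hX0
    simp [v]
    field_simp
    simp [X]
  · intro u hu
    have h := hb i1 (by simp)
    have h2 : inner ℝ (WithLp.toLp 2 u) a = 0 := haW _ (by simpa [W', L] using hu)
    rw [PiLp.inner_apply] at h2
    simp only [Matrix.mulVec, dotProduct, Matrix.of_apply, h]
    simp [v, h01.symm]
    simp at h2
    have : ∑ i, ‖a‖⁻¹ * a i * u i = ‖a‖⁻¹ * ∑ i, a i * u i := by
      rw [Finset.mul_sum]; refine Finset.sum_congr rfl fun i _ => by ring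
    rw [this, h2, mul_zero]

theorem spanC {m : ℕ} (f : Fin (m + 2) → Fin (m + 2) → ℤ) (hf : ∀ i j, f i j = f j i)
    (x : Fin (m + 2) → ℤ) (hx : BB f x x = 0) (hx0 : x ≠ 0)
    (hmin : ∀ z : Fin (m + 2) → ℤ, z ≠ 0 → BB f z z = 0 → ∑ i, x i ^ 2 ≤ ∑ i, z i ^ 2)
    (H σ R : ℝ) (hH1 : 1 ≤ H) (hH : ∀ i j, |(f i j : ℝ)| ≤ H)
    (hσ : 0 < σ) (hσH : 16 * ((m + 2 : ℕ) : ℝ) ^ 5 * H * σ ^ 2 ≤ 1) (hR : 0 < R)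
    (hvol : 4 < √(∑ i, (x i : ℝ) ^ 2) * R * σ ^ m) :
    Submodule.span ℝ {v : Fin (m + 2) → ℝ | ∃ y : Fin (m + 2) → ℤ, v = (fun k => (y k : ℝ)) ∧
      ∃ α : ℝ, ∀ k, |(y k : ℝ) - α * x k| ≤ R} = ⊤ := by
  by_contra hW
  set r := √(∑ i, (x i : ℝ) ^ 2) with hr
  have hr0 : 0 < r := by
    rcases (Real.sqrt_nonneg (∑ i, (x i : ℝ) ^ 2)).lt_or_eq with h | h
    · exact h
    · rw [hr, ← h] at hvol; norm_num at hvol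
  set W := Submodule.span ℝ {v : Fin (m + 2) → ℝ | ∃ y : Fin (m + 2) → ℤ,
      v = (fun k => (y k : ℝ)) ∧ ∃ α : ℝ, ∀ k, |(y k : ℝ) - α * x k| ≤ R} with hWd
  have hxW : (fun k => (x k : ℝ)) ∈ W :=
    Submodule.subset_span ⟨x, rfl, 1, fun k => by simpa using hR.le⟩
  have hX0 : (fun k => (x k : ℝ)) ≠ 0 := by
    intro h; apply hx0; funext k
    have := congrFun h k
    simpa using this
  obtain ⟨Q, hQ, hQ0, hQ1⟩ := ortho (0 : Fin (m + 2)) 1 (by simp) _ hX0 W hxW hW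
  have hQ' : Q.transpose * Q = 1 := mul_eq_one_comm.mp hQ
  have hdet : |Q.det| = 1 := by
    have := congrArg Matrix.det hQ
    rw [Matrix.det_mul, Matrix.det_transpose, Matrix.det_one] at this
    rcases mul_self_eq_one_iff.mp this with h | h <;> simp [h]
  have hQle : ∀ i k, |Q i k| ≤ 1 := by
    intro i k
    have h1 : ∑ k, Q i k ^ 2 = 1 := by
      have := congrFun (congrFun hQ i) i
      simp only [Matrix.mul_apply, Matrix.transpose_apply, Matrix.one_apply_eq] at this
      rw [← this]; exact Finset.sum_congr rfl fun _ _ => by ring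
    have h2 : Q i k ^ 2 ≤ ∑ k, Q i k ^ 2 :=
      Finset.single_le_sum (f := fun k => Q i k ^ 2) (fun i _ => sq_nonneg _) (Finset.mem_univ k)
    rw [h1] at h2
    exact (sq_le_one_iff_abs_le_one _).mp h2
  let s : Fin (m + 2) → ℝ := Fin.cons (2 / r) (Fin.cons (2 / R) fun _ : Fin m => 1 / σ)
  have hprod : ∏ i, s i = 4 / (r * R * σ ^ m) := by
    simp [s, Fin.prod_univ_succ]
    field_simp; norm_num
  have hdA : |(Matrix.diagonal s * Q).det| = 4 / (r * R * σ ^ m) := by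
    rw [Matrix.det_mul, Matrix.det_diagonal, abs_mul, hdet, hprod, mul_one, abs_of_pos]
    positivity
  have hdpos : 0 < 4 / (r * R * σ ^ m) := by positivity
  obtain ⟨y, hy0, hy⟩ := mink (Matrix.diagonal s * Q)
    (by rw [← abs_pos, hdA]; exact hdpos) (by rw [hdA, div_lt_one (by positivity)]; exact hvol)
  set c := Q.mulVec (fun k => (y k : ℝ)) with hc
  have hyc : ∀ i, |s i * c i| ≤ 1 := by
    intro i
    have := hy i
    rwa [← Matrix.mulVec_mulVec, Matrix.mulVec_diagonal, ← hc] at this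
  have h0 : |c 0| ≤ r / 2 := by
    have := hyc 0
    simp only [s, Fin.cons_zero, abs_mul, abs_div, abs_of_pos hr0, abs_two] at this
    rw [div_mul_eq_mul_div, div_le_one hr0] at this
    linarith
  have h1 : |c 1| ≤ R / 2 := by
    have := hyc 1
    have e : s 1 = 2 / R := rfl
    simp only [e, abs_mul, abs_div, abs_of_pos hR, abs_two] at this
    rw [div_mul_eq_mul_div, div_le_one hR] at this
    linarith
  have h2 : ∀ i : Fin m, |c i.succ.succ| ≤ σ := by
    intro i
    have := hyc i.succ.succ
    simp only [s, Fin.cons_succ, abs_mul, abs_div, abs_of_pos hσ, abs_one] at this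
    rw [div_mul_eq_mul_div, div_le_one hσ] at this
    linarith
  have hexp : ∀ k, (y k : ℝ) - (c 0 / r) * x k = c 1 * Q 1 k +
      ∑ i : Fin m, c i.succ.succ * Q i.succ.succ k := by
    intro k
    have e1 : Q.transpose.mulVec c = fun k => (y k : ℝ) := by
      rw [hc, Matrix.mulVec_mulVec, hQ', Matrix.one_mulVec]
    have e2 := congrFun e1 k
    simp only [Matrix.mulVec, dotProduct, Matrix.transpose_apply, Fin.sum_univ_succ] at e2
    rw [← e2, hQ0 k, ← hr]
    simp only [Fin.succ_zero_eq_one]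
    field_simp
    ring_nf
    exact congrArg _ (Finset.sum_congr rfl fun i _ => mul_comm _ _)
  have hsum : ∀ k, |∑ i : Fin m, c i.succ.succ * Q i.succ.succ k| ≤ ((m + 2 : ℕ) : ℝ) * σ := by
    intro k
    calc |∑ i : Fin m, c i.succ.succ * Q i.succ.succ k| ≤ ∑ i : Fin m, σ := by
          refine (Finset.abs_sum_le_sum_abs _ _).trans (Finset.sum_le_sum fun i _ => ?_)
          rw [abs_mul]
          calc _ ≤ σ * 1 := by gcongr; exacts [h2 i, hQle _ _]
            _ = σ := mul_one _
      _ = m * σ := by simp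
      _ ≤ _ := by gcongr; omega
  have hdist : ∀ k, |(y k : ℝ) - (c 0 / r) * x k| ≤ |c 1| + ((m + 2 : ℕ) : ℝ) * σ := by
    intro k
    rw [hexp k]
    refine (abs_add_le _ _).trans (add_le_add ?_ (hsum k))
    rw [abs_mul]
    exact mul_le_of_le_one_right (abs_nonneg _) (hQle _ _)
  have hα : |c 0 / r| ≤ 1 / 2 := by
    rw [abs_div, abs_of_pos hr0, div_le_iff₀ hr0]; linarith
  have key : |c 1| ≤ ((m + 2 : ℕ) : ℝ) * σ := by
    by_cases hcase : R / 2 ≤ ((m + 2 : ℕ) : ℝ) * σ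
    · linarith
    · have : (fun k => (y k : ℝ)) ∈ W :=
        Submodule.subset_span ⟨y, rfl, c 0 / r, fun k => (hdist k).trans (by linarith)⟩
      have := hQ1 _ this
      rw [hc, this]; simp; positivity
  refine no_small (by omega) f hf x y hx hx0 hmin H (2 * (((m + 2 : ℕ) : ℝ) * σ)) (c 0 / r)
    hH1 hH hy0 hα (fun k => (hdist k).trans (by linarith)) (le_trans (le_of_eq ?_) hσH)
  ring

theorem supNorm_le {N : ℕ} (x : Fin N → ℤ) (M : ℝ) (hM : 0 ≤ M) (h : ∀ k, |(x k : ℝ)| ≤ M) :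
    (supNorm x : ℝ) ≤ M := by
  have : supNorm x ≤ ⌊M⌋₊ := by
    refine Finset.sup_le fun k _ => ?_
    apply Nat.le_floor
    have := h k
    rwa [← Int.cast_abs, Int.abs_eq_natAbs, Int.cast_natCast] at this
  exact (Nat.cast_le.mpr this).trans (Nat.floor_le hM)

theorem indepD {N : ℕ} (f : Fin N → Fin N → ℤ) (hf : ∀ i j, f i j = f j i)
    (hdet : (Matrix.of f).det ≠ 0)
    (x : Fin N → ℤ) (hx : BB f x x = 0) (hx0 : x ≠ 0)
    (H R r : ℝ) (hH0 : 0 ≤ H) (hr0 : 0 ≤ r) (hH : ∀ i j, |(f i j : ℝ)| ≤ H)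
    (hr : ∀ k, |(x k : ℝ)| ≤ r)
    (hR : Submodule.span ℝ {v : Fin N → ℝ | ∃ y : Fin N → ℤ, v = (fun k => (y k : ℝ)) ∧
      ∃ α : ℝ, ∀ k, |(y k : ℝ) - α * x k| ≤ R} = ⊤) :
    ∃ z : Fin N → (Fin N → ℤ), LinearIndependent ℤ z ∧ (∀ k, BB f (z k) (z k) = 0) ∧
      (∏ k, (supNorm (z k) : ℝ)) ≤ r * (12 * N ^ 2 * H * R ^ 2 * r) ^ (N - 1) := by
  set M := 12 * N ^ 2 * H * R ^ 2 * r with hM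
  have hM0 : 0 ≤ M := by positivity
  set X : Fin N → ℝ := fun k => (x k : ℝ) with hX
  have hX0 : X ≠ 0 := by
    intro h; apply hx0; funext k
    have := congrFun h k
    simpa [hX] using this
  set S : Set (Fin N → ℝ) := {v : Fin N → ℝ | ∃ y : Fin N → ℤ, v = (fun k => (y k : ℝ)) ∧
      ∃ α : ℝ, ∀ k, |(y k : ℝ) - α * x k| ≤ R} with hS
  set Z : Set (Fin N → ℝ) := {v | ∃ z : Fin N → ℤ, v = (fun k => (z k : ℝ)) ∧ BB f z z = 0 ∧
    ∀ k, |(z k : ℝ)| ≤ M} with hZ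
  set T := Submodule.span ℝ (insert X Z) with hT
  have hXT : X ∈ T := Submodule.subset_span (Set.mem_insert _ _)
  -- vectors with nonzero pairing
  have hmem : ∀ y : Fin N → ℤ, BB f x y ≠ 0 → (∃ α : ℝ, ∀ k, |(y k : ℝ) - α * x k| ≤ 2 * R) →
      (fun k => (y k : ℝ)) ∈ T := by
    rintro y hB ⟨α, hα⟩
    have hz : (fun k => ((zz f x y k : ℤ) : ℝ)) ∈ T := by
      refine Submodule.subset_span (Set.mem_insert_of_mem _ ⟨zz f x y, rfl, zz_zero f hf x y hx, ?_⟩)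
      intro k
      refine (zz_bound f hf x y hx H r (2 * R) α hH hr hα k).trans (le_of_eq ?_)
      rw [hM]; ring
    have hB' : ((BB f x y : ℤ) : ℝ) ≠ 0 := by exact_mod_cast hB
    have e : (fun k => (y k : ℝ)) = ((-2 * (BB f x y : ℤ) : ℝ)⁻¹) •
        ((fun k => ((zz f x y k : ℤ) : ℝ)) - ((BB f y y : ℤ) : ℝ) • X) := by
      funext k
      simp only [zz, hX, Pi.smul_apply, Pi.sub_apply, smul_eq_mul]
      push_cast
      field_simp
      ring
    rw [e]
    exact T.smul_mem _ (T.sub_mem hz (T.smul_mem _ hXT))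
  have hy0 : ∃ y : Fin N → ℤ, BB f x y ≠ 0 ∧ ∃ α : ℝ, ∀ k, |(y k : ℝ) - α * x k| ≤ R := by
    by_contra! hcon
    have hall : ∀ v : Fin N → ℝ, BB (fun i j => (f i j : ℝ)) X v = 0 := by
      intro v
      have hv : v ∈ Submodule.span ℝ S := by rw [hR]; trivial
      induction hv using Submodule.span_induction with
      | mem v hv =>
        obtain ⟨y, rfl, α, hα⟩ := hv
        by_contra h
        rw [hX, ← BB_cast] at h
        obtain ⟨k, hk⟩ := hcon y (by exact_mod_cast h) α
        exact absurd (hα k) (not_le.mpr hk)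
      | zero => simp [BB]
      | add u v _ _ hu hv =>
        have := BB_right (fun i j => (f i j : ℝ)) X u v 1 1
        simp only [one_mul, hu, hv, add_zero] at this
        exact this
      | smul a u _ hu =>
        have := BB_right (fun i j => (f i j : ℝ)) X u 0 a 0
        simp only [hu, mul_zero, add_zero, zero_mul] at this
        exact this
    apply hx0
    refine Matrix.eq_zero_of_vecMul_eq_zero hdet ?_
    funext k
    have h1 := hall (fun j => ((Pi.single k 1 : Fin N → ℤ) j : ℝ))
    rw [hX, ← BB_cast] at h1
    have h2 : BB f x (Pi.single k 1) = 0 := by exact_mod_cast h1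
    simp only [BB, Pi.single_apply, mul_ite, mul_one, mul_zero, Finset.sum_ite_eq',
      Finset.mem_univ, if_true] at h2
    simp only [Matrix.vecMul, dotProduct, Matrix.of_apply, Pi.zero_apply]
    rw [← h2]
    exact Finset.sum_congr rfl fun i _ => mul_comm _ _
  obtain ⟨y0, hB0, α0, hα0⟩ := hy0
  have hRk : ∀ k : Fin N, 0 ≤ R := fun k => (abs_nonneg _).trans (hα0 k)
  have hy0T := hmem y0 hB0 ⟨α0, fun k => (hα0 k).trans (by linarith [hRk k])⟩
  have hST : S ⊆ T := by
    rintro v ⟨y, rfl, α, hα⟩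
    by_cases hB : BB f x y = 0
    · have hB1 : BB f x (fun k => 1 * y k + 1 * y0 k) ≠ 0 := by
        rw [BB_right, hB]; simpa using hB0
      have := hmem _ hB1 ⟨α + α0, fun k => by
        have e : ((1 * y k + 1 * y0 k : ℤ) : ℝ) - (α + α0) * x k =
          ((y k : ℝ) - α * x k) + ((y0 k : ℝ) - α0 * x k) := by push_cast; ring
        rw [e]
        exact (abs_add_le _ _).trans (by linarith [hα k, hα0 k])⟩
      have h2 := T.sub_mem this hy0T
      have e : (fun k => (y k : ℝ)) =
          (fun k => ((1 * y k + 1 * y0 k : ℤ) : ℝ)) - fun k => (y0 k : ℝ) := by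
        funext k
        simp
      rw [SetLike.mem_coe, e]
      exact h2
    · exact hmem y hB ⟨α, fun k => (hα k).trans (by linarith [hRk k])⟩
  have hTtop : T = ⊤ := by
    rw [eq_top_iff, ← hR]
    exact Submodule.span_le.mpr hST
  obtain ⟨b, hbsub, hXb, hbspan, hbli⟩ := exists_linearIndepOn_id_extension
    (K := ℝ) (s := {X}) (t := insert X Z) (by
      exact LinearIndepOn.singleton (R := ℝ) (v := id) hX0) (by simp)
  have hbtop : Submodule.span ℝ b = ⊤ := by
    rw [eq_top_iff, ← hTtop, hT]
    exact Submodule.span_le.mpr hbspan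
  let B : Module.Basis b ℝ (Fin N → ℝ) := Module.Basis.mk (v := ((↑) : b → Fin N → ℝ)) hbli
    (by rw [Subtype.range_coe, hbtop])
  have hfin : Finite b := Module.Finite.finite_basis B
  have : Fintype b := Fintype.ofFinite b
  have hcard : Fintype.card (Fin N) = Fintype.card b := by
    rw [← Module.finrank_eq_card_basis B]; simp
  let e : Fin N ≃ b := Fintype.equivOfCardEq hcard
  have hXb' : X ∈ b := hXb rfl
  set k0 := e.symm ⟨X, hXb'⟩ with hk0
  have hchoose : ∀ k, ∃ z : Fin N → ℤ, ((e k : b) : Fin N → ℝ) = (fun j => (z j : ℝ)) ∧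
      BB f z z = 0 ∧ (k = k0 → ∀ j, |(z j : ℝ)| ≤ r) ∧ (k ≠ k0 → ∀ j, |(z j : ℝ)| ≤ M) := by
    intro k
    by_cases hk : k = k0
    · refine ⟨x, ?_, hx, fun _ => hr, fun h => absurd hk h⟩
      rw [hk, hk0, Equiv.apply_symm_apply]
    · rcases hbsub (e k).2 with h | h
      · exfalso; apply hk
        rw [hk0, Equiv.eq_symm_apply]
        exact Subtype.ext h
      · obtain ⟨z, h1, h2, h3⟩ := h
        exact ⟨z, h1, h2, fun h => absurd h hk, fun _ => h3⟩
  choose z hz1 hz2 hz3 hz4 using hchoose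
  refine ⟨z, ?_, hz2, ?_⟩
  · have hli : LinearIndependent ℝ (fun k => ((e k : b) : Fin N → ℝ)) :=
      LinearIndependent.comp (v := ((↑) : b → Fin N → ℝ)) hbli e e.injective
    have hli2 : LinearIndependent ℤ (fun k => ((e k : b) : Fin N → ℝ)) :=
      hli.restrict_scalars (by
        intro a b h
        simpa using h)
    let φ : (Fin N → ℤ) →ₗ[ℤ] (Fin N → ℝ) := (Int.castAddHom ℝ).toIntLinearMap.compLeft (Fin N)
    refine LinearIndependent.of_comp φ ?_
    convert hli2 using 1
    funext k
    rw [hz1 k]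
    rfl
  · rw [← Finset.mul_prod_erase _ _ (Finset.mem_univ k0)]
    have hc : (Finset.univ.erase k0).card = N - 1 := by
      rw [Finset.card_erase_of_mem (Finset.mem_univ _)]; simp
    gcongr
    · exact supNorm_le _ _ hr0 (hz3 k0 rfl)
    · rw [← hc, ← Finset.prod_const]
      refine Finset.prod_le_prod (fun _ _ => by positivity) fun k hk => ?_
      exact supNorm_le _ _ hM0 (hz4 k (Finset.ne_of_mem_erase hk))

theorem exists_min {N : ℕ} (f : Fin N → Fin N → ℤ)
    (h : ∃ x : Fin N → ℤ, x ≠ 0 ∧ BB f x x = 0) :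
    ∃ x : Fin N → ℤ, x ≠ 0 ∧ BB f x x = 0 ∧
      ∀ z : Fin N → ℤ, z ≠ 0 → BB f z z = 0 → ∑ i, x i ^ 2 ≤ ∑ i, z i ^ 2 := by
  let P : Set (Fin N → ℤ) := {x | x ≠ 0 ∧ BB f x x = 0}
  let g : (Fin N → ℤ) → ℕ := fun x => (∑ i, x i ^ 2).toNat
  have hne : P.Nonempty := h
  refine ⟨Function.argminOn g P hne, (Function.argminOn_mem g P hne).1,
    (Function.argminOn_mem g P hne).2, ?_⟩
  intro z h1 h2
  have := Function.argminOn_le g P (a := z) ⟨h1, h2⟩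
  have hz : (0 : ℤ) ≤ ∑ i, z i ^ 2 := Finset.sum_nonneg fun i _ => sq_nonneg _
  have h3 : (∑ i, Function.argminOn g P hne i ^ 2).toNat ≤ (∑ i, z i ^ 2).toNat := this
  omega

/-- **Schulze-Pillot.** For every `N ≥ 2` there is a constant `C_N` such that every nonsingular
isotropic integral quadratic form `F` in `N` variables admits `N` linearly independent integral
zeros `x_1, …, x_N` with `|x_1| ⋯ |x_N| ≤ C_N · |F|^(N²/2 − 1)`. -/
theorem schulze_pillot (N : ℕ) (hN : 2 ≤ N) :
    ∃ C : ℝ, 0 < C ∧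
      ∀ (f : Fin N → Fin N → ℤ), (∀ i j, f i j = f j i) →
      (Matrix.of f).det ≠ 0 →
      (∃ x : Fin N → ℤ, x ≠ 0 ∧ ∑ i, ∑ j, f i j * x i * x j = 0) →
      ∃ x : Fin N → (Fin N → ℤ), LinearIndependent ℤ x ∧
        (∀ k, ∑ i, ∑ j, f i j * x k i * x k j = 0) ∧
        (∏ k, (supNorm (x k) : ℝ)) ≤
          C * ((Finset.univ.sup fun p : Fin N × Fin N => (f p.1 p.2).natAbs : ℕ) : ℝ) ^
            ((N : ℝ) ^ 2 / 2 - 1) := by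
  obtain ⟨m, rfl⟩ : ∃ m, N = m + 2 := ⟨N - 2, by omega⟩
  set n : ℝ := ((m + 2 : ℕ) : ℝ) with hn
  have hn2 : 2 ≤ n := by rw [hn]; exact_mod_cast hN
  have hn0 : 0 < n := by linarith
  set K : ℝ := 8 * (4 * n ^ 3) ^ m with hK
  have hK0 : 0 < K := by positivity
  have hK1 : 1 ≤ K := by
    have : (1 : ℝ) ≤ (4 * n ^ 3) ^ m := by
      apply one_le_pow₀
      have : (1 : ℝ) ≤ n ^ 3 := one_le_pow₀ (by linarith)
      linarith
    linarith
  refine ⟨(12 * n ^ 2 * K ^ 2) ^ (m + 1), by positivity, ?_⟩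
  intro f hf hdet hiso
  set Hn : ℕ := Finset.univ.sup fun p : Fin (m + 2) × Fin (m + 2) => (f p.1 p.2).natAbs with hHn
  set H : ℝ := (Hn : ℝ) with hHd
  have hH : ∀ i j, |(f i j : ℝ)| ≤ H := by
    intro i j
    rw [← Int.cast_abs, Int.abs_eq_natAbs, Int.cast_natCast, hHd]
    have : (f i j).natAbs ≤ Hn :=
      Finset.le_sup (f := fun p : Fin (m + 2) × Fin (m + 2) => (f p.1 p.2).natAbs)
        (Finset.mem_univ (i, j))
    exact_mod_cast this
  have hH1 : 1 ≤ H := by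
    by_contra hcon
    have h0 : Hn = 0 := by
      rw [hHd] at hcon
      have : Hn < 1 := by exact_mod_cast not_le.mp hcon
      omega
    apply hdet
    have : Matrix.of f = 0 := by
      ext i j
      have := hH i j
      rw [hHd, h0] at this
      simpa using this
    rw [this, Matrix.det_zero]
  obtain ⟨x, hx0, hx, hmin⟩ := exists_min f hiso
  set s : ℝ := ∑ i, (x i : ℝ) ^ 2 with hs
  set r : ℝ := √s with hr
  have hs1 : 1 ≤ s := by
    have : (1 : ℤ) ≤ ∑ i, x i ^ 2 := by
      obtain ⟨k, hk⟩ := Function.ne_iff.mp hx0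
      have h1 : x k ^ 2 ≤ ∑ i, x i ^ 2 :=
        Finset.single_le_sum (f := fun i => x i ^ 2) (fun i _ => sq_nonneg _) (Finset.mem_univ k)
      have : 0 < x k ^ 2 := by have : x k ≠ 0 := hk; positivity
      linarith
    rw [hs]; exact_mod_cast this
  have hr1 : 1 ≤ r := Real.one_le_sqrt.mpr hs1
  have hr0 : 0 < r := by linarith
  have hrk : ∀ k, |(x k : ℝ)| ≤ r := fun k => by
    apply Real.abs_le_sqrt
    exact Finset.single_le_sum (f := fun i => (x i : ℝ) ^ 2) (fun i _ => sq_nonneg _)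
      (Finset.mem_univ k)
  set h : ℝ := √H with hh
  have hh2 : h ^ 2 = H := Real.sq_sqrt (by linarith)
  have hh1 : 1 ≤ h := Real.one_le_sqrt.mpr hH1
  have hh0 : 0 < h := by linarith
  have hpow : H ^ (n ^ 2 / 2 - 1) = h ^ (m ^ 2 + 4 * m + 2) := by
    rw [hh, Real.sqrt_eq_rpow, ← Real.rpow_natCast _ (m ^ 2 + 4 * m + 2), ← Real.rpow_mul (by linarith)]
    congr 1
    rw [hn]; push_cast; ring
  rw [hpow]
  by_cases hcase : r ≤ h ^ m
  · obtain ⟨z, hz1, hz2, hz3⟩ := indepD f hf hdet x hx hx0 H 1 r (by linarith) hr0.le hH hrk (by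
      rw [eq_top_iff, ← (Pi.basisFun ℝ (Fin (m + 2))).span_eq]
      refine Submodule.span_mono ?_
      rintro _ ⟨i, rfl⟩
      refine ⟨Pi.single i 1, ?_, 0, fun k => ?_⟩
      · funext k
        simp [Pi.single_apply]
      · simp only [Pi.single_apply, zero_mul, sub_zero]
        split_ifs <;> simp)
    refine ⟨z, hz1, hz2, hz3.trans ?_⟩
    rw [← hn, show m + 2 - 1 = m + 1 by omega, ← hh2]
    calc r * (12 * n ^ 2 * h ^ 2 * 1 ^ 2 * r) ^ (m + 1)
        = (12 * n ^ 2 * 1 ^ 2) ^ (m + 1) * (h ^ (2 * (m + 1)) * r ^ (m + 2)) := by ring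
      _ ≤ (12 * n ^ 2 * K ^ 2) ^ (m + 1) * (h ^ (2 * (m + 1)) * (h ^ m) ^ (m + 2)) := by gcongr
      _ = _ := by ring
  · push Not at hcase
    set σ : ℝ := 1 / (4 * n ^ 3 * h) with hσ
    set R : ℝ := K * h ^ m / r with hRd
    obtain ⟨z, hz1, hz2, hz3⟩ := indepD f hf hdet x hx hx0 H R r (by linarith) hr0.le hH hrk (by
      refine spanC f hf x hx hx0 hmin H σ R hH1 hH (by positivity) ?_ (by positivity) ?_
      · rw [← hn, ← hh2, hσ]
        have : 16 * n ^ 5 * h ^ 2 * (1 / (4 * n ^ 3 * h)) ^ 2 = 1 / n := by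
          field_simp; norm_num
        rw [this, div_le_one hn0]; linarith
      · rw [← hs, ← hr]
        have : r * R * σ ^ m = 8 := by
          rw [hRd, hσ, hK, one_div, inv_pow, mul_pow (4 * n ^ 3)]
          field_simp
        rw [this]; norm_num)
    refine ⟨z, hz1, hz2, hz3.trans ?_⟩
    rw [← hn, show m + 2 - 1 = m + 1 by omega, ← hh2, hRd]
    calc r * (12 * n ^ 2 * h ^ 2 * (K * h ^ m / r) ^ 2 * r) ^ (m + 1)
        = (12 * n ^ 2 * K ^ 2) ^ (m + 1) * (h ^ (2 * (m + 1) ^ 2) / r ^ m) := by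
          rw [eq_comm, ← mul_div_assoc, div_eq_iff (by positivity)]
          have : 12 * n ^ 2 * h ^ 2 * (K * h ^ m / r) ^ 2 * r =
            (12 * n ^ 2 * K ^ 2) * h ^ (2 * (m + 1)) / r := by
            field_simp; ring
          rw [this, div_pow]
          field_simp
          ring
      _ ≤ (12 * n ^ 2 * K ^ 2) ^ (m + 1) * h ^ (m ^ 2 + 4 * m + 2) := by
          gcongr
          rw [div_le_iff₀ (by positivity)]
          calc h ^ (2 * (m + 1) ^ 2) = h ^ (m ^ 2 + 4 * m + 2) * (h ^ m) ^ m := by ring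
            _ ≤ _ := by gcongr
end

section
/- For every N ≥ 2 there is a constant C_N depending only on N such that: if F(X) = Σ_{i,j=1}^N f_{ij} X_i X_j is a nonsingular integral quadratic form in N variables and Λ ⊆ ℤ^N is a full-rank sublattice containing a nonzero point x with F(x) = 0, then there exist N linearly independent vectors x_1, …, x_N ∈ Λ with F(x_1) = ⋯ = F(x_N) = 0 and |x_1|^{N−1} · |x_2| ⋯ |x_N| ≤ C_N · |F|^{(N−1)²} · det(Λ)^{2(N−1)}. -/
open Matrix
lemma sp_cs {N : ℕ} (A : Matrix (Fin N) (Fin N) ℝ) (M : ℝ) (hA : ∀ i j, |A i j| ≤ M)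
    (u v : Fin N → ℝ) : (u ⬝ᵥ (A *ᵥ v)) ^ 2 ≤ ((N:ℝ) * M) ^ 2 * ((u ⬝ᵥ u) * (v ⬝ᵥ v)) := by
  have h1 : u ⬝ᵥ (A *ᵥ v) = ∑ p : Fin N × Fin N, A p.1 p.2 * (u p.1 * v p.2) := by
    rw [Fintype.sum_prod_type]
    simp only [dotProduct, mulVec, Finset.mul_sum]
    refine Finset.sum_congr rfl fun i _ => Finset.sum_congr rfl fun j _ => by ring
  have h2 : (u ⬝ᵥ u) * (v ⬝ᵥ v) = ∑ p : Fin N × Fin N, (u p.1 * v p.2) ^ 2 := by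
    rw [Fintype.sum_prod_type]
    simp only [dotProduct, Finset.sum_mul_sum]
    refine Finset.sum_congr rfl fun i _ => Finset.sum_congr rfl fun j _ => by ring
  rw [h1, h2]
  refine (Finset.sum_mul_sq_le_sq_mul_sq _ _ _).trans ?_
  refine mul_le_mul_of_nonneg_right ?_ (Finset.sum_nonneg fun _ _ => sq_nonneg _)
  calc ∑ p : Fin N × Fin N, A p.1 p.2 ^ 2 ≤ ∑ p : Fin N × Fin N, M ^ 2 :=
        Finset.sum_le_sum fun p _ => sq_le_sq' (abs_le.1 (hA _ _)).1 (abs_le.1 (hA _ _)).2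
    _ = _ := by simp; ring

/-- squared norm of the projection of `v` orthogonally to `x` -/
noncomputable def spP {N : ℕ} (x v : Fin N → ℝ) : ℝ := v ⬝ᵥ v - (v ⬝ᵥ x) ^ 2 / (x ⬝ᵥ x)

lemma sp_decomp {N : ℕ} (x v : Fin N → ℝ) (hs : 0 < x ⬝ᵥ x) :
    ∃ (t : ℝ) (y : Fin N → ℝ), t = (v ⬝ᵥ x) / (x ⬝ᵥ x) ∧ v = y + t • x ∧ y ⬝ᵥ x = 0 ∧ y ⬝ᵥ y = spP x v := by
  refine ⟨_, v - ((v ⬝ᵥ x) / (x ⬝ᵥ x)) • x, rfl, by simp, ?_, ?_⟩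
  · simp [sub_dotProduct]; field_simp; ring
  · simp only [sub_dotProduct, dotProduct_sub, smul_dotProduct, dotProduct_smul, smul_eq_mul, spP,
      dotProduct_comm x v]
    field_simp; ring

lemma sp_symm {N : ℕ} (A : Matrix (Fin N) (Fin N) ℝ) (hA : Aᵀ = A) (u v : Fin N → ℝ) :
    u ⬝ᵥ (A *ᵥ v) = v ⬝ᵥ (A *ᵥ u) := by
  rw [dotProduct_mulVec, ← mulVec_transpose, hA, dotProduct_comm]

lemma spP_nonneg {N : ℕ} (x v : Fin N → ℝ) (hs : 0 < x ⬝ᵥ x) : 0 ≤ spP x v := by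
  obtain ⟨t, y, -, -, -, h⟩ := sp_decomp x v hs
  rw [← h, dotProduct]; exact Finset.sum_nonneg fun _ _ => mul_self_nonneg _

lemma spP_eq_zero {N : ℕ} (x v : Fin N → ℝ) (hs : 0 < x ⬝ᵥ x) (h0 : spP x v = 0) :
    v = ((v ⬝ᵥ x) / (x ⬝ᵥ x)) • x := by
  obtain ⟨t, y, ht, hv, -, h⟩ := sp_decomp x v hs
  rw [h0, dotProduct_self_eq_zero] at h
  rw [← ht]; simpa [h] using hv

lemma spP_smul {N : ℕ} (x : Fin N → ℝ) (t : ℝ) : spP x (t • x) = 0 := by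
  simp [spP]; field_simp; ring

lemma spP_add {N : ℕ} (x u v : Fin N → ℝ) (hs : 0 < x ⬝ᵥ x) :
    spP x (u + v) ≤ 2 * spP x u + 2 * spP x v := by
  have h := spP_nonneg x (u - v) hs
  have : spP x (u + v) = 2 * spP x u + 2 * spP x v - spP x (u - v) := by
    simp only [spP, add_dotProduct, dotProduct_add, sub_dotProduct, dotProduct_sub]
    field_simp; ring
  linarith

lemma sp_z_sq {N : ℕ} (A : Matrix (Fin N) (Fin N) ℝ) (hA : Aᵀ = A) (M : ℝ)
    (hM : ∀ i j, |A i j| ≤ M) (x v : Fin N → ℝ) (hs : 0 < x ⬝ᵥ x) (hx : x ⬝ᵥ (A *ᵥ x) = 0) :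
    let z := (v ⬝ᵥ (A *ᵥ v)) • x - (2 * (x ⬝ᵥ (A *ᵥ v))) • v
    z ⬝ᵥ (A *ᵥ z) = 0 ∧ z ⬝ᵥ z ≤ 5 * ((N:ℝ) * M) ^ 2 * (spP x v) ^ 2 * (x ⬝ᵥ x) := by
  obtain ⟨t, y, -, hv, hyx, hP⟩ := sp_decomp x v hs
  intro z
  have hz : z = (y ⬝ᵥ (A *ᵥ y)) • x - (2 * (x ⬝ᵥ (A *ᵥ y))) • y := by
    simp only [z, hv, mulVec_add, mulVec_smul, dotProduct_add, add_dotProduct, dotProduct_smul,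
      smul_dotProduct, smul_eq_mul, hx, sp_symm A hA y x]
    module
  constructor
  · rw [hz]
    simp only [mulVec_sub, mulVec_smul, dotProduct_sub, sub_dotProduct, dotProduct_smul,
      smul_dotProduct, smul_eq_mul, hx, sp_symm A hA y x]
    ring
  · have h1 : z ⬝ᵥ z = (y ⬝ᵥ (A *ᵥ y)) ^ 2 * (x ⬝ᵥ x) + 4 * (x ⬝ᵥ (A *ᵥ y)) ^ 2 * (y ⬝ᵥ y) := by
      rw [hz]
      simp only [dotProduct_sub, sub_dotProduct, dotProduct_smul,
        smul_dotProduct, smul_eq_mul, hyx, dotProduct_comm x y]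
      ring
    have h2 := sp_cs A M hM y y
    have h3 := sp_cs A M hM x y
    have h4 : 0 ≤ y ⬝ᵥ y := hP ▸ spP_nonneg x v hs
    rw [h1, ← hP]
    have h5 := mul_le_mul_of_nonneg_right h2 hs.le
    have h6 := mul_le_mul_of_nonneg_right h3 h4
    nlinarith

lemma sp_q_perp {N : ℕ} (A : Matrix (Fin N) (Fin N) ℝ) (hA : Aᵀ = A) (M : ℝ)
    (hM : ∀ i j, |A i j| ≤ M) (x v : Fin N → ℝ) (hs : 0 < x ⬝ᵥ x) (hx : x ⬝ᵥ (A *ᵥ x) = 0)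
    (hl : x ⬝ᵥ (A *ᵥ v) = 0) :
    (v ⬝ᵥ (A *ᵥ v)) ^ 2 ≤ ((N:ℝ) * M) ^ 2 * (spP x v) ^ 2 := by
  obtain ⟨t, y, -, hv, hyx, hP⟩ := sp_decomp x v hs
  have hl' : x ⬝ᵥ (A *ᵥ y) = 0 := by
    simpa [hv, mulVec_add, mulVec_smul, hx] using hl
  have h1 : v ⬝ᵥ (A *ᵥ v) = y ⬝ᵥ (A *ᵥ y) := by
    simp only [hv, mulVec_add, mulVec_smul, dotProduct_add, add_dotProduct, dotProduct_smul,
      smul_dotProduct, smul_eq_mul, hx, sp_symm A hA y x, hl']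
    ring
  rw [h1, ← hP, sq (y ⬝ᵥ y)]
  exact sp_cs A M hM y y

lemma sp_ortho {N : ℕ} (hN : 2 ≤ N) (x w : Fin N → ℝ) (hx : 0 < x ⬝ᵥ x) (hw : w ≠ 0) (hxw : w ⬝ᵥ x = 0) :
    ∃ Q : Matrix (Fin N) (Fin N) ℝ, Q * Qᵀ = 1 ∧
      (∀ v : Fin N → ℝ, (Q *ᵥ v) ⟨0, Nat.lt_of_lt_of_le Nat.zero_lt_two hN⟩ ^ 2 = (v ⬝ᵥ x) ^ 2 / (x ⬝ᵥ x)) ∧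
      (∀ v : Fin N → ℝ, w ⬝ᵥ v = 0 → (Q *ᵥ v) ⟨1, Nat.lt_of_lt_of_le Nat.one_lt_two hN⟩ = 0) := by
  set i0 : Fin N := ⟨0, Nat.lt_of_lt_of_le Nat.zero_lt_two hN⟩
  set i1 : Fin N := ⟨1, Nat.lt_of_lt_of_le Nat.one_lt_two hN⟩
  have h01 : i1 ≠ i0 := by simp [i0, i1, Fin.ext_iff]
  have hww : 0 < w ⬝ᵥ w := by
    rcases (dotProduct_self_star_nonneg (v := w)).lt_or_eq with h | h
    · simpa using h
    · exact absurd (by simpa using h.symm) hw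
  let e : Fin N → EuclideanSpace ℝ (Fin N) := fun i =>
    if i = i0 then WithLp.toLp 2 ((Real.sqrt (x ⬝ᵥ x))⁻¹ • x) else WithLp.toLp 2 ((Real.sqrt (w ⬝ᵥ w))⁻¹ • w)
  have hsx := Real.mul_self_sqrt hx.le
  have hsw := Real.mul_self_sqrt hww.le
  have hx0 := Real.sqrt_pos.2 hx
  have hw0 := Real.sqrt_pos.2 hww
  have inn : ∀ a b : Fin N → ℝ, inner ℝ (WithLp.toLp 2 a : EuclideanSpace ℝ (Fin N)) (WithLp.toLp 2 b) = a ⬝ᵥ b := by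
    intro a b
    rw [EuclideanSpace.inner_toLp_toLp, dotProduct_comm]; simp
  have he0 : e i0 = WithLp.toLp 2 ((Real.sqrt (x ⬝ᵥ x))⁻¹ • x) := if_pos rfl
  have he1 : e i1 = WithLp.toLp 2 ((Real.sqrt (w ⬝ᵥ w))⁻¹ • w) := if_neg h01
  have ho : Orthonormal ℝ (({i0, i1} : Set (Fin N)).domRestrict e) := by
    rw [orthonormal_iff_ite]
    rintro ⟨i, hi⟩ ⟨j, hj⟩
    simp only [Subtype.mk.injEq]
    change inner ℝ (e i) (e j) = _
    simp only [Set.mem_insert_iff, Set.mem_singleton_iff] at hi hj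
    rcases hi with rfl | rfl <;> rcases hj with rfl | rfl
    · rw [he0, inn, if_pos rfl, smul_dotProduct, dotProduct_smul, smul_eq_mul, smul_eq_mul]
      nth_rewrite 3 [← hsx]
      field_simp
    · rw [he0, he1, inn, if_neg h01.symm, smul_dotProduct, dotProduct_smul, dotProduct_comm x w, hxw]
      simp
    · rw [he0, he1, inn, if_neg h01, smul_dotProduct, dotProduct_smul, hxw]
      simp
    · rw [he1, inn, if_pos rfl, smul_dotProduct, dotProduct_smul, smul_eq_mul, smul_eq_mul]
      nth_rewrite 3 [← hsw]
      field_simp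
  obtain ⟨b, hb⟩ := ho.exists_orthonormalBasis_extension_of_card_eq (by simp)
  have hQ : ∀ i j, inner ℝ (b i) (b j) = if i = j then (1:ℝ) else 0 := orthonormal_iff_ite.1 b.orthonormal
  refine ⟨Matrix.of fun i j => b i j, ?_, ?_, ?_⟩
  · ext i j
    rw [Matrix.one_apply, ← hQ i j]
    exact (inn _ _).symm
  · intro v
    have : (Matrix.of fun i j => b i j) *ᵥ v = fun i => (b i).ofLp ⬝ᵥ v := rfl
    rw [this]
    simp only [hb i0 (by simp), e, if_true, smul_dotProduct, smul_eq_mul, dotProduct_comm x v, mul_pow]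
    rw [inv_pow, Real.sq_sqrt hx.le]; field_simp
  · intro v hv
    have : (Matrix.of fun i j => b i j) *ᵥ v = fun i => (b i).ofLp ⬝ᵥ v := rfl
    rw [this]
    simp only [hb i1 (by simp), e, if_neg h01, smul_dotProduct, smul_eq_mul, hv, mul_zero]

lemma sp_mink {N : ℕ} (A : Matrix (Fin N) (Fin N) ℝ) (hA : A.det ≠ 0) (t : Fin N → ℝ)
    (ht : ∀ i, 0 < t i) (h : |A.det| < ∏ i, t i) :
    ∃ c : Fin N → ℤ, c ≠ 0 ∧ ∀ i, |(A *ᵥ (fun j => (c j : ℝ))) i| < t i := by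
  classical
  let L := (Submodule.span ℤ (Set.range (Pi.basisFun ℝ (Fin N)))).toAddSubgroup
  let K : Set (Fin N → ℝ) := (Matrix.toLin' A) ⁻¹' (Set.pi Set.univ fun i => Set.Ioo (-t i) (t i))
  have hfund := ZSpan.isAddFundamentalDomain (Pi.basisFun ℝ (Fin N)) MeasureTheory.volume
  have hvol : MeasureTheory.volume (ZSpan.fundamentalDomain (Pi.basisFun ℝ (Fin N))) = 1 := by
    rw [ZSpan.fundamentalDomain_pi_basisFun]; simp [Real.volume_pi_Ico]
  have hK : MeasureTheory.volume K = ENNReal.ofReal (|A.det|⁻¹ * ∏ i, (2 * t i)) := by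
    rw [MeasureTheory.Measure.addHaar_preimage_linearMap _ (by simpa using hA), Real.volume_pi_Ioo]
    rw [← ENNReal.ofReal_prod_of_nonneg (fun i _ => by linarith [ht i]), ← ENNReal.ofReal_mul (abs_nonneg _)]
    simp [abs_inv, two_mul]
  have : Countable L := by
    change Countable (Submodule.span ℤ (Set.range (Pi.basisFun ℝ (Fin N))))
    infer_instance
  have hpos : 0 < |A.det| := abs_pos.2 hA
  obtain ⟨x, hx0, hx⟩ := MeasureTheory.exists_ne_zero_mem_lattice_of_measure_mul_two_pow_lt_measure
    (L := L) (F := ZSpan.fundamentalDomain (Pi.basisFun ℝ (Fin N))) (μ := MeasureTheory.volume) (s := K) hfund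
    (by
      intro x hx
      simp only [K, Set.mem_preimage, Set.mem_pi, map_neg, Set.mem_univ, true_imp_iff, Set.mem_Ioo, Pi.neg_apply] at hx ⊢
      exact fun i => ⟨by linarith [(hx i).2], by linarith [(hx i).1]⟩)
    ((convex_pi fun i _ => convex_Ioo _ _).linear_preimage _)
    (by
      rw [hvol, hK]
      have : (2:ENNReal) ^ Module.finrank ℝ (Fin N → ℝ) = ENNReal.ofReal (2 ^ N) := by
        rw [ENNReal.ofReal_pow (by norm_num)]; simp
      rw [one_mul, this, ENNReal.ofReal_lt_ofReal_iff_of_nonneg (by positivity), Finset.prod_mul_distrib]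
      simp only [Finset.prod_const, Finset.card_univ, Fintype.card_fin]
      rw [inv_mul_eq_div, lt_div_iff₀ hpos]
      exact mul_lt_mul_of_pos_left h (by positivity))
  have hxm : (x : Fin N → ℝ) ∈ Submodule.span ℤ (Set.range (Pi.basisFun ℝ (Fin N))) := x.2
  rw [(Pi.basisFun ℝ (Fin N)).mem_span_iff_repr_mem ℤ] at hxm
  choose c hc using hxm
  have hc' : (fun j => (c j : ℝ)) = (x : Fin N → ℝ) := by
    funext j; simpa using hc j
  refine ⟨c, ?_, ?_⟩
  · rintro rfl
    apply hx0
    ext j; rw [← hc']; simp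
  · intro i
    rw [hc']
    have := hx
    simp only [K, Set.mem_preimage, Set.mem_pi, Set.mem_univ, true_imp_iff, Set.mem_Ioo, Matrix.toLin'_apply] at this
    exact abs_lt.2 (this i)

/-- cast of an integer vector to a real vector, as a linear map -/
def spc (N : ℕ) : (Fin N → ℤ) →ₗ[ℤ] (Fin N → ℝ) where
  toFun v := fun j => (v j : ℝ)
  map_add' u v := by ext; simp
  map_smul' a v := by ext; simp

lemma spc_apply {N : ℕ} (v : Fin N → ℤ) (j : Fin N) : spc N v j = (v j : ℝ) := rfl

lemma spc_inj {N : ℕ} : Function.Injective (spc N) := by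
  intro u v h
  ext j
  have := congrFun h j
  simpa [spc_apply] using this

lemma spc_smul {N : ℕ} (a : ℤ) (v : Fin N → ℤ) : spc N (a • v) = (a : ℝ) • spc N v := by
  ext; simp [spc_apply]

lemma spc_q {N : ℕ} (f : Matrix (Fin N) (Fin N) ℤ) (u v : Fin N → ℤ) :
    ((u ⬝ᵥ (f *ᵥ v) : ℤ) : ℝ) = spc N u ⬝ᵥ ((f.map (Int.cast : ℤ → ℝ)) *ᵥ spc N v) := by
  simp [dotProduct, mulVec, spc_apply]

lemma spc_dot {N : ℕ} (u v : Fin N → ℤ) :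
    ((u ⬝ᵥ v : ℤ) : ℝ) = spc N u ⬝ᵥ spc N v := by
  simp [dotProduct, spc_apply]

lemma sp_family {N : ℕ} (hN : 2 ≤ N) (x : Fin N → ℤ) (hx : x ≠ 0) (Z : Set (Fin N → ℤ))
    (h : ∀ w : Fin N → ℝ, w ≠ 0 → w ⬝ᵥ spc N x = 0 → ∃ z ∈ Z, w ⬝ᵥ spc N z ≠ 0) :
    ∃ g : Fin N → (Fin N → ℤ), LinearIndependent ℤ g ∧ g ⟨0, Nat.lt_of_lt_of_le Nat.zero_lt_two hN⟩ = x ∧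
      ∀ k, k ≠ ⟨0, Nat.lt_of_lt_of_le Nat.zero_lt_two hN⟩ → g k ∈ Z := by
  classical
  have hs : LinearIndepOn ℝ (spc N) {x} := by
    rw [linearIndepOn_singleton_iff]
    exact fun h0 => hx (spc_inj (h0.trans (map_zero _).symm))
  obtain ⟨b, hbt, hsb, hspan, hli⟩ := exists_linearIndepOn_extension hs
    (t := insert x Z) (by simp)
  have htop : Submodule.span ℝ (spc N '' b) = ⊤ := by
    by_contra hne
    obtain ⟨φ, hφ, hle⟩ := Submodule.exists_le_ker_of_lt_top _ (lt_top_iff_ne_top.2 hne)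
    have hφw : ∀ v, φ v = (fun i => φ (Pi.single i 1)) ⬝ᵥ v := by
      intro v
      rw [LinearMap.pi_apply_eq_sum_univ φ v]
      simp only [dotProduct, smul_eq_mul]
      refine Finset.sum_congr rfl fun i _ => ?_
      rw [mul_comm]
      congr 2
      ext j; simp [Pi.single_apply, eq_comm]
    have hker : ∀ u ∈ insert x Z, φ (spc N u) = 0 := fun u hu =>
      hle (hspan (Set.mem_image_of_mem _ hu))
    obtain ⟨z, hz, hwz⟩ := h (fun i => φ (Pi.single i 1))
      (by
        intro h0
        apply hφ
        ext v
        simp only [LinearMap.coe_comp, Function.comp_apply, LinearMap.zero_apply]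
        have := congrFun h0 v
        simpa using this)
      (by rw [← hφw]; exact hker x (by simp))
    exact hwz (by rw [← hφw]; exact hker z (by simp [hz]))
  have hli' : LinearIndependent ℝ (fun i : b => spc N i) := hli
  let bs : Module.Basis b ℝ (Fin N → ℝ) := Module.Basis.mk hli' (by
    rw [← htop, Set.image_eq_range])
  have hfin : Finite b := Module.Finite.finite_basis bs
  have hcard : Nat.card b = N := by
    rw [← Module.finrank_eq_nat_card_basis bs]; simp
  let e : Fin N ≃ b := (Finite.equivFinOfCardEq hcard).symm
  let x' : b := ⟨x, hsb rfl⟩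
  let i0 : Fin N := ⟨0, Nat.lt_of_lt_of_le Nat.zero_lt_two hN⟩
  let e' : Fin N ≃ b := (Equiv.swap i0 (e.symm x')).trans e
  have he' : e' i0 = x' := by simp [e']
  refine ⟨fun k => (e' k : Fin N → ℤ), ?_, ?_, ?_⟩
  · have h1 : LinearIndependent ℝ (fun k => spc N (e' k)) := hli'.comp e' e'.injective
    have h2 : LinearIndependent ℤ (fun k => spc N (e' k)) :=
      h1.restrict_scalars (by intro a b hab; simpa using hab)
    exact LinearIndependent.of_comp (spc N) h2
  · change ((e' i0 : b) : Fin N → ℤ) = x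
    rw [he']
  · intro k hk
    rcases hbt (e' k).2 with h1 | h1
    · exfalso
      apply hk
      apply e'.injective
      change e' k = e' i0
      rw [he']
      exact Subtype.ext h1
    · exact h1

lemma sp_lower {N : ℕ} (hN : 2 ≤ N) (f : Matrix (Fin N) (Fin N) ℤ) (hf : fᵀ = f) (M : ℝ) (hM1 : 1 ≤ M)
    (hM : ∀ i j, |(f.map (Int.cast : ℤ → ℝ)) i j| ≤ M) (L : Submodule ℤ (Fin N → ℤ))
    (x : Fin N → ℤ) (hxL : x ∈ L) (hx0 : x ≠ 0) (hx : x ⬝ᵥ (f *ᵥ x) = 0)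
    (hmin : ∀ v ∈ L, v ≠ 0 → v ⬝ᵥ (f *ᵥ v) = 0 → x ⬝ᵥ x ≤ v ⬝ᵥ v)
    (v : Fin N → ℤ) (hv : v ∈ L) (hP : spP (spc N x) (spc N v) ≠ 0) :
    1 ≤ 3 * N * M * spP (spc N x) (spc N v) := by
  set A := f.map (Int.cast : ℤ → ℝ) with hA
  have hAt : Aᵀ = A := by rw [hA, ← Matrix.transpose_map, hf]
  have hs1 : 1 ≤ x ⬝ᵥ x := by
    have : 0 ≤ x ⬝ᵥ x := Finset.sum_nonneg fun _ _ => mul_self_nonneg _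
    have h2 : x ⬝ᵥ x ≠ 0 := by simpa using hx0
    omega
  have hsR : (1:ℝ) ≤ spc N x ⬝ᵥ spc N x := by rw [← spc_dot]; exact_mod_cast hs1
  have hs : 0 < spc N x ⬝ᵥ spc N x := by linarith
  have hxR : spc N x ⬝ᵥ (A *ᵥ spc N x) = 0 := by rw [← spc_q, hx]; simp
  have hP0 := spP_nonneg (spc N x) (spc N v) hs
  have hN' : (2:ℝ) ≤ N := by exact_mod_cast hN
  have key : ∀ a c : ℤ, c ≠ 0 → a • x - c • v ≠ 0 := by
    intro a c hc h0
    apply hP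
    have h1 := congrArg (spc N) h0
    rw [map_sub, map_zero, spc_smul, spc_smul, sub_eq_zero] at h1
    have hc' : (c:ℝ) ≠ 0 := by exact_mod_cast hc
    have h2 : spc N v = ((c:ℝ)⁻¹ * a) • spc N x := by
      rw [mul_smul, h1, smul_smul, inv_mul_cancel₀ hc', one_smul]
    rw [h2, spP_smul]
  set P := spP (spc N x) (spc N v) with hPd
  have hNM : 2 ≤ (N:ℝ) * M := by nlinarith
  by_cases hl : x ⬝ᵥ (f *ᵥ v) = 0
  · have hlR : spc N x ⬝ᵥ (A *ᵥ spc N v) = 0 := by rw [← spc_q, hl]; simp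
    by_cases hq : v ⬝ᵥ (f *ᵥ v) = 0
    · obtain ⟨t, y, ht, hvy, hyx, hyP⟩ := sp_decomp (spc N x) (spc N v) hs
      have hvk : ∀ k : ℤ, x ⬝ᵥ x ≤ (v - k • x) ⬝ᵥ (v - k • x) := by
        intro k
        refine hmin _ (L.sub_mem hv (L.smul_mem _ hxL)) ?_ ?_
        · have := key k 1 one_ne_zero
          intro h0; apply this; rw [one_smul, ← neg_sub, h0, neg_zero]
        · have h3 : v ⬝ᵥ (f *ᵥ x) = x ⬝ᵥ (f *ᵥ v) := by
            rw [dotProduct_mulVec, ← mulVec_transpose, hf, dotProduct_comm]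
          simp only [mulVec_sub, mulVec_smul, sub_dotProduct, dotProduct_sub, smul_dotProduct, dotProduct_smul,
            hx, hl, hq, h3, smul_zero, sub_zero]
      have h4 := hvk (round t)
      have h5 : spc N x ⬝ᵥ spc N x ≤ spc N (v - round t • x) ⬝ᵥ spc N (v - round t • x) := by
        rw [← spc_dot, ← spc_dot]; exact_mod_cast h4
      have h6 : spc N (v - round t • x) = y + (t - round t) • spc N x := by
        rw [map_sub, spc_smul, hvy]; module
      have h7 : (t - round t) ^ 2 ≤ 1/4 := by
        have := abs_le.1 (abs_sub_round t)
        nlinarith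
      rw [h6] at h5
      simp only [add_dotProduct, dotProduct_add, smul_dotProduct, dotProduct_smul, smul_eq_mul, hyx,
        dotProduct_comm (spc N x) y, hyP] at h5
      have h8 : 3/4 ≤ P := by nlinarith
      nlinarith
    · have h1 := sp_q_perp A hAt M hM (spc N x) (spc N v) hs hxR hlR
      rw [← spc_q] at h1
      have h2 : (1:ℝ) ≤ ((v ⬝ᵥ (f *ᵥ v) : ℤ) : ℝ) ^ 2 := by
        have : 1 ≤ (v ⬝ᵥ (f *ᵥ v)) ^ 2 := by
          have := sq_nonneg (v ⬝ᵥ (f *ᵥ v)); have := pow_ne_zero 2 hq; omega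
        exact_mod_cast this
      have h3 : 1 ≤ (N * M * P) ^ 2 := by rw [mul_pow]; linarith
      have h4 : 0 ≤ N * M * P := by positivity
      nlinarith
  · obtain ⟨h1, h2⟩ := sp_z_sq A hAt M hM (spc N x) (spc N v) hs hxR
    set z : Fin N → ℤ := (v ⬝ᵥ (f *ᵥ v)) • x - (2 * (x ⬝ᵥ (f *ᵥ v))) • v with hz
    have hzc : spc N z = (spc N v ⬝ᵥ (A *ᵥ spc N v)) • spc N x - (2 * (spc N x ⬝ᵥ (A *ᵥ spc N v))) • spc N v := by
      rw [hz, map_sub, spc_smul, spc_smul, Int.cast_mul, spc_q, spc_q]; simp [hA]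
    rw [← hzc] at h1 h2
    have h3 := hmin z (L.sub_mem (L.smul_mem _ hxL) (L.smul_mem _ hv)) (key _ _ (by simpa using hl))
      (by rw [← spc_q] at h1; exact_mod_cast h1)
    have h4 : spc N x ⬝ᵥ spc N x ≤ spc N z ⬝ᵥ spc N z := by
      rw [← spc_dot, ← spc_dot]; exact_mod_cast h3
    have h5 : 1 * (spc N x ⬝ᵥ spc N x) ≤ (5 * (N * M * P) ^ 2) * (spc N x ⬝ᵥ spc N x) := by
      rw [mul_pow]; linarith
    have h6 := le_of_mul_le_mul_right h5 hs
    have h4 : 0 ≤ N * M * P := by positivity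
    nlinarith

lemma sp_hyper {N : ℕ} (hN : 2 ≤ N) (f : Matrix (Fin N) (Fin N) ℤ) (hf : fᵀ = f) (M : ℝ) (hM1 : 1 ≤ M)
    (hM : ∀ i j, |(f.map (Int.cast : ℤ → ℝ)) i j| ≤ M) (B : Matrix (Fin N) (Fin N) ℤ) (hB : B.det ≠ 0)
    (x : Fin N → ℤ) (hxL : x ∈ LinearMap.range B.vecMulLinear) (hx0 : x ≠ 0) (hx : x ⬝ᵥ (f *ᵥ x) = 0)
    (hmin : ∀ v ∈ LinearMap.range B.vecMulLinear, v ≠ 0 → v ⬝ᵥ (f *ᵥ v) = 0 → x ⬝ᵥ x ≤ v ⬝ᵥ v)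
    (w : Fin N → ℝ) (hw : w ≠ 0) :
    ∃ y ∈ LinearMap.range B.vecMulLinear, w ⬝ᵥ spc N y ≠ 0 ∧
      (spc N x ⬝ᵥ spc N x) * spP (spc N x) (spc N y) ≤
        4 * N * (3 * N ^ 2 * M) ^ (N - 2) * (B.det : ℝ) ^ 2 := by
  by_cases hwx : w ⬝ᵥ spc N x = 0
  swap
  · refine ⟨x, hxL, hwx, ?_⟩
    have := spP_smul (spc N x) 1
    rw [one_smul] at this
    rw [this, mul_zero]; positivity
  have hs1 : 1 ≤ x ⬝ᵥ x := by
    have : 0 ≤ x ⬝ᵥ x := Finset.sum_nonneg fun _ _ => mul_self_nonneg _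
    have h2 : x ⬝ᵥ x ≠ 0 := by simpa using hx0
    omega
  have hsR : (1:ℝ) ≤ spc N x ⬝ᵥ spc N x := by rw [← spc_dot]; exact_mod_cast hs1
  set s := spc N x ⬝ᵥ spc N x with hsd
  have hs : 0 < s := by linarith
  have hN' : (2:ℝ) ≤ N := by exact_mod_cast hN
  by_contra! hcon
  obtain ⟨Q, hQ, hQ0, hQ1⟩ := sp_ortho hN (spc N x) w hs hw hwx
  set i0 : Fin N := ⟨0, Nat.lt_of_lt_of_le Nat.zero_lt_two hN⟩
  set i1 : Fin N := ⟨1, Nat.lt_of_lt_of_le Nat.one_lt_two hN⟩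
  have h01 : i1 ≠ i0 := by simp [i0, i1, Fin.ext_iff]
  have hdQ : |Q.det| = 1 := by
    have := congrArg Matrix.det hQ
    rw [det_mul, det_transpose, det_one, ← sq] at this
    rw [← pow_eq_one_iff_of_nonneg (abs_nonneg _) two_ne_zero, sq_abs, this]
  set D : ℝ := |(B.det : ℝ)| with hD
  have hD0 : 0 < D := by rw [hD, abs_pos]; exact_mod_cast hB
  set E : ℝ := 3 * N ^ 2 * M with hE
  have hE0 : 0 < E := by positivity
  set μ : ℝ := (Real.sqrt E)⁻¹ with hμ
  have hμ0 : 0 < μ := by positivity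
  have hμ2 : μ ^ 2 = E⁻¹ := by rw [hμ, inv_pow, Real.sq_sqrt hE0.le]
  have hrs : 0 < Real.sqrt s := Real.sqrt_pos.2 hs
  set t1 : ℝ := 2 * D / (Real.sqrt s * μ ^ (N - 2)) with ht1
  have ht10 : 0 < t1 := by positivity
  have hst1 : s * t1 ^ 2 = 4 * E ^ (N - 2) * D ^ 2 := by
    rw [ht1, div_pow, mul_pow (Real.sqrt s), Real.sq_sqrt hs.le, ← pow_mul, mul_comm (N-2) 2, pow_mul, hμ2, inv_pow]
    field_simp; ring
  let t : Fin N → ℝ := fun i => if i = i0 then Real.sqrt s else if i = i1 then t1 else μ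
  have hprod : ∏ i, t i = 2 * D := by
    rw [← Finset.mul_prod_erase _ _ (Finset.mem_univ i0),
      ← Finset.mul_prod_erase _ _ (Finset.mem_erase.2 ⟨h01, Finset.mem_univ i1⟩)]
    rw [Finset.prod_congr (g := fun _ => μ) rfl]
    · simp only [Finset.prod_const]
      rw [Finset.card_erase_of_mem (Finset.mem_erase.2 ⟨h01, Finset.mem_univ i1⟩),
        Finset.card_erase_of_mem (Finset.mem_univ i0)]
      simp only [t, if_true, if_neg h01, Finset.card_univ, Fintype.card_fin]
      rw [ht1, Nat.sub_sub]; field_simp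
    · intro i hi
      simp only [Finset.mem_erase] at hi
      simp [t, hi.1, hi.2.1]
  set BR : Matrix (Fin N) (Fin N) ℝ := B.map (Int.cast : ℤ → ℝ) with hBR
  have hdB : BR.det = (B.det : ℝ) := by
    rw [hBR]; exact (Int.cast_det B).symm
  have hdet : |(Q * BRᵀ).det| = D := by
    rw [det_mul, det_transpose, abs_mul, hdQ, hdB, one_mul]
  obtain ⟨c, hc0, hc⟩ := sp_mink (Q * BRᵀ) (by rw [← abs_pos, hdet]; exact hD0) t
    (by intro i; simp only [t]; split_ifs <;> assumption) (by rw [hdet, hprod]; linarith)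
  set v : Fin N → ℤ := c ᵥ* B with hv
  have hvL : v ∈ LinearMap.range B.vecMulLinear := ⟨c, rfl⟩
  have hv0 : v ≠ 0 := by
    intro h0
    exact hc0 (Matrix.eq_zero_of_vecMul_eq_zero hB h0)
  have hcv : (Q * BRᵀ) *ᵥ (fun j => (c j : ℝ)) = Q *ᵥ spc N v := by
    rw [← mulVec_mulVec, mulVec_transpose]
    congr 1
    ext j
    simp [spc_apply, hv, vecMul, dotProduct, hBR]
  rw [hcv] at hc
  have hnorm : spc N v ⬝ᵥ spc N v = ∑ i, (Q *ᵥ spc N v) i ^ 2 := by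
    have h1 : (Q *ᵥ spc N v) ⬝ᵥ (Q *ᵥ spc N v) = spc N v ⬝ᵥ spc N v := by
      rw [dotProduct_mulVec, ← mulVec_transpose, mulVec_mulVec, mul_eq_one_comm.1 hQ, one_mulVec]
    rw [← h1]; simp [dotProduct, sq]
  have hP : spP (spc N x) (spc N v) = ∑ i ∈ Finset.univ.erase i0, (Q *ᵥ spc N v) i ^ 2 := by
    rw [spP, hnorm, ← Finset.add_sum_erase _ _ (Finset.mem_univ i0), hQ0]; ring
  have hcard : ((Finset.univ.erase i0).card : ℝ) + 1 = N := by
    rw [Finset.card_erase_of_mem (Finset.mem_univ i0), Finset.card_univ, Fintype.card_fin]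
    have : N - 1 + 1 = N := by omega
    exact_mod_cast this
  have hsum : ∀ τ : ℝ, (∀ i ∈ Finset.univ.erase i0, |(Q *ᵥ spc N v) i| ≤ τ) → 0 < τ →
      spP (spc N x) (spc N v) < N * τ ^ 2 := by
    intro τ hτ hτ0
    rw [hP]
    calc _ ≤ ∑ i ∈ Finset.univ.erase i0, τ ^ 2 := Finset.sum_le_sum fun i hi =>
          sq_le_sq' (abs_le.1 (hτ i hi)).1 (abs_le.1 (hτ i hi)).2
      _ = (Finset.univ.erase i0).card * τ ^ 2 := by simp
      _ < N * τ ^ 2 := by rw [← hcard]; nlinarith [sq_pos_of_pos hτ0]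
  have hfin : ¬ (∀ i ∈ Finset.univ.erase i0, |(Q *ᵥ spc N v) i| ≤ μ) := by
    intro hall
    have h1 := hsum μ hall hμ0
    rw [hμ2] at h1
    by_cases hP0 : spP (spc N x) (spc N v) = 0
    · have h2 := spP_eq_zero _ _ hs hP0
      have hxR : spc N x ⬝ᵥ (f.map (Int.cast : ℤ → ℝ) *ᵥ spc N x) = 0 := by rw [← spc_q, hx]; simp
      have h3 := hmin v hvL hv0 (by
        have : ((v ⬝ᵥ (f *ᵥ v) : ℤ) : ℝ) = 0 := by
          rw [spc_q, h2]; simp only [mulVec_smul, dotProduct_smul, smul_dotProduct, hxR, smul_zero]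
        exact_mod_cast this)
      have h4 : s ≤ spc N v ⬝ᵥ spc N v := by
        rw [hsd, ← spc_dot, ← spc_dot]; exact_mod_cast h3
      have h5 : spc N v ⬝ᵥ spc N v = (Q *ᵥ spc N v) i0 ^ 2 := by
        rw [hQ0]; rw [spP] at hP0; linarith
      have h6 := hc i0
      simp only [t, if_true] at h6
      have h7 : (Q *ᵥ spc N v) i0 ^ 2 < s := by
        rw [← Real.sq_sqrt hs.le]
        exact sq_lt_sq.2 (by rwa [abs_of_pos hrs])
      linarith
    · have h2 := sp_lower hN f hf M hM1 hM _ x hxL hx0 hx hmin v hvL hP0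
      have h3 : 3 * N * M * spP (spc N x) (spc N v) < 3 * N * M * (N * E⁻¹) :=
        mul_lt_mul_of_pos_left h1 (by positivity)
      have h4 : 3 * N * M * (N * E⁻¹) = 1 := by rw [hE]; field_simp
      linarith
  have hi : ∀ i ∈ Finset.univ.erase i0, i ≠ i1 → |(Q *ᵥ spc N v) i| ≤ μ := by
    intro i hi0 hi1
    have := hc i
    simp only [Finset.mem_erase] at hi0
    simp only [t, if_neg hi0.1, if_neg hi1] at this
    exact this.le
  have hi1 : |(Q *ᵥ spc N v) i1| < t1 := by
    have := hc i1
    simpa only [t, if_neg h01, if_true] using this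
  rcases le_total t1 μ with hle | hle
  · apply hfin
    intro i hi0
    by_cases h : i = i1
    · rw [h]; linarith
    · exact hi i hi0 h
  · have h1 := hsum t1 (by
      intro i hi0
      by_cases h : i = i1
      · rw [h]; linarith
      · exact (hi i hi0 h).trans hle) ht10
    have hwv : w ⬝ᵥ spc N v = 0 := by
      by_contra hne
      have h2 := hcon v hvL hne
      have h3 : s * spP (spc N x) (spc N v) < s * (N * t1 ^ 2) := mul_lt_mul_of_pos_left h1 hs
      have h4 : D ^ 2 = (B.det : ℝ) ^ 2 := by rw [hD, sq_abs]
      rw [← h4] at h2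
      have h5 : s * (N * t1 ^ 2) = N * (4 * E ^ (N - 2) * D ^ 2) := by rw [← hst1]; ring
      linarith
    apply hfin
    intro i hi0
    by_cases h : i = i1
    · rw [h, hQ1 _ hwv]; simpa using hμ0.le
    · exact hi i hi0 h

lemma sp_zero {N : ℕ} (hN : 2 ≤ N) (f : Matrix (Fin N) (Fin N) ℤ) (hf : fᵀ = f) (hfd : f.det ≠ 0)
    (M : ℝ) (hM1 : 1 ≤ M)
    (hM : ∀ i j, |(f.map (Int.cast : ℤ → ℝ)) i j| ≤ M) (B : Matrix (Fin N) (Fin N) ℤ) (hB : B.det ≠ 0)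
    (x : Fin N → ℤ) (hxL : x ∈ LinearMap.range B.vecMulLinear) (hx0 : x ≠ 0) (hx : x ⬝ᵥ (f *ᵥ x) = 0)
    (hmin : ∀ v ∈ LinearMap.range B.vecMulLinear, v ≠ 0 → v ⬝ᵥ (f *ᵥ v) = 0 → x ⬝ᵥ x ≤ v ⬝ᵥ v)
    (w : Fin N → ℝ) (hw : w ≠ 0) (hwx : w ⬝ᵥ spc N x = 0) :
    ∃ z, (z ∈ LinearMap.range B.vecMulLinear ∧ z ⬝ᵥ (f *ᵥ z) = 0 ∧
      (spc N x ⬝ᵥ spc N x) * (spc N z ⬝ᵥ spc N z) ≤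
        (36 * N ^ 2 * (3 * N ^ 2) ^ (N - 2) * M ^ (N - 1) * (B.det : ℝ) ^ 2) ^ 2) ∧
      w ⬝ᵥ spc N z ≠ 0 := by
  set A := f.map (Int.cast : ℤ → ℝ) with hA
  have hAt : Aᵀ = A := by rw [hA, ← Matrix.transpose_map, hf]
  have hs : 0 < spc N x ⬝ᵥ spc N x := by
    rw [← spc_dot]
    have : 0 ≤ x ⬝ᵥ x := Finset.sum_nonneg fun _ _ => mul_self_nonneg _
    have h2 : x ⬝ᵥ x ≠ 0 := by simpa using hx0
    have : 0 < x ⬝ᵥ x := by omega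
    exact_mod_cast this
  have hxR : spc N x ⬝ᵥ (A *ᵥ spc N x) = 0 := by rw [← spc_q, hx]; simp
  have hl0 : A *ᵥ spc N x ≠ 0 := by
    intro h0
    have h1 : f *ᵥ x = 0 := by
      apply spc_inj
      rw [map_zero, ← h0]
      ext i
      simp [spc_apply, mulVec, dotProduct, hA]
    exact hx0 (Matrix.eq_zero_of_mulVec_eq_zero hfd h1)
  set G : ℝ := 4 * N * (3 * N ^ 2 * M) ^ (N - 2) * (B.det : ℝ) ^ 2 with hG
  have hG0 : 0 ≤ G := by positivity
  obtain ⟨y0, hy0L, hy0, hy0P⟩ := sp_hyper hN f hf M hM1 hM B hB x hxL hx0 hx hmin _ hl0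
  obtain ⟨y1, hy1L, hy1, hy1P⟩ := sp_hyper hN f hf M hM1 hM B hB x hxL hx0 hx hmin w hw
  set s := spc N x ⬝ᵥ spc N x with hsd
  obtain ⟨y, hyL, hyl, hyw, hyP⟩ : ∃ y ∈ LinearMap.range B.vecMulLinear, (A *ᵥ spc N x) ⬝ᵥ spc N y ≠ 0 ∧
      w ⬝ᵥ spc N y ≠ 0 ∧ s * spP (spc N x) (spc N y) ≤ 4 * G := by
    by_cases h1 : (A *ᵥ spc N x) ⬝ᵥ spc N y1 = 0
    · by_cases h2 : w ⬝ᵥ spc N y0 = 0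
      · refine ⟨y0 + y1, add_mem hy0L hy1L, ?_, ?_, ?_⟩
        · simpa [h1] using hy0
        · simpa [h2] using hy1
        · have := mul_le_mul_of_nonneg_left (spP_add (spc N x) (spc N y0) (spc N y1) hs) hs.le
          rw [map_add]
          linarith
      · exact ⟨y0, hy0L, hy0, h2, by linarith⟩
    · exact ⟨y1, hy1L, h1, hy1, by linarith⟩
  have hyl' : spc N x ⬝ᵥ (A *ᵥ spc N y) ≠ 0 := by
    rwa [sp_symm A hAt, dotProduct_comm]
  obtain ⟨h1, h2⟩ := sp_z_sq A hAt M hM (spc N x) (spc N y) hs hxR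
  set z : Fin N → ℤ := (y ⬝ᵥ (f *ᵥ y)) • x - (2 * (x ⬝ᵥ (f *ᵥ y))) • y with hz
  have hzc : spc N z = (spc N y ⬝ᵥ (A *ᵥ spc N y)) • spc N x - (2 * (spc N x ⬝ᵥ (A *ᵥ spc N y))) • spc N y := by
    rw [hz, map_sub, spc_smul, spc_smul, Int.cast_mul, spc_q, spc_q]; simp [hA]
  rw [← hzc] at h1 h2
  refine ⟨z, ⟨sub_mem (Submodule.smul_mem _ _ hxL) (Submodule.smul_mem _ _ hyL), ?_, ?_⟩, ?_⟩
  · rw [← spc_q] at h1; exact_mod_cast h1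
  · have hPn := spP_nonneg (spc N x) (spc N y) hs
    set P := spP (spc N x) (spc N y)
    have h3 : (s * P) ^ 2 ≤ (4 * G) ^ 2 := pow_le_pow_left₀ (by positivity) hyP 2
    have hMM : M ^ (N - 1) = M * M ^ (N - 2) := by
      rw [← pow_succ']; congr 1; omega
    calc s * (spc N z ⬝ᵥ spc N z) ≤ s * (5 * ((N:ℝ) * M) ^ 2 * P ^ 2 * s) :=
          mul_le_mul_of_nonneg_left h2 hs.le
      _ = 5 * ((N:ℝ) * M) ^ 2 * (s * P) ^ 2 := by ring
      _ ≤ 5 * ((N:ℝ) * M) ^ 2 * (4 * G) ^ 2 := mul_le_mul_of_nonneg_left h3 (by positivity)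
      _ = 1280 * (N ^ 2 * (3 * N ^ 2) ^ (N - 2) * M ^ (N - 1) * (B.det : ℝ) ^ 2) ^ 2 := by
          rw [hG, hMM, mul_pow (3 * (N:ℝ) ^ 2) M]; ring
      _ ≤ 1296 * (N ^ 2 * (3 * N ^ 2) ^ (N - 2) * M ^ (N - 1) * (B.det : ℝ) ^ 2) ^ 2 :=
          mul_le_mul_of_nonneg_right (by norm_num) (sq_nonneg _)
      _ = _ := by ring
  · rw [hzc, dotProduct_sub, dotProduct_smul, dotProduct_smul, hwx]
    simp [hyl', hyw]

lemma sp_sup {N : ℕ} (x : Fin N → ℤ) : (supNorm x : ℝ) ^ 2 ≤ spc N x ⬝ᵥ spc N x := by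
  rcases Nat.eq_zero_or_pos N with rfl | hN
  · simp [supNorm]
  obtain ⟨i, -, hi⟩ := Finset.exists_mem_eq_sup Finset.univ ⟨⟨0, hN⟩, Finset.mem_univ _⟩
    (fun i => (x i).natAbs)
  rw [supNorm, hi]
  have h : (((x i).natAbs : ℕ) : ℝ) ^ 2 = spc N x i * spc N x i := by
    rw [spc_apply, Nat.cast_natAbs, Int.cast_abs, sq_abs, sq]
  rw [h]
  exact Finset.single_le_sum (f := fun i => spc N x i * spc N x i)
    (fun _ _ => mul_self_nonneg _) (Finset.mem_univ i)

lemma sp_mem {N : ℕ} (B : Matrix (Fin N) (Fin N) ℤ) (x : Fin N → ℤ) :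
    memLattice B x ↔ x ∈ LinearMap.range B.vecMulLinear := by
  constructor
  · rintro ⟨c, hc⟩
    exact ⟨c, funext fun j => (hc j).symm⟩
  · rintro ⟨c, rfl⟩
    exact ⟨c, fun j => rfl⟩

lemma sp_form {N : ℕ} (f : Fin N → Fin N → ℤ) (x : Fin N → ℤ) :
    ∑ i, ∑ j, f i j * x i * x j = x ⬝ᵥ (Matrix.of f *ᵥ x) := by
  simp only [dotProduct, mulVec, Finset.mul_sum, Matrix.of_apply]
  refine Finset.sum_congr rfl fun i _ => Finset.sum_congr rfl fun j _ => by ring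

/-- **Schulze-Pillot (general lattices).** For every `N ≥ 2` there is a constant `C_N` such
that: if `F` is a nonsingular integral quadratic form in `N` variables and `Λ ⊆ ℤ^N` is a
full-rank sublattice containing a nonzero zero of `F`, then there are `N` linearly independent
zeros `x_1, …, x_N ∈ Λ` of `F` with
`|x_1|^(N−1) · |x_2| ⋯ |x_N| ≤ C_N · |F|^((N−1)²) · det(Λ)^(2(N−1))`. -/
theorem schulze_pillot_lattice (N : ℕ) (hN : 2 ≤ N) :
    ∃ C : ℝ, 0 < C ∧
      ∀ (f : Fin N → Fin N → ℤ), (∀ i j, f i j = f j i) →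
      (Matrix.of f).det ≠ 0 →
      ∀ B : Matrix (Fin N) (Fin N) ℤ, B.det ≠ 0 →
      (∃ x : Fin N → ℤ, memLattice B x ∧ x ≠ 0 ∧ ∑ i, ∑ j, f i j * x i * x j = 0) →
      ∃ x : Fin N → (Fin N → ℤ), LinearIndependent ℤ x ∧
        (∀ k, memLattice B (x k)) ∧
        (∀ k, ∑ i, ∑ j, f i j * x k i * x k j = 0) ∧
        (supNorm (x ⟨0, by omega⟩) : ℝ) ^ (N - 1) *
          (∏ k ∈ Finset.univ.erase (⟨0, by omega⟩ : Fin N), (supNorm (x k) : ℝ)) ≤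
          C * ((Finset.univ.sup fun p : Fin N × Fin N => (f p.1 p.2).natAbs : ℕ) : ℝ) ^
            ((N - 1) ^ 2) * |(B.det : ℝ)| ^ (2 * (N - 1)) := by
  classical
  refine ⟨(36 * N ^ 2 * (3 * N ^ 2) ^ (N - 2)) ^ (N - 1), by positivity, ?_⟩
  intro f hsym hfd B hB hex
  simp only [sp_form, sp_mem] at hex ⊢
  set F : Matrix (Fin N) (Fin N) ℤ := Matrix.of f with hF
  have hFt : Fᵀ = F := by ext i j; exact hsym j i
  set m : ℕ := Finset.univ.sup fun p : Fin N × Fin N => (f p.1 p.2).natAbs with hm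
  have hle : ∀ i j, (f i j).natAbs ≤ m := fun i j =>
    Finset.le_sup (f := fun p : Fin N × Fin N => (f p.1 p.2).natAbs) (Finset.mem_univ (i, j))
  have hm1 : 1 ≤ m := by
    by_contra h
    apply hfd
    have h0 : F = 0 := by
      ext i j
      have := hle i j
      have : (f i j).natAbs = 0 := by omega
      simpa [hF] using this
    have : Nonempty (Fin N) := ⟨⟨0, by omega⟩⟩
    rw [h0, Matrix.det_zero]
  have hM1 : (1:ℝ) ≤ (m:ℝ) := by exact_mod_cast hm1
  have hM : ∀ i j, |(F.map (Int.cast : ℤ → ℝ)) i j| ≤ (m:ℝ) := by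
    intro i j
    have h1 : |(F.map (Int.cast : ℤ → ℝ)) i j| = (((f i j).natAbs : ℕ) : ℝ) := by
      rw [Nat.cast_natAbs, Int.cast_abs]; rfl
    rw [h1]
    exact_mod_cast hle i j
  let S : Set (Fin N → ℤ) := {x | x ∈ LinearMap.range B.vecMulLinear ∧ x ≠ 0 ∧ x ⬝ᵥ (F *ᵥ x) = 0}
  have hS : S.Nonempty := hex
  obtain ⟨hxL, hx0, hx⟩ : Function.argminOn (fun x : Fin N → ℤ => (x ⬝ᵥ x).toNat) S hS ∈ S :=
    Function.argminOn_mem _ _ _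
  have hmin0 := fun (v : Fin N → ℤ) (hv : v ∈ S) =>
    Function.argminOn_le (fun x : Fin N → ℤ => (x ⬝ᵥ x).toNat) S hv
  set x := Function.argminOn (fun x : Fin N → ℤ => (x ⬝ᵥ x).toNat) S hS
  have hnn : ∀ v : Fin N → ℤ, 0 ≤ v ⬝ᵥ v := fun v => Finset.sum_nonneg fun _ _ => mul_self_nonneg _
  have hmin : ∀ v ∈ LinearMap.range B.vecMulLinear, v ≠ 0 → v ⬝ᵥ (F *ᵥ v) = 0 → x ⬝ᵥ x ≤ v ⬝ᵥ v := by
    intro v hvL hv0 hv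
    have h1 : (x ⬝ᵥ x).toNat ≤ (v ⬝ᵥ v).toNat := hmin0 v ⟨hvL, hv0, hv⟩
    have := hnn v
    have := hnn x
    omega
  obtain ⟨g, hg, hg0, hgZ⟩ := sp_family hN x hx0
    {z | z ∈ LinearMap.range B.vecMulLinear ∧ z ⬝ᵥ (F *ᵥ z) = 0 ∧
      (spc N x ⬝ᵥ spc N x) * (spc N z ⬝ᵥ spc N z) ≤
        (36 * N ^ 2 * (3 * N ^ 2) ^ (N - 2) * (m:ℝ) ^ (N - 1) * (B.det : ℝ) ^ 2) ^ 2}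
    (fun w hw hwx => sp_zero hN F hFt hfd m hM1 hM B hB x hxL hx0 hx hmin w hw hwx)
  refine ⟨g, hg, ?_, ?_, ?_⟩
  · intro k
    by_cases hk : k = ⟨0, by omega⟩
    · rw [hk, hg0]; exact hxL
    · exact (hgZ k hk).1
  · intro k
    by_cases hk : k = ⟨0, by omega⟩
    · rw [hk, hg0]; exact hx
    · exact (hgZ k hk).2.1
  · rw [hg0]
    have hcard : (Finset.univ.erase (⟨0, by omega⟩ : Fin N)).card = N - 1 := by
      rw [Finset.card_erase_of_mem (Finset.mem_univ _), Finset.card_univ, Fintype.card_fin]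
    set K : ℝ := 36 * N ^ 2 * (3 * N ^ 2) ^ (N - 2) with hK
    have hpair : ∀ k ∈ Finset.univ.erase (⟨0, by omega⟩ : Fin N),
        (supNorm x : ℝ) * (supNorm (g k) : ℝ) ≤ K * (m:ℝ) ^ (N - 1) * (B.det : ℝ) ^ 2 := by
      intro k hk
      have h1 := (hgZ k (Finset.ne_of_mem_erase hk)).2.2
      have h2 := mul_le_mul (sp_sup x) (sp_sup (g k)) (sq_nonneg _)
        ((sq_nonneg _).trans (sp_sup x))
      rw [← mul_pow] at h2
      exact (pow_le_pow_iff_left₀ (by positivity) (by positivity) two_ne_zero).1 (h2.trans h1)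
    calc (supNorm x : ℝ) ^ (N - 1) * ∏ k ∈ Finset.univ.erase (⟨0, by omega⟩ : Fin N), (supNorm (g k) : ℝ)
        = ∏ k ∈ Finset.univ.erase (⟨0, by omega⟩ : Fin N), (supNorm x : ℝ) * (supNorm (g k) : ℝ) := by
          rw [Finset.prod_mul_distrib, Finset.prod_const, hcard]
      _ ≤ ∏ k ∈ Finset.univ.erase (⟨0, by omega⟩ : Fin N), (K * (m:ℝ) ^ (N - 1) * (B.det : ℝ) ^ 2) :=
          Finset.prod_le_prod (fun _ _ => by positivity) hpair
      _ = (K * (m:ℝ) ^ (N - 1) * (B.det : ℝ) ^ 2) ^ (N - 1) := by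
          rw [Finset.prod_const, hcard]
      _ = _ := by
          rw [← sq_abs (B.det : ℝ), mul_pow, mul_pow, ← pow_mul, ← pow_mul, sq (N - 1)]
end

section
/- For every N ≥ 2 there is a constant C_N depending only on N such that: if F(X) = Σ_{i,j=1}^N f_{ij} X_i X_j is a nonzero integral quadratic form in N variables, Λ ⊆ ℤ^N is a full-rank sublattice, and 1 ≤ L ≤ N is such that Λ contains L linearly independent points y_1, …, y_L for which F vanishes identically on the ℚ-span of y_1, …, y_L, then there exist L linearly independent points x_1, …, x_L ∈ Λ such that F vanishes identically on the ℚ-span of x_1, …, x_L and |x_1| ⋯ |x_L| ≤ C_N · |F|^{(N−L)/2} · det(Λ). -/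
/-- The integral quadratic form `F` vanishes identically on the ℚ-span of the vectors `x`. -/
def VanishesOnSpan {N L : ℕ} (f : Fin N → Fin N → ℤ) (x : Fin L → (Fin N → ℤ)) : Prop :=
  ∀ w ∈ Submodule.span ℚ (Set.range fun k => fun j => ((x k j : ℚ))),
    ∑ i, ∑ j, (f i j : ℚ) * w i * w j = 0

section abs
set_option linter.unusedSectionVars false
open Submodule
variable {E : Type*} [NormedAddCommGroup E] [InnerProductSpace ℝ E] [FiniteDimensional ℝ E]

noncomputable def gd {k : ℕ} (v : Fin k → E) : ℝ := (Matrix.gram ℝ v).det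

noncomputable def qq (K : Submodule ℝ E) (x : E) : ℝ := ‖x - K.starProjection x‖ ^ 2

theorem gd_pos {k : ℕ} {v : Fin k → E} (h : LinearIndependent ℝ v) : 0 < gd v :=
  (Matrix.posDef_gram_of_linearIndependent h).det_pos

theorem gd_nonneg {k : ℕ} (v : Fin k → E) : 0 ≤ gd v :=
  (Matrix.posSemidef_gram ℝ v).det_nonneg

theorem gd_mul {k : ℕ} (v : Fin k → E) (A : Matrix (Fin k) (Fin k) ℝ) :
    gd (fun i => ∑ j, A i j • v j) = A.det ^ 2 * gd v := by
  have : Matrix.gram ℝ (fun i => ∑ j, A i j • v j) = A * Matrix.gram ℝ v * A.transpose := by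
    ext i j
    simp only [Matrix.gram_apply, Matrix.mul_apply, Matrix.transpose_apply, sum_inner, inner_sum,
      real_inner_smul_left, real_inner_smul_right, Finset.sum_mul]
    refine Finset.sum_congr rfl fun a _ => Finset.sum_congr rfl fun b _ => by ring
  unfold gd
  rw [this, Matrix.det_mul, Matrix.det_mul, Matrix.det_transpose]; ring

theorem qq_eq (K : Submodule ℝ E) {x u : E} (h1 : x - u ∈ K) (h2 : ∀ w ∈ K, inner ℝ u w = 0) :
    qq K x = ‖u‖ ^ 2 := by
  have : K.starProjection x = x - u :=
    eq_starProjection_of_mem_of_inner_eq_zero h1 (by simpa using h2)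
  rw [qq, this]; simp

theorem qq_nonneg (K : Submodule ℝ E) (x : E) : 0 ≤ qq K x := by unfold qq; positivity

theorem res_inner (K : Submodule ℝ E) (x w : E) (hw : w ∈ K) :
    inner ℝ (x - K.starProjection x) w = 0 := starProjection_inner_eq_zero x w hw

theorem proj_mem (K : Submodule ℝ E) (x : E) : K.starProjection x ∈ K :=
  starProjection_apply_mem K x

theorem qq_pos (K : Submodule ℝ E) {x : E} (h : x ∉ K) : 0 < qq K x := by
  unfold qq
  have : x - K.starProjection x ≠ 0 := by
    intro h0
    apply h
    rw [sub_eq_zero.1 h0]; exact proj_mem K x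
  positivity

theorem qq_smul_add (K : Submodule ℝ E) (t : ℝ) (y z : E) (hz : z ∈ K) :
    qq K (t • y + z) = t ^ 2 * qq K y := by
  rw [qq_eq K (x := t • y + z) (u := t • (y - K.starProjection y))]
  · rw [norm_smul, mul_pow, qq]; simp
  · have : t • y + z - t • (y - K.starProjection y) = z + t • K.starProjection y := by
      rw [smul_sub]; abel
    rw [this]; exact K.add_mem hz (K.smul_mem _ (proj_mem K y))
  · intro w hw
    rw [real_inner_smul_left, res_inner K y w hw, mul_zero]

theorem gd_cons_orth {k : ℕ} (v : Fin k → E) (z : E) (h : ∀ i, inner ℝ z (v i) = 0) :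
    gd (Fin.cons z v : Fin (k+1) → E) = ‖z‖ ^ 2 * gd v := by
  unfold gd
  rw [Matrix.det_succ_row_zero, Fin.sum_univ_succ]
  simp only [Matrix.gram_apply, Fin.cons_zero, Fin.cons_succ, h, mul_zero, zero_mul,
    Finset.sum_const_zero, add_zero, Fin.val_zero, pow_zero, one_mul, real_inner_self_eq_norm_sq]
  congr 1

theorem gd_cons {k : ℕ} (v : Fin k → E) (y : E) :
    gd (Fin.cons y v : Fin (k+1) → E) = qq (span ℝ (Set.range v)) y * gd v := by
  set K := span ℝ (Set.range v)
  obtain ⟨c, hc⟩ := (mem_span_range_iff_exists_fun ℝ).1 (proj_mem K y)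
  set z := y - K.starProjection y with hz
  have h1 := gd_cons_orth v z (fun i => res_inner K y _ (subset_span ⟨i, rfl⟩))
  let A : Matrix (Fin (k+1)) (Fin (k+1)) ℝ :=
    Matrix.of (Fin.cons (Fin.cons 1 c) (fun i => Pi.single i.succ 1))
  have hA : A.det = 1 := by
    rw [Matrix.det_succ_column_zero, Fin.sum_univ_succ]
    have : (A.submatrix (Fin.succAbove 0) Fin.succ) = 1 := by
      ext i j
      simp [A, Matrix.one_apply, Pi.single_apply, eq_comm]
    rw [this]
    simp [A]
  have h2 := gd_mul (Fin.cons z v : Fin (k+1) → E) A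
  have h3 : (fun i => ∑ j, A i j • (Fin.cons z v : Fin (k+1) → E) j) = Fin.cons y v := by
    ext i
    refine Fin.cases ?_ (fun i => ?_) i
    · simp [A, Fin.sum_univ_succ, hc, hz]
    · simp [A, Fin.sum_univ_succ, Pi.single_apply, ite_smul]
  rw [h3, hA, h1] at h2
  rw [h2, qq]; ring

theorem gd_int (Λ : Submodule ℤ E) (hint : ∀ x ∈ Λ, ∀ y ∈ Λ, ∃ n : ℤ, inner ℝ x y = (n : ℝ))
    {k : ℕ} (v : Fin k → E) (hv : ∀ i, v i ∈ Λ) : ∃ n : ℕ, gd v = n := by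
  choose g hg using fun i j => hint (v i) (hv i) (v j) (hv j)
  have : gd v = ((Matrix.of g).det : ℤ) := by
    rw [gd, Int.cast_det]; congr 1; ext i j; simp [hg]
  have h0 := gd_nonneg v
  rw [this] at h0
  refine ⟨(Matrix.of g).det.toNat, ?_⟩
  have h1 : (0:ℤ) ≤ (Matrix.of g).det := by exact_mod_cast h0
  rw [this]
  exact_mod_cast (Int.toNat_of_nonneg h1).symm

theorem exists_min_s7 (Λ : Submodule ℤ E)
    (hint : ∀ x ∈ Λ, ∀ y ∈ Λ, ∃ n : ℤ, inner ℝ x y = (n : ℝ))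
    {k : ℕ} (v : Fin k → E) (hv : ∀ i, v i ∈ Λ) (hli : LinearIndependent ℝ v)
    (hne : ∃ y ∈ Λ, y ∉ span ℝ (Set.range v)) :
    ∃ y ∈ Λ, y ∉ span ℝ (Set.range v) ∧ ∀ y' ∈ Λ, y' ∉ span ℝ (Set.range v) →
      qq (span ℝ (Set.range v)) y ≤ qq (span ℝ (Set.range v)) y' := by
  have hI : ∀ y ∈ Λ, ∃ n : ℕ, gd (Fin.cons y v : Fin (k+1) → E) = n := fun y hy =>
    gd_int Λ hint _ (fun i => by refine Fin.cases ?_ (fun i => ?_) i <;> simp [hy, hv])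
  obtain ⟨y, hy, hmin⟩ := (measure (fun y : E => ⌊gd (Fin.cons y v : Fin (k+1) → E)⌋₊)).wf.has_min
    {y | y ∈ Λ ∧ y ∉ span ℝ (Set.range v)} hne
  refine ⟨y, hy.1, hy.2, fun y' h1 h2 => ?_⟩
  have := hmin y' ⟨h1, h2⟩
  obtain ⟨n, hn⟩ := hI y hy.1
  obtain ⟨m, hm⟩ := hI y' h1
  change ¬ (⌊gd (Fin.cons y' v : Fin (k+1) → E)⌋₊ < ⌊gd (Fin.cons y v : Fin (k+1) → E)⌋₊) at this
  rw [hn, hm, Nat.floor_natCast, Nat.floor_natCast] at this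
  have h3 : (n : ℝ) ≤ m := by exact_mod_cast not_lt.1 this
  rw [← hn, ← hm, gd_cons, gd_cons] at h3
  exact le_of_mul_le_mul_right h3 (gd_pos hli)

theorem size_red (K : Submodule ℝ E) (y x : E) :
    ∃ m : ℤ, qq K (x - m • y) ≤ qq (span ℝ {y} ⊔ K) x + 1 / 4 * qq K y := by
  set K' := span ℝ {y} ⊔ K
  obtain ⟨a, ha, z, hz, haz⟩ := mem_sup.1 (proj_mem K' x)
  obtain ⟨t, rfl⟩ := mem_span_singleton.1 ha
  have hyK : y ∈ K' := mem_sup_left (mem_span_singleton_self y)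
  have hKK : ∀ w ∈ K, w ∈ K' := fun w hw => mem_sup_right hw
  set r := x - K'.starProjection x with hr
  set ys := y - K.starProjection y with hys
  have hrys : inner ℝ r ys = 0 := res_inner K' x _ (K'.sub_mem hyK (hKK _ (proj_mem K y)))
  refine ⟨round t, ?_⟩
  rw [qq_eq K (u := r + (t - round t) • ys)]
  · have h4 : |t - round t| ≤ 1 / 2 := abs_sub_round t
    have h5 : (t - round t) ^ 2 ≤ 1 / 4 := by
      rw [← sq_abs]; nlinarith [abs_nonneg (t - round t)]
    rw [norm_add_sq_real, real_inner_smul_right, hrys, norm_smul, mul_pow, Real.norm_eq_abs, sq_abs,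
      qq, qq, ← hr, ← hys]
    nlinarith [sq_nonneg ‖ys‖]
  · have : x - round t • y - (r + (t - round t) • ys) =
      z + (t - round t) • K.starProjection y := by
      rw [hr, ← haz, hys, ← Int.cast_smul_eq_zsmul ℝ]
      module
    rw [this]
    exact K.add_mem hz (K.smul_mem _ (proj_mem K y))
  · intro w hw
    rw [inner_add_left, real_inner_smul_left, res_inner K y w hw, res_inner K' x w (hKK w hw)]
    simp

theorem key (Λ : Submodule ℤ E)
    (hint : ∀ x ∈ Λ, ∀ y ∈ Λ, ∃ n : ℤ, inner ℝ x y = (n : ℝ)) {r : ℕ} (b : Fin r → E)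
    (hb : LinearIndependent ℝ b) (hbΛ : span ℤ (Set.range b) = Λ) :
    ∀ (n k : ℕ) (v : Fin k → E), r = k + n → LinearIndependent ℝ v → (∀ i, v i ∈ Λ) →
      (∀ x ∈ Λ, x ∈ span ℝ (Set.range v) → x ∈ span ℤ (Set.range v)) →
      ∃ w : Fin n → E, (∀ i, w i ∈ Λ) ∧ (∀ i, w i ∉ span ℝ (Set.range v)) ∧
        span ℝ (Set.range v) ⊔ span ℝ (Set.range w) = span ℝ (Set.range b) ∧
        (∏ i, qq (span ℝ (Set.range v)) (w i)) * gd v ≤ (4 / 3) ^ (n * n) * gd b := by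
  have hbm : ∀ i, b i ∈ Λ := fun i => hbΛ ▸ subset_span ⟨i, rfl⟩
  have hsub : ∀ x ∈ Λ, x ∈ span ℝ (Set.range b) := by
    intro x hx
    rw [← hbΛ] at hx
    exact span_subset_span ℤ ℝ _ hx
  have hfb : Module.finrank ℝ (span ℝ (Set.range b)) = r := by
    rw [finrank_span_eq_card hb]; simp
  intro n
  induction n with
  | zero =>
    intro k v hr hv hvΛ hprim
    obtain rfl : r = k := by omega
    have hfv : Module.finrank ℝ (span ℝ (Set.range v)) = r := by
      rw [finrank_span_eq_card hv]; simp
    have hle : span ℝ (Set.range v) ≤ span ℝ (Set.range b) := by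
      rw [span_le]; rintro _ ⟨i, rfl⟩; exact hsub _ (hvΛ i)
    have heq := eq_of_le_of_finrank_eq hle (hfv.trans hfb.symm)
    refine ⟨Fin.elim0, fun i => i.elim0, fun i => i.elim0, ?_, ?_⟩
    · simp [heq]
    · have h1 : ∀ i, ∃ c : Fin r → ℤ, ∑ j, c j • v j = b i := fun i =>
        (mem_span_range_iff_exists_fun ℤ).1
          (hprim _ (hbm i) (heq ▸ subset_span ⟨i, rfl⟩))
      choose c hc using h1
      have h2 := gd_mul v (Matrix.of fun i j => (c i j : ℝ))
      have h3 : (fun i => ∑ j, (Matrix.of fun i j => (c i j : ℝ)) i j • v j) = b := by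
        ext i
        simp only [Matrix.of_apply, Int.cast_smul_eq_zsmul, hc]
      have h4 : (Matrix.of fun i j => (c i j : ℝ)).det = ((Matrix.of c).det : ℤ) := by
        rw [Int.cast_det]; congr 1
      rw [h3, h4] at h2
      have h5 : (Matrix.of c).det ≠ 0 := by
        intro h0
        rw [h0] at h2
        have := gd_pos hb
        simp at h2
        linarith
      have h6 : (1:ℝ) ≤ (((Matrix.of c).det : ℤ) : ℝ) ^ 2 := by
        have : (1 : ℤ) ≤ (Matrix.of c).det ^ 2 := by
          have := sq_nonneg (Matrix.of c).det
          have h7 : (Matrix.of c).det ^ 2 ≠ 0 := pow_ne_zero 2 h5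
          omega
        exact_mod_cast this
      simp
      rw [h2]
      nlinarith [gd_pos hv]
  | succ n ih =>
    intro k v hr hv hvΛ hprim
    have hfv : Module.finrank ℝ (span ℝ (Set.range v)) = k := by
      rw [finrank_span_eq_card hv]; simp
    set K := span ℝ (Set.range v) with hK
    have hne : ∃ y ∈ Λ, y ∉ K := by
      by_contra! hcon
      have : span ℝ (Set.range b) ≤ K := by
        rw [span_le]; rintro _ ⟨i, rfl⟩; exact hcon _ (hbm i)
      have := finrank_mono this
      omega
    obtain ⟨y, hyΛ, hyK, hymin⟩ := exists_min_s7 Λ hint v hvΛ hv hne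
    rw [← hK] at hymin hyK
    have hqy := qq_pos K hyK
    have hv' : LinearIndependent ℝ (Fin.cons y v : Fin (k+1) → E) :=
      linearIndependent_finCons.2 ⟨hv, hyK⟩
    have hspan : span ℝ (Set.range (Fin.cons y v : Fin (k+1) → E)) = span ℝ {y} ⊔ K := by
      rw [Fin.range_cons, span_insert]
    obtain ⟨w', hw'Λ, hw'K, hw's, hw'p⟩ := ih (k+1) (Fin.cons y v) (by omega) hv'
      (fun i => by refine Fin.cases ?_ (fun i => ?_) i <;> simp [hyΛ, hvΛ])
      (by
        intro x hx hxs
        rw [hspan] at hxs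
        obtain ⟨a, ha, z, hz, haz⟩ := mem_sup.1 hxs
        obtain ⟨t, rfl⟩ := mem_span_singleton.1 ha
        have hx'Λ : x - round t • y ∈ Λ := Λ.sub_mem hx (Λ.smul_mem _ hyΛ)
        have hx'K : x - round t • y ∈ K := by
          by_contra hcon
          have h1 := hymin _ hx'Λ hcon
          have h2 : x - round t • y = (t - round t) • y + z := by
            rw [← haz, ← Int.cast_smul_eq_zsmul ℝ]; module
          rw [h2, qq_smul_add K _ _ _ hz] at h1
          have h4 : |t - round t| ≤ 1 / 2 := abs_sub_round t
          have h5 : (t - round t) ^ 2 ≤ 1 / 4 := by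
            rw [← sq_abs]; nlinarith [abs_nonneg (t - round t)]
          nlinarith
        have h3 := hprim _ hx'Λ hx'K
        rw [Fin.range_cons]
        have h4 : x = round t • y + (x - round t • y) := by abel
        rw [h4]
        refine add_mem (smul_mem _ _ (subset_span (Set.mem_insert _ _))) ?_
        exact span_mono (Set.subset_insert _ _) h3)
    rw [hspan] at hw'K hw's hw'p
    choose m hm using fun i => size_red K y (w' i)
    have hwK : ∀ i, w' i - m i • y ∉ K := by
      intro i hi
      apply hw'K i
      have h4 : w' i = (m i : ℝ) • y + (w' i - m i • y) := by
        rw [Int.cast_smul_eq_zsmul]; abel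
      rw [h4]
      exact add_mem (mem_sup_left (smul_mem _ _ (mem_span_singleton_self y))) (mem_sup_right hi)
    have hwΛ : ∀ i, w' i - m i • y ∈ Λ := fun i => Λ.sub_mem (hw'Λ i) (Λ.smul_mem _ hyΛ)
    have hwq : ∀ i, qq K (w' i - m i • y) ≤ 4 / 3 * qq (span ℝ {y} ⊔ K) (w' i) := by
      intro i
      have h1 := hymin _ (hwΛ i) (hwK i)
      have h2 := hm i
      linarith
    refine ⟨Fin.cons y (fun i => w' i - m i • y), ?_, ?_, ?_, ?_⟩
    · intro i; refine Fin.cases ?_ (fun i => ?_) i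
      · simpa using hyΛ
      · simpa using hwΛ i
    · intro i; refine Fin.cases ?_ (fun i => ?_) i
      · simpa using hyK
      · simpa using hwK i
    · rw [← hw's, Fin.range_cons, span_insert]
      apply le_antisymm
      · refine sup_le (le_sup_of_le_left le_sup_right) (sup_le (le_sup_of_le_left le_sup_left) ?_)
        rw [span_le]; rintro _ ⟨i, rfl⟩
        refine sub_mem (mem_sup_right (subset_span ⟨i, rfl⟩)) ?_
        rw [← Int.cast_smul_eq_zsmul ℝ]
        exact smul_mem _ _ (mem_sup_left (mem_sup_left (mem_span_singleton_self y)))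
      · refine sup_le (sup_le (le_sup_of_le_right le_sup_left) le_sup_left) ?_
        rw [span_le]; rintro _ ⟨i, rfl⟩
        have h4 : w' i = (m i : ℝ) • y + (w' i - m i • y) := by
          rw [Int.cast_smul_eq_zsmul]; abel
        rw [h4]
        exact mem_sup_right (add_mem (mem_sup_left (smul_mem _ _ (mem_span_singleton_self y)))
          (mem_sup_right (subset_span ⟨i, rfl⟩)))
    · rw [Fin.prod_univ_succ]
      simp only [Fin.cons_zero, Fin.cons_succ]
      rw [gd_cons, ← hK] at hw'p
      have h1 : ∏ i, qq K (w' i - m i • y) ≤ (4/3) ^ n * ∏ i, qq (span ℝ {y} ⊔ K) (w' i) := by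
        calc _ ≤ ∏ i, (4 / 3 * qq (span ℝ {y} ⊔ K) (w' i)) :=
              Finset.prod_le_prod (fun i _ => qq_nonneg _ _) (fun i _ => hwq i)
          _ = _ := by rw [Finset.prod_mul_distrib, Finset.prod_const, Finset.card_univ, Fintype.card_fin]
      have h2 : (0:ℝ) ≤ qq K y * gd v := mul_nonneg hqy.le (gd_nonneg v)
      calc qq K y * (∏ i, qq K (w' i - m i • y)) * gd v
          = (∏ i, qq K (w' i - m i • y)) * (qq K y * gd v) := by ring
        _ ≤ ((4/3) ^ n * ∏ i, qq (span ℝ {y} ⊔ K) (w' i)) * (qq K y * gd v) :=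
            mul_le_mul_of_nonneg_right h1 h2
        _ = (4/3) ^ n * ((∏ i, qq (span ℝ {y} ⊔ K) (w' i)) * (qq K y * gd v)) := by ring
        _ ≤ (4/3) ^ n * ((4 / 3) ^ (n * n) * gd b) :=
            mul_le_mul_of_nonneg_left hw'p (by positivity)
        _ = (4/3) ^ (n + n * n) * gd b := by rw [pow_add]; ring
        _ ≤ _ := by
            refine mul_le_mul_of_nonneg_right ?_ (gd_nonneg b)
            refine pow_le_pow_right₀ (by norm_num) ?_
            nlinarith

theorem kernel {k : ℕ} (v : Fin (k+1) → E) (hv : LinearIndependent ℝ v) (l : E →ₗ[ℝ] ℝ)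
    (a : Fin (k+1) → ℤ) (ha : ∀ i, l (v i) = a i) (ha0 : a ≠ 0) (M : ℝ)
    (hM : ∀ p, |l p| ≤ M * ‖p‖) :
    ∃ x : Fin k → E, (∀ i, x i ∈ span ℤ (Set.range v)) ∧ LinearIndependent ℝ x ∧
      (∀ i, l (x i) = 0) ∧ gd x ≤ M ^ 2 * gd v := by
  let φ : (Fin (k+1) → ℤ) →ₗ[ℤ] ℤ := Fintype.linearCombination ℤ a
  have hφ : ∀ c, φ c = ∑ i, c i * a i := fun c => by
    simp [φ, Fintype.linearCombination_apply]
  obtain ⟨g, hg⟩ := (IsPrincipalIdealRing.principal (LinearMap.range φ)).principal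
  have hgr : g ∈ LinearMap.range φ := hg ▸ mem_span_singleton_self g
  obtain ⟨c0, hc0⟩ := hgr
  have hg0 : g ≠ 0 := by
    rintro rfl
    apply ha0
    ext i
    have : φ (Pi.single i 1) ∈ LinearMap.range φ := ⟨_, rfl⟩
    rw [hg] at this
    simpa [hφ, Pi.single_apply] using this
  have hfr : Module.finrank ℤ (LinearMap.range φ) = 1 := by
    rw [hg]
    rw [← LinearMap.range_toSpanSingleton]
    rw [LinearMap.finrank_range_of_inj (f := LinearMap.toSpanSingleton ℤ ℤ g)]
    · simp
    · intro p q h; simpa [hg0] using h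
  have hfk : Module.finrank ℤ (LinearMap.ker φ) = k := by
    have := Submodule.finrank_quotient_add_finrank (LinearMap.ker φ)
    rw [LinearEquiv.finrank_eq φ.quotKerEquivRange, hfr] at this
    simp at this
    omega
  let bK : Module.Basis (Fin k) ℤ (LinearMap.ker φ) := Module.finBasisOfFinrankEq ℤ _ hfk
  let bb := Module.Basis.mkFinCons c0 bK
    (by
      intro c x hx h
      have h1 : φ (c • c0 + x) = 0 := by rw [h]; simp
      rw [map_add, map_smul, hc0, LinearMap.mem_ker.1 hx] at h1
      simpa [hg0] using h1)
    (by
      intro z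
      have : φ z ∈ LinearMap.range φ := ⟨_, rfl⟩
      rw [hg] at this
      obtain ⟨c, hc⟩ := mem_span_singleton.1 this
      refine ⟨-c, ?_⟩
      rw [LinearMap.mem_ker, map_add, map_smul, hc0, ← hc]
      simp)
  have hb0 : bb 0 = c0 := by simp [bb]
  have hbs : ∀ i, φ (bb (Fin.succ i)) = 0 := by
    intro i
    have : bb (Fin.succ i) = bK i := by simp [bb]
    rw [this]; exact (bK i).2
  let A : Matrix (Fin (k+1)) (Fin (k+1)) ℤ := Matrix.of fun i j => bb i j
  have hA : IsUnit A.det := by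
    have h1 := ((Pi.basisFun ℤ (Fin (k+1))).invertibleToMatrix bb)
    have h2 : ((Pi.basisFun ℤ (Fin (k+1))).toMatrix bb).transpose = A := by
      ext i j; simp [A, Module.Basis.toMatrix_apply]
    rw [← h2, Matrix.det_transpose]
    exact (Matrix.isUnit_iff_isUnit_det _).1 (isUnit_of_invertible _)
  have hA2 : ((A.det : ℤ) : ℝ) ^ 2 = 1 := by
    rcases Int.isUnit_iff.1 hA with h | h <;> rw [h] <;> norm_num
  let X : Fin (k+1) → E := fun i => ∑ j, bb i j • v j
  have hX : gd X = gd v := by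
    have h2 := gd_mul v (A.map (Int.cast : ℤ → ℝ))
    rw [← Int.cast_det, hA2, one_mul] at h2
    rw [← h2]
    congr 1
    ext i
    simp [X, A, Int.cast_smul_eq_zsmul]
  have hXl : ∀ i, l (X i) = (φ (bb i) : ℤ) := by
    intro i
    simp only [X, map_sum, map_zsmul, ha, hφ]
    push_cast
    simp
  have hXli : LinearIndependent ℝ X := by
    rw [← Matrix.det_gram_ne_zero_iff_linearIndependent (𝕜 := ℝ)]
    have := gd_pos hv
    rw [← hX] at this
    exact this.ne'
  have hXc : X = Fin.cons (X 0) (fun i => X (Fin.succ i)) := (Fin.cons_self_tail X).symm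
  refine ⟨fun i => X (Fin.succ i), fun i => ?_, hXli.comp _ (Fin.succ_injective _), fun i => ?_, ?_⟩
  · exact sum_mem fun j _ => smul_mem _ _ (subset_span ⟨j, rfl⟩)
  · rw [hXl, hbs]; simp
  · rw [← hX, hXc, gd_cons]
    simp only [Fin.cons_succ]
    set K := span ℝ (Set.range fun i => X (Fin.succ i)) with hK
    have hlK : ∀ p ∈ K, l p = 0 := by
      intro p hp
      have : K ≤ LinearMap.ker l := by
        rw [hK, span_le]; rintro _ ⟨i, rfl⟩
        simp [hXl, hbs]
      exact this hp
    have h1 := hM (X 0 - K.starProjection (X 0))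
    rw [map_sub, hlK _ (proj_mem K _), sub_zero, hXl, hb0, hc0] at h1
    have h2 : (1:ℝ) ≤ |(g:ℝ)| := by exact_mod_cast Int.one_le_abs hg0
    have h3 : (1:ℝ) ≤ (M * ‖X 0 - K.starProjection (X 0)‖) ^ 2 :=
      one_le_pow₀ (h2.trans h1)
    rw [mul_pow] at h3
    have h4 := gd_nonneg (fun i => X (Fin.succ i))
    rw [qq]
    nlinarith

theorem iso_span {R V : Type*} [CommRing R] [AddCommGroup V] [Module R V]
    {B : V →ₗ[R] V →ₗ[R] R} {ι : Type*} {Y : ι → V} (hY : ∀ i j, B (Y i) (Y j) = 0)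
    (x y : V) (hx : x ∈ span R (Set.range Y)) (hy : y ∈ span R (Set.range Y)) : B x y = 0 := by
  have h1 : ∀ i, B (Y i) y = 0 := by
    intro i
    have : span R (Set.range Y) ≤ LinearMap.ker (B (Y i)) := by
      rw [span_le]; rintro _ ⟨j, rfl⟩; simp [hY]
    exact this hy
  have : span R (Set.range Y) ≤ LinearMap.ker (B.flip y) := by
    rw [span_le]; rintro _ ⟨j, rfl⟩; simp [h1]
  simpa using this hx

theorem step (Λ : Submodule ℤ E) (B : E →ₗ[ℝ] E →ₗ[ℝ] ℝ) (hsym : ∀ x y, B x y = B y x)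
    (hB : ∀ x ∈ Λ, ∀ y ∈ Λ, ∃ n : ℤ, B x y = n) (M : ℝ) (hM1 : 1 ≤ M)
    (hM : ∀ x y, |B x y| ≤ M * ‖x‖ * ‖y‖)
    (hψ : ∀ x ∈ Λ, x ≠ 0 → ∃ ψ : E →ₗ[ℝ] ℝ, (∀ p, |ψ p| ≤ ‖p‖) ∧
      (∀ p ∈ Λ, ∃ n : ℤ, ψ p = n) ∧ ψ x ≠ 0)
    {L : ℕ} (Y : Fin L → E) (hY : LinearIndependent ℝ Y) (hYΛ : ∀ i, Y i ∈ Λ)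
    (hiso : ∀ i j, B (Y i) (Y j) = 0)
    (hmin : ∀ x : Fin L → E, LinearIndependent ℝ x → (∀ i, x i ∈ Λ) →
      (∀ i j, B (x i) (x j) = 0) → gd Y ≤ gd x)
    (y : E) (hyΛ : y ∈ Λ) (hy : y ∉ span ℝ (Set.range Y)) :
    1 / (3 * M) ≤ qq (span ℝ (Set.range Y)) y := by
  set K := span ℝ (Set.range Y) with hK
  have hq := qq_pos K hy
  have hgY := gd_pos hY
  set w := K.starProjection y with hw
  set z := y - w with hz
  have hwK : w ∈ K := proj_mem K y
  have hzK : ∀ u ∈ K, inner ℝ z u = 0 := fun u hu => res_inner K y u hu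
  have hqz : qq K y = ‖z‖ ^ 2 := rfl
  have hyw : y = w + z := by rw [hz]; abel
  rw [hqz] at hq ⊢
  have hz2 : inner ℝ z z = ‖z‖ ^ 2 := real_inner_self_eq_norm_sq z
  have hBK : ∀ u ∈ K, ∀ u' ∈ K, B u u' = 0 := fun u hu u' hu' => iso_span hiso u u' hu hu'
  have hcli : LinearIndependent ℝ (Fin.cons y Y : Fin (L+1) → E) :=
    linearIndependent_finCons.2 ⟨hY, hy⟩
  have hcΛ : ∀ i, (Fin.cons y Y : Fin (L+1) → E) i ∈ Λ := fun i => by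
    refine Fin.cases ?_ (fun i => ?_) i <;> simp [hyΛ, hYΛ]
  have hcsΛ : span ℤ (Set.range (Fin.cons y Y : Fin (L+1) → E)) ≤ Λ := by
    rw [span_le]; rintro _ ⟨i, rfl⟩; exact hcΛ i
  have hgc : gd (Fin.cons y Y : Fin (L+1) → E) = ‖z‖ ^ 2 * gd Y := by
    rw [gd_cons, ← hK, hqz]
  let l : E →ₗ[ℝ] ℝ := (2:ℝ) • ((B.flip z).comp (K.starProjection : E →ₗ[ℝ] E)) +
    (B z z / ‖z‖ ^ 2) • (innerₛₗ ℝ z : E →ₗ[ℝ] ℝ)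
  have hl : ∀ p, l p = 2 * B (K.starProjection p) z + B z z / ‖z‖ ^ 2 * inner ℝ z p := by
    intro p; simp [l]
  have hprojK : ∀ u ∈ K, K.starProjection u = u := fun u hu =>
    starProjection_eq_self_iff.2 hu
  have hproj : ∀ u ∈ K, ∀ s : ℝ, K.starProjection (u + s • z) = u := by
    intro u hu s
    refine eq_starProjection_of_mem_of_inner_eq_zero hu fun x hx => ?_
    rw [add_sub_cancel_left, real_inner_smul_left, hzK x hx, mul_zero]
  have hlval : ∀ u ∈ K, ∀ s : ℝ, l (u + s • z) = 2 * B u z + s * B z z := by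
    intro u hu s
    rw [hl, hproj u hu, inner_add_right, hzK u hu, real_inner_smul_right, hz2]
    rw [mul_comm s, zero_add, ← mul_assoc, div_mul_cancel₀ _ hq.ne']
    ring
  have hfac : ∀ p ∈ span ℝ (Set.range (Fin.cons y Y : Fin (L+1) → E)), ∃ s : ℝ,
      B p p = s * l p := by
    intro p hp
    rw [Fin.range_cons, span_insert, ← hK] at hp
    obtain ⟨a, ha, u, hu, rfl⟩ := mem_sup.1 hp
    obtain ⟨s, rfl⟩ := mem_span_singleton.1 ha
    have h1 : s • y + u = (s • w + u) + s • z := by rw [hyw, smul_add]; abel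
    have h2 : s • w + u ∈ K := K.add_mem (K.smul_mem _ hwK) hu
    refine ⟨s, ?_⟩
    rw [h1, hlval _ h2]
    set a := s • w + u
    have h3 := hBK a h2 a h2
    have h4 := hsym z a
    simp only [map_add, LinearMap.add_apply, map_smul, LinearMap.smul_apply, smul_eq_mul, h3, h4]
    ring
  have hpol : ∀ x : Fin L → E,
      (∀ i, x i ∈ span ℝ (Set.range (Fin.cons y Y : Fin (L+1) → E))) →
      (∀ i, l (x i) = 0) → ∀ i j, B (x i) (x j) = 0 := by
    intro x hx hlx i j
    obtain ⟨s1, h1⟩ := hfac _ (hx i)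
    obtain ⟨s2, h2⟩ := hfac _ (hx j)
    obtain ⟨s3, h3⟩ := hfac _ (add_mem (hx i) (hx j))
    rw [hlx, mul_zero] at h1 h2
    rw [map_add, map_add, map_add, LinearMap.add_apply, LinearMap.add_apply, hlx, hlx, h1, h2,
      hsym (x j) (x i)] at h3
    linarith
  have hl0 : l y = B y y := by
    have h1 := hlval w hwK 1
    rw [one_smul, ← hyw] at h1
    rw [h1]
    conv_rhs => rw [hyw]
    simp only [map_add, LinearMap.add_apply, hBK w hwK w hwK, hsym z w]
    ring
  have hlY : ∀ i, l (Y i) = 2 * B (Y i) y := by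
    intro i
    have hi : Y i ∈ K := subset_span ⟨i, rfl⟩
    have h1 := hlval (Y i) hi 0
    rw [zero_smul, add_zero] at h1
    rw [h1, hyw, map_add, hBK _ hi w hwK]
    ring
  have hint : ∀ i, ∃ n : ℤ, l ((Fin.cons y Y : Fin (L+1) → E) i) = n := by
    intro i
    refine Fin.cases ?_ (fun i => ?_) i
    · obtain ⟨n, hn⟩ := hB y hyΛ y hyΛ
      exact ⟨n, by simp [hl0, hn]⟩
    · obtain ⟨n, hn⟩ := hB (Y i) (hYΛ i) y hyΛ
      exact ⟨2 * n, by simp [hlY, hn]⟩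
  choose a ha using hint
  by_cases ha0 : a = 0
  · -- everything is isotropic
    have hlz : ∀ p ∈ span ℝ (Set.range (Fin.cons y Y : Fin (L+1) → E)), l p = 0 := by
      intro p hp
      have : span ℝ (Set.range (Fin.cons y Y : Fin (L+1) → E)) ≤ LinearMap.ker l := by
        rw [span_le]; rintro _ ⟨j, rfl⟩; simp [ha, ha0]
      exact this hp
    have hy0 : y ≠ 0 := by rintro rfl; exact hy (zero_mem _)
    obtain ⟨ψ, hψ1, hψ2, hψ3⟩ := hψ y hyΛ hy0
    choose a' ha' using fun i => hψ2 _ (hcΛ i)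
    obtain ⟨x, hx1, hx2, -, hx4⟩ := kernel _ hcli ψ a' ha' (by
      intro h0
      have := ha' 0
      rw [h0] at this
      simp at this
      exact hψ3 this) 1 (by simpa using hψ1)
    have hx1' : ∀ i, x i ∈ span ℝ (Set.range (Fin.cons y Y : Fin (L+1) → E)) :=
      fun i => span_subset_span ℤ ℝ _ (hx1 i)
    have h5 := hmin x hx2 (fun i => hcsΛ (hx1 i)) (hpol x hx1' (fun i => hlz _ (hx1' i)))
    rw [hgc] at hx4
    have h6 : (1:ℝ) ≤ ‖z‖ ^ 2 := by
      by_contra! h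
      nlinarith
    refine le_trans ?_ h6
    rw [div_le_one (by positivity)]
    linarith
  · have hlb : ∀ p, |l p| ≤ (3 * M * ‖z‖) * ‖p‖ := by
      intro p
      rw [hl]
      have h1 : ‖K.starProjection p‖ ≤ ‖p‖ := norm_starProjection_apply_le K p
      have h2 := hM (K.starProjection p) z
      have h3 : |B z z / ‖z‖ ^ 2 * inner ℝ z p| ≤ M * (‖z‖ * ‖p‖) := by
        rw [abs_mul]
        refine mul_le_mul ?_ (abs_real_inner_le_norm z p) (abs_nonneg _) (by linarith)
        rw [abs_div, abs_of_pos hq, div_le_iff₀ hq]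
        have := hM z z
        nlinarith
      have h4 : M * ‖K.starProjection p‖ * ‖z‖ ≤ M * ‖p‖ * ‖z‖ := by gcongr
      have h5 := abs_add_le (2 * B (K.starProjection p) z) (B z z / ‖z‖ ^ 2 * inner ℝ z p)
      rw [abs_mul, abs_two] at h5
      nlinarith
    obtain ⟨x, hx1, hx2, hx3, hx4⟩ := kernel _ hcli l a ha ha0 _ hlb
    have hx1' : ∀ i, x i ∈ span ℝ (Set.range (Fin.cons y Y : Fin (L+1) → E)) :=
      fun i => span_subset_span ℤ ℝ _ (hx1 i)
    have h5 := hmin x hx2 (fun i => hcsΛ (hx1 i)) (hpol x hx1' hx3)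
    rw [hgc] at hx4
    have h6 : (1:ℝ) ≤ (3 * M * ‖z‖ ^ 2) ^ 2 := by
      by_contra! h
      nlinarith
    rw [div_le_iff₀ (by positivity)]
    have h7 : 1 ≤ 3 * M * ‖z‖ ^ 2 := by
      by_contra! h
      have : 0 ≤ 3 * M * ‖z‖ ^ 2 := by positivity
      nlinarith
    linarith

theorem main_abs (Λ : Submodule ℤ E) (hint : ∀ x ∈ Λ, ∀ y ∈ Λ, ∃ n : ℤ, inner ℝ x y = (n : ℝ))
    (B : E →ₗ[ℝ] E →ₗ[ℝ] ℝ) (hsym : ∀ x y, B x y = B y x)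
    (hB : ∀ x ∈ Λ, ∀ y ∈ Λ, ∃ n : ℤ, B x y = n) (M : ℝ) (hM1 : 1 ≤ M)
    (hM : ∀ x y, |B x y| ≤ M * ‖x‖ * ‖y‖)
    (hψ : ∀ x ∈ Λ, x ≠ 0 → ∃ ψ : E →ₗ[ℝ] ℝ, (∀ p, |ψ p| ≤ ‖p‖) ∧
      (∀ p ∈ Λ, ∃ n : ℤ, ψ p = n) ∧ ψ x ≠ 0)
    {N L : ℕ} (hLN : L ≤ N) (b : Fin N → E) (hb : LinearIndependent ℝ b)
    (hbΛ : span ℤ (Set.range b) = Λ)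
    (Y₀ : Fin L → E) (hY₀ : LinearIndependent ℝ Y₀) (hYΛ₀ : ∀ i, Y₀ i ∈ Λ)
    (hiso₀ : ∀ i j, B (Y₀ i) (Y₀ j) = 0) :
    ∃ x : Fin L → E, LinearIndependent ℝ x ∧ (∀ i, x i ∈ Λ) ∧ (∀ i j, B (x i) (x j) = 0) ∧
      ∏ i, ‖x i‖ ^ 2 ≤ (4 / 3) ^ (2 * N * N) * (3 * M) ^ (N - L) * gd b := by
  obtain ⟨Y, ⟨hY, hYΛ, hiso⟩, hmin'⟩ := (measure (fun x : Fin L → E => ⌊gd x⌋₊)).wf.has_min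
    {x | LinearIndependent ℝ x ∧ (∀ i, x i ∈ Λ) ∧ (∀ i j, B (x i) (x j) = 0)}
    ⟨Y₀, hY₀, hYΛ₀, hiso₀⟩
  have hmin : ∀ x : Fin L → E, LinearIndependent ℝ x → (∀ i, x i ∈ Λ) →
      (∀ i j, B (x i) (x j) = 0) → gd Y ≤ gd x := by
    intro x h1 h2 h3
    have := hmin' x ⟨h1, h2, h3⟩
    change ¬ (⌊gd x⌋₊ < ⌊gd Y⌋₊) at this
    obtain ⟨n, hn⟩ := gd_int Λ hint x h2
    obtain ⟨m, hm⟩ := gd_int Λ hint Y hYΛ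
    rw [hn, hm, Nat.floor_natCast, Nat.floor_natCast] at this
    rw [hn, hm]
    exact_mod_cast not_lt.1 this
  have hgY := gd_pos hY
  have hYspan : span ℤ (Set.range Y) ≤ Λ := by
    rw [span_le]; rintro _ ⟨i, rfl⟩; exact hYΛ i
  have hprim : ∀ x ∈ Λ, x ∈ span ℝ (Set.range Y) → x ∈ span ℤ (Set.range Y) := by
    intro x hx hxs
    obtain ⟨t, ht⟩ := (mem_span_range_iff_exists_fun ℝ).1 hxs
    set x' := x - ∑ i, round (t i) • Y i with hx'
    have hs : ∑ i, round (t i) • Y i ∈ span ℤ (Set.range Y) :=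
      sum_mem fun i _ => smul_mem _ _ (subset_span ⟨i, rfl⟩)
    have hx'2 : x' = ∑ i, (t i - round (t i)) • Y i := by
      rw [hx', ← ht, ← Finset.sum_sub_distrib]
      refine Finset.sum_congr rfl fun i _ => ?_
      rw [← Int.cast_smul_eq_zsmul ℝ, sub_smul]
    have hx'Λ : x' ∈ Λ := Λ.sub_mem hx (hYspan hs)
    have hall : ∀ i, t i - round (t i) = 0 := by
      intro i
      by_contra hne
      let A : Matrix (Fin L) (Fin L) ℝ := (1 : Matrix (Fin L) (Fin L) ℝ).updateRow i
        (fun j => t j - round (t j))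
      have hA : A.det = t i - round (t i) := by
        have h1 : (fun j => t j - round (t j)) = ∑ j, (t j - round (t j)) • (1 : Matrix (Fin L) (Fin L) ℝ) j := by
          ext k
          simp [Finset.sum_apply, Matrix.one_apply]
        simp only [A]
        rw [h1, Matrix.det_updateRow_sum]
        simp
      have hg := gd_mul Y A
      rw [hA] at hg
      have hrow : (fun k => ∑ j, A k j • Y j) = Function.update Y i x' := by
        ext k
        by_cases hk : k = i
        · subst hk
          simp [A, hx'2]
        · simp [A, hk, Matrix.updateRow_ne, Matrix.one_apply, ite_smul]
      rw [hrow] at hg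
      have h4 : |t i - round (t i)| ≤ 1 / 2 := abs_sub_round (t i)
      have h5 : (t i - round (t i)) ^ 2 ≤ 1 / 4 := by
        rw [← sq_abs]; nlinarith [abs_nonneg (t i - round (t i))]
      have h6 : 0 < (t i - round (t i)) ^ 2 := by positivity
      have hli : LinearIndependent ℝ (Function.update Y i x') := by
        rw [← Matrix.det_gram_ne_zero_iff_linearIndependent (𝕜 := ℝ)]
        have : 0 < gd (Function.update Y i x') := by rw [hg]; positivity
        exact this.ne'
      have hmem : ∀ k, Function.update Y i x' k ∈ span ℝ (Set.range Y) := by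
        intro k
        by_cases hk : k = i
        · subst hk
          simp only [Function.update_self]
          rw [hx'2]
          exact sum_mem fun i _ => smul_mem _ _ (subset_span ⟨i, rfl⟩)
        · rw [Function.update_of_ne hk]; exact subset_span ⟨k, rfl⟩
      have := hmin _ hli (fun k => by
        by_cases hk : k = i
        · subst hk
          simpa using hx'Λ
        · rw [Function.update_of_ne hk]; exact hYΛ k)
        (fun k j => iso_span hiso _ _ (hmem k) (hmem j))
      nlinarith
    have hx0 : x' = 0 := by rw [hx'2]; simp [hall]
    rw [hx'] at hx0
    rw [sub_eq_zero.1 hx0]; exact hs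
  obtain ⟨w, hwΛ, hwK, -, hwp⟩ := key Λ hint b hb hbΛ (N - L) L Y (by omega) hY hYΛ hprim
  have hlow : (1 / (3 * M)) ^ (N - L) ≤ ∏ i, qq (span ℝ (Set.range Y)) (w i) := by
    have := Finset.prod_le_prod (s := Finset.univ) (f := fun _ : Fin (N-L) => 1 / (3 * M))
      (g := fun i => qq (span ℝ (Set.range Y)) (w i)) (fun i _ => by positivity)
      (fun i _ => step Λ B hsym hB M hM1 hM hψ Y hY hYΛ hiso hmin (w i) (hwΛ i) (hwK i))
    rwa [Finset.prod_const, Finset.card_univ, Fintype.card_fin] at this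
  have hYb : gd Y ≤ (4 / 3) ^ ((N - L) * (N - L)) * (3 * M) ^ (N - L) * gd b := by
    have h1 := (mul_le_mul_of_nonneg_right hlow hgY.le).trans hwp
    rw [one_div, inv_pow, inv_mul_le_iff₀ (by positivity)] at h1
    linarith
  obtain ⟨x, hxΛ, -, hxs, hxp⟩ := key (span ℤ (Set.range Y))
    (fun x hx y hy => hint x (hYspan hx) y (hYspan hy)) Y hY rfl L 0 Fin.elim0 (by omega)
    linearIndependent_empty_type (fun i => i.elim0) (by
      intro x _ hx
      simpa using hx)
  have hsx : span ℝ (Set.range x) = span ℝ (Set.range Y) := by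
    rw [← hxs]; simp
  have hxm : ∀ i, x i ∈ span ℝ (Set.range Y) := fun i => hsx ▸ subset_span ⟨i, rfl⟩
  refine ⟨x, ?_, fun i => hYspan (hxΛ i), fun i j => iso_span hiso _ _ (hxm i) (hxm j), ?_⟩
  · rw [linearIndependent_iff_card_eq_finrank_span, Set.finrank, hsx, finrank_span_eq_card hY]
  · have h1 : ∏ i, ‖x i‖ ^ 2 ≤ (4 / 3) ^ (L * L) * gd Y := by
      have h2 : gd (Fin.elim0 : Fin 0 → E) = 1 := by simp [gd]
      rw [h2, mul_one] at hxp
      convert hxp using 2 with i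
      rw [qq_eq _ (u := x i)]
      · simp
      · intro w hw
        have : w = 0 := by simpa using hw
        simp [this]
    have hgb := gd_pos hb
    calc _ ≤ _ := h1
      _ ≤ (4 / 3) ^ (L * L) * ((4 / 3) ^ ((N - L) * (N - L)) * (3 * M) ^ (N - L) * gd b) := by gcongr
      _ = (4 / 3) ^ (L * L + (N - L) * (N - L)) * (3 * M) ^ (N - L) * gd b := by
        rw [pow_add]; ring
      _ ≤ _ := by
        gcongr
        · norm_num
        · have : N - L ≤ N := by omega
          nlinarith [Nat.mul_le_mul hLN hLN, Nat.mul_le_mul this this]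
end abs

section concrete
open Submodule

noncomputable def bf {N : ℕ} (R : Type*) [CommRing R] (f : Fin N → Fin N → ℤ) :
    (Fin N → R) →ₗ[R] (Fin N → R) →ₗ[R] R :=
  LinearMap.mk₂ R (fun x y => ∑ i, ∑ j, (f i j : R) * x i * y j)
    (by intro x x' y; simp only [← Finset.sum_add_distrib, Pi.add_apply]
        exact Finset.sum_congr rfl fun i _ => Finset.sum_congr rfl fun j _ => by ring)
    (by intro c x y; simp only [Finset.mul_sum, Pi.smul_apply, smul_eq_mul]
        exact Finset.sum_congr rfl fun i _ => Finset.sum_congr rfl fun j _ => by ring)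
    (by intro x x' y; simp only [← Finset.sum_add_distrib, Pi.add_apply]
        exact Finset.sum_congr rfl fun i _ => Finset.sum_congr rfl fun j _ => by ring)
    (by intro c x y; simp only [Finset.mul_sum, Pi.smul_apply, smul_eq_mul]
        exact Finset.sum_congr rfl fun i _ => Finset.sum_congr rfl fun j _ => by ring)

theorem bf_apply {N : ℕ} (R : Type*) [CommRing R] (f : Fin N → Fin N → ℤ) (x y : Fin N → R) :
    bf R f x y = ∑ i, ∑ j, (f i j : R) * x i * y j := rfl

theorem bf_cast {N : ℕ} (R : Type*) [CommRing R] (f : Fin N → Fin N → ℤ) (x y : Fin N → ℤ) :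
    bf R f (fun i => (x i : R)) (fun i => (y i : R)) = ((bf ℤ f x y : ℤ) : R) := by
  simp [bf_apply]

theorem bf_symm {N : ℕ} (R : Type*) [CommRing R] (f : Fin N → Fin N → ℤ)
    (hf : ∀ i j, f i j = f j i) (x y : Fin N → R) : bf R f x y = bf R f y x := by
  rw [bf_apply, bf_apply, Finset.sum_comm]
  exact Finset.sum_congr rfl fun i _ => Finset.sum_congr rfl fun j _ => by rw [hf]; ring

theorem vanishes_iff {N L : ℕ} (f : Fin N → Fin N → ℤ) (hf : ∀ i j, f i j = f j i)
    (x : Fin L → (Fin N → ℤ)) : VanishesOnSpan f x ↔ ∀ i j, bf ℤ f (x i) (x j) = 0 := by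
  constructor
  · intro h i j
    have hm : ∀ k, (fun j => (x k j : ℚ)) ∈
      span ℚ (Set.range fun k => fun j => ((x k j : ℚ))) := fun k => subset_span ⟨k, rfl⟩
    have h1 := h _ (hm i)
    have h2 := h _ (hm j)
    have h3 := h _ (add_mem (hm i) (hm j))
    rw [← bf_apply] at h1 h2 h3
    rw [map_add, map_add, LinearMap.add_apply, LinearMap.add_apply, h1, h2,
      bf_symm ℚ f hf (fun k => (x j k : ℚ)), bf_cast] at h3
    have h4 : ((bf ℤ f (x i) (x j) : ℤ) : ℚ) = 0 := by linarith
    exact_mod_cast h4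
  · intro h w hw
    rw [← bf_apply]
    refine iso_span (B := bf ℚ f) (fun i j => ?_) w w hw hw
    rw [bf_cast, h]; simp

theorem concrete (N : ℕ) (f : Fin N → Fin N → ℤ) (hf : ∀ i j, f i j = f j i)
    (H : ℕ) (hH1 : 1 ≤ H) (hH : ∀ i j, (f i j).natAbs ≤ H) (hN : 1 ≤ N)
    (B : Matrix (Fin N) (Fin N) ℤ) (hB : B.det ≠ 0) (L : ℕ) (hLN : L ≤ N)
    (y : Fin L → (Fin N → ℤ)) (hy : LinearIndependent ℤ y) (hyB : ∀ k, memLattice B (y k))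
    (hyf : VanishesOnSpan f y) :
    ∃ x : Fin L → (Fin N → ℤ), LinearIndependent ℤ x ∧ (∀ k, memLattice B (x k)) ∧
        VanishesOnSpan f x ∧
        (∏ k, (supNorm (x k) : ℝ)) ^ 2 ≤
          (4 / 3) ^ (2 * N * N) * (3 * ((N : ℝ) ^ 2 * H)) ^ (N - L) * (B.det : ℝ) ^ 2 := by
  let ι : (Fin N → ℤ) → EuclideanSpace ℝ (Fin N) := fun x => WithLp.toLp 2 (fun i => (x i : ℝ))
  have hι : ∀ x i, ι x i = x i := fun x i => rfl
  let b : Fin N → EuclideanSpace ℝ (Fin N) := fun i => ι (B i)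
  let Λ : Submodule ℤ (EuclideanSpace ℝ (Fin N)) := span ℤ (Set.range b)
  have hmem1 : ∀ x, memLattice B x → ι x ∈ Λ := by
    rintro x ⟨c, hc⟩
    refine (mem_span_range_iff_exists_fun ℤ).2 ⟨c, ?_⟩
    ext j
    simp [hι, b, hc]
  have hmem2 : ∀ p ∈ Λ, ∃ x, memLattice B x ∧ p = ι x := by
    intro p hp
    obtain ⟨c, rfl⟩ := (mem_span_range_iff_exists_fun ℤ).1 hp
    refine ⟨fun j => ∑ i, c i * B i j, ⟨c, fun j => rfl⟩, ?_⟩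
    ext j
    simp [hι, b]
  have hli : ∀ {k : ℕ} (x : Fin k → Fin N → ℤ),
      LinearIndependent ℝ (fun i => ι (x i)) ↔ LinearIndependent ℤ x := by
    intro k x
    rw [← linearIndependent_algebraMap_comp_iff (S := ℝ)]
    exact LinearMap.linearIndependent_iff (WithLp.linearEquiv 2 ℝ (Fin N → ℝ)).symm.toLinearMap
      (LinearEquiv.ker _) (v := fun i => algebraMap ℤ ℝ ∘ x i)
  have hb : LinearIndependent ℝ b := by
    refine (hli (fun i => B i)).2 ?_
    exact Matrix.linearIndependent_rows_of_det_ne_zero hB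
  have hgb : gd b = (B.det : ℝ) ^ 2 := by
    have : Matrix.gram ℝ b = B.map (Int.cast : ℤ → ℝ) * (B.map (Int.cast : ℤ → ℝ)).transpose := by
      ext i j
      simp [Matrix.gram_apply, Matrix.mul_apply, PiLp.inner_apply, b, hι, mul_comm]
    rw [gd, this, Matrix.det_mul, Matrix.det_transpose, ← Int.cast_det]; ring
  let e : EuclideanSpace ℝ (Fin N) →ₗ[ℝ] (Fin N → ℝ) := (WithLp.linearEquiv 2 ℝ (Fin N → ℝ)).toLinearMap
  let BF : EuclideanSpace ℝ (Fin N) →ₗ[ℝ] EuclideanSpace ℝ (Fin N) →ₗ[ℝ] ℝ := (bf ℝ f).compl₁₂ e e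
  have hBF : ∀ p q : EuclideanSpace ℝ (Fin N), BF p q = ∑ i, ∑ j, (f i j : ℝ) * p i * q j := fun p q => rfl
  have hBFι : ∀ x y, BF (ι x) (ι y) = ((bf ℤ f x y : ℤ) : ℝ) := fun x y => bf_cast ℝ f x y
  have hHr : (1:ℝ) ≤ H := by exact_mod_cast hH1
  have hNr : (1:ℝ) ≤ N := by exact_mod_cast hN
  have hco : ∀ (p : EuclideanSpace ℝ (Fin N)) i, |p i| ≤ ‖p‖ := fun p i => PiLp.norm_apply_le p i
  obtain ⟨x, hx1, hx2, hx3, hx4⟩ := main_abs Λ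
    (by
      intro p hp q hq
      obtain ⟨x, -, rfl⟩ := hmem2 p hp
      obtain ⟨y, -, rfl⟩ := hmem2 q hq
      exact ⟨∑ i, x i * y i, by simp [PiLp.inner_apply, hι, mul_comm]⟩)
    BF (fun p q => bf_symm ℝ f hf _ _)
    (by
      intro p hp q hq
      obtain ⟨x, -, rfl⟩ := hmem2 p hp
      obtain ⟨y, -, rfl⟩ := hmem2 q hq
      exact ⟨_, hBFι x y⟩)
    ((N : ℝ) ^ 2 * H) (by nlinarith)
    (by
      intro p q
      rw [hBF]
      have h1 : ∀ i j, |(f i j : ℝ) * p i * q j| ≤ H * ‖p‖ * ‖q‖ := by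
        intro i j
        have h2 : |(f i j : ℝ)| ≤ H := by
          have := hH i j
          have h3 : ((f i j).natAbs : ℝ) ≤ H := by exact_mod_cast this
          rwa [Nat.cast_natAbs, Int.cast_abs] at h3
        rw [abs_mul, abs_mul]
        gcongr
        · exact hco p i
        · exact hco q j
      calc _ ≤ ∑ i : Fin N, |∑ j, (f i j : ℝ) * p i * q j| := Finset.abs_sum_le_sum_abs _ _
        _ ≤ ∑ i : Fin N, ∑ j : Fin N, |(f i j : ℝ) * p i * q j| :=
            Finset.sum_le_sum fun i _ => Finset.abs_sum_le_sum_abs _ _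
        _ ≤ ∑ i : Fin N, ∑ j : Fin N, H * ‖p‖ * ‖q‖ :=
            Finset.sum_le_sum fun i _ => Finset.sum_le_sum fun j _ => h1 i j
        _ = _ := by simp; ring)
    (by
      intro p hp hp0
      obtain ⟨i, hi⟩ : ∃ i, p i ≠ 0 := by
        by_contra! h
        apply hp0
        ext i; simpa using h i
      refine ⟨(LinearMap.proj i).comp e, fun q => hco q i, fun q hq => ?_, hi⟩
      obtain ⟨x, -, rfl⟩ := hmem2 q hq
      exact ⟨x i, rfl⟩)
    hLN b hb rfl (fun k => ι (y k)) ((hli y).2 hy) (fun k => hmem1 _ (hyB k))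
    (fun i j => by rw [hBFι, (vanishes_iff f hf y).1 hyf]; simp)
  choose X hX1 hX2 using fun i => hmem2 _ (hx2 i)
  obtain rfl : x = fun i => ι (X i) := funext hX2
  refine ⟨X, (hli X).1 hx1, hX1, (vanishes_iff f hf X).2 fun i j => ?_, ?_⟩
  · have := hx3 i j
    rw [hBFι] at this
    exact_mod_cast this
  · rw [← hgb]
    refine le_trans ?_ hx4
    rw [← Finset.prod_pow]
    refine Finset.prod_le_prod (fun i _ => by positivity) (fun i _ => ?_)
    gcongr
    have : supNorm (X i) ≤ ⌊‖ι (X i)‖⌋₊ := by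
      refine Finset.sup_le fun j _ => Nat.le_floor ?_
      rw [Nat.cast_natAbs, Int.cast_abs]
      exact hco (ι (X i)) j
    exact (Nat.cast_le.2 this).trans (Nat.floor_le (norm_nonneg _))
end concrete

/-- **Schlickewei.** For every `N ≥ 2` there is a constant `C_N` such that: if `F` is a nonzero
integral quadratic form in `N` variables, `Λ ⊆ ℤ^N` a full-rank sublattice, and `Λ` contains `L`
linearly independent points on whose ℚ-span `F` vanishes identically, then there are `L` linearly
independent `x_1, …, x_L ∈ Λ` with `F` vanishing identically on their ℚ-span and
`|x_1| ⋯ |x_L| ≤ C_N · |F|^((N−L)/2) · det(Λ)`. -/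
theorem schlickewei (N : ℕ) (hN : 2 ≤ N) :
    ∃ C : ℝ, 0 < C ∧
      ∀ (f : Fin N → Fin N → ℤ), (∀ i j, f i j = f j i) → f ≠ 0 →
      ∀ B : Matrix (Fin N) (Fin N) ℤ, B.det ≠ 0 →
      ∀ L : ℕ, 1 ≤ L → L ≤ N →
      (∃ y : Fin L → (Fin N → ℤ), LinearIndependent ℤ y ∧ (∀ k, memLattice B (y k)) ∧
        VanishesOnSpan f y) →
      ∃ x : Fin L → (Fin N → ℤ), LinearIndependent ℤ x ∧ (∀ k, memLattice B (x k)) ∧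
        VanishesOnSpan f x ∧
        (∏ k, (supNorm (x k) : ℝ)) ≤
          C * ((Finset.univ.sup fun p : Fin N × Fin N => (f p.1 p.2).natAbs : ℕ) : ℝ) ^
            (((N : ℝ) - L) / 2) * |(B.det : ℝ)| := by
  refine ⟨Real.sqrt ((4 / 3) ^ (2 * N * N) * (3 * (N : ℝ) ^ 2) ^ N), ?_, ?_⟩
  · have : (0:ℝ) < N := by exact_mod_cast (by omega : 0 < N)
    positivity
  intro f hf hf0 B hB L hL hLN ⟨y, hy, hyB, hyf⟩
  set H : ℕ := Finset.univ.sup fun p : Fin N × Fin N => (f p.1 p.2).natAbs with hHdef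
  have hH : ∀ i j, (f i j).natAbs ≤ H := fun i j =>
    Finset.le_sup (f := fun p : Fin N × Fin N => (f p.1 p.2).natAbs) (Finset.mem_univ (i, j))
  have hH1 : 1 ≤ H := by
    by_contra! h
    apply hf0
    ext i j
    have := hH i j
    simp only [Pi.zero_apply]
    omega
  obtain ⟨x, hx1, hx2, hx3, hx4⟩ := concrete N f hf H hH1 hH (by omega) B hB L hLN y hy hyB hyf
  refine ⟨x, hx1, hx2, hx3, ?_⟩
  have hHr : (1:ℝ) ≤ H := by exact_mod_cast hH1
  have hNr : (1:ℝ) ≤ N := by exact_mod_cast (by omega : 1 ≤ N)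
  refine abs_le_of_sq_le_sq' ?_ (by positivity) |>.2
  refine hx4.trans ?_
  have h0 := Real.sq_sqrt (show (0:ℝ) ≤ (4 / 3) ^ (2 * N * N) * (3 * (N : ℝ) ^ 2) ^ N by positivity)
  have h1 : ((H : ℝ) ^ (((N : ℝ) - L) / 2)) ^ 2 = (H : ℝ) ^ (N - L) := by
    rw [← Real.rpow_natCast, ← Real.rpow_mul (by positivity), ← Real.rpow_natCast (H : ℝ) (N - L),
      Nat.cast_sub hLN]
    congr 1
    push_cast
    ring
  have h2 : (3 * ((N : ℝ) ^ 2 * H)) ^ (N - L) = (3 * (N : ℝ) ^ 2) ^ (N - L) * (H : ℝ) ^ (N - L) := by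
    rw [← mul_pow, mul_assoc]
  have h3 : (3 * (N : ℝ) ^ 2) ^ (N - L) ≤ (3 * (N : ℝ) ^ 2) ^ N :=
    pow_le_pow_right₀ (by nlinarith) (by omega)
  rw [mul_pow _ |(B.det : ℝ)| 2, mul_pow _ _ 2, sq_abs, h0, h1, h2, ← mul_assoc]
  gcongr
end
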